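/- If A is not K-trivial and D is non-computable, then there exists a Martin-Löf random sequence R such that A ⊕ R ≡_T A ⊕ D ⊕ ∅′, R ≱_T D, and R′ ≤_T A ⊕ R. -/

import Mathlib

open MeasureTheory ENNReal

/-! ### Cantor space and the uniform (coin-flipping) measure -/

/-- The binary digits of a real number in `[0,1)`, giving a point of Cantor space. -/
noncomputable def binaryDigits (x : ℝ) : ℕ → Bool :=
  fun n => decide (⌊x * 2 ^ (n + 1)⌋ % 2 = 1)

/-- The uniform (Lebesgue / coin-flipping) measure on Cantor space `2^ω`,
obtained as the pushforward of Lebesgue measure on `[0,1)` under binary expansion. -/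
noncomputable def μCantor : Measure (ℕ → Bool) :=
  Measure.map binaryDigits (volume.restrict (Set.Ico (0 : ℝ) 1))

/-- `σ` is an initial segment of the infinite sequence `X`. -/
def IsPrefixOf (σ : List Bool) (X : ℕ → Bool) : Prop :=
  ∀ i : Fin σ.length, X i = σ.get i

/-- The cylinder determined by a finite binary string. -/
def cylinder (σ : List Bool) : Set (ℕ → Bool) := {X | IsPrefixOf σ X}

/-- The open set generated by a set of finite binary strings. -/
def openOf (S : Set (List Bool)) : Set (ℕ → Bool) := ⋃ σ ∈ S, cylinder σ

/-- The density of a set `P` above the string `τ`: `μ([τ] ∩ P) · 2^{|τ|}`. -/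
noncomputable def dens (τ : List Bool) (P : Set (ℕ → Bool)) : ℝ≥0∞ :=
  μCantor (cylinder τ ∩ P) * 2 ^ τ.length

/-- The length-`n` initial segment of `X`, as a finite binary string. -/
def strPrefix (X : ℕ → Bool) (n : ℕ) : List Bool := (List.range n).map X

/-- A set of strings is prefix-free if no element is a proper prefix of another. -/
def PrefixFreeSet (S : Set (List Bool)) : Prop :=
  ∀ σ ∈ S, ∀ τ ∈ S, σ <+: τ → σ = τ

/-- The weight `∑_{σ ∈ S} 2^{-|σ|}` of a set of strings. -/
noncomputable def weight (S : Set (List Bool)) : ℝ≥0∞ :=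
  ∑' σ : S, 2⁻¹ ^ (σ : List Bool).length

/-- A set of strings is bounded if its weight is finite. -/
def BoundedStr (S : Set (List Bool)) : Prop := weight S < ⊤

/-- The tail `X(·+k)` of an infinite binary sequence. -/
def tailSeq (X : ℕ → Bool) (k : ℕ) : ℕ → Bool := fun n => X (n + k)

/-! ### Oracle computability -/

/-- The `e`-th computably enumerable set of naturals (the domain of the `e`-th
partial computable function). -/
def WEnum (e n : ℕ) : Prop := ((Denumerable.ofNat Nat.Partrec.Code e).eval n).Dom

/-- `OracleComputes e X n m` holds if the `e`-th Turing functional with oracle `X`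
outputs `m` on input `n`; a Turing functional is presented by the c.e. set `W_e`
of coded axioms `(σ, n, m)`, and `Γ_e^X(n) = m` iff some initial segment `σ` of `X`
has `(σ, n, m) ∈ W_e`. -/
def OracleComputes (e : ℕ) (X : ℕ → Bool) (n m : ℕ) : Prop :=
  ∃ σ : List Bool, IsPrefixOf σ X ∧
    WEnum e (Nat.pair (Encodable.encode σ) (Nat.pair n m))

def natOfBool (b : Bool) : ℕ := cond b 1 0

/-- `f : ℕ → ℕ` is computable with oracle `A`: some Turing functional with oracle `A`
has graph exactly `f`. -/
def FnComputableIn (f : ℕ → ℕ) (A : ℕ → Bool) : Prop :=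
  ∃ e, ∀ n m, OracleComputes e A n m ↔ m = f n

/-- Turing reducibility `B ≤_T A` for subsets of `ω` (as elements of Cantor space). -/
def TuringLE (B A : ℕ → Bool) : Prop := FnComputableIn (fun n => natOfBool (B n)) A

/-- Turing equivalence. -/
def TuringEquiv (A B : ℕ → Bool) : Prop := TuringLE A B ∧ TuringLE B A

/-- The Turing join `A ⊕ B`. -/
def joinSet (A B : ℕ → Bool) : ℕ → Bool :=
  fun n => if n % 2 = 0 then A (n / 2) else B (n / 2)

open Classical in
/-- The Turing jump `A′ = {e : Γ_e^A(e)↓}`. -/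
noncomputable def jump (A : ℕ → Bool) : ℕ → Bool :=
  fun e => decide (∃ m, OracleComputes e A e m)

/-- The empty oracle. -/
def emptyOracle : ℕ → Bool := fun _ => false

/-- The halting problem `∅′`. -/
noncomputable def zeroJump : ℕ → Bool := jump emptyOracle

/-- A set is computable iff it is Turing reducible to the empty oracle. -/
def ComputableSet (A : ℕ → Bool) : Prop := TuringLE A emptyOracle

/-- A set of naturals is c.e. in `A`. -/
def CeIn (A : ℕ → Bool) (S : Set ℕ) : Prop :=
  ∃ e, ∀ n, n ∈ S ↔ ∃ m, OracleComputes e A n m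

/-- A set of strings is c.e. in `A`. -/
def CeStrIn (A : ℕ → Bool) (S : Set (List Bool)) : Prop :=
  ∃ e, ∀ σ : List Bool, σ ∈ S ↔ ∃ m, OracleComputes e A (Encodable.encode σ) m

/-- A c.e. set of strings. -/
def CeStr (S : Set (List Bool)) : Prop := CeStrIn emptyOracle S

/-! ### Π⁰₁ classes, Martin-Löf randomness, K-triviality -/

/-- A `Π⁰₁(A)` class: the complement of the union of cylinders over an `A`-c.e.
set of strings. -/
def Pi01In (A : ℕ → Bool) (P : Set (ℕ → Bool)) : Prop :=
  ∃ S : Set (List Bool), CeStrIn A S ∧ P = (openOf S)ᶜ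

/-- A `Π⁰₁` class. -/
def Pi01 (P : Set (ℕ → Bool)) : Prop := Pi01In emptyOracle P

/-- The `n`-th level of the `e`-th `A`-effective sequence of open sets. -/
def testLevel (e : ℕ) (A : ℕ → Bool) (n : ℕ) : Set (ℕ → Bool) :=
  openOf {σ | ∃ m, OracleComputes e A (Nat.pair n (Encodable.encode σ)) m}

/-- A Martin-Löf test relative to `A`: a uniformly `A`-c.e. sequence of open sets
`G n` with `μ(G n) ≤ 2^{-n}`. -/
def MLTestIn (A : ℕ → Bool) (G : ℕ → Set (ℕ → Bool)) : Prop :=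
  (∃ e, ∀ n, G n = testLevel e A n) ∧ ∀ n, μCantor (G n) ≤ 2⁻¹ ^ n

/-- `X` is Martin-Löf random relative to `A`: it passes every `A`-Martin-Löf test. -/
def MLRandomIn (A X : ℕ → Bool) : Prop :=
  ∀ G : ℕ → Set (ℕ → Bool), MLTestIn A G → ∃ n, X ∉ G n

/-- `X` is Martin-Löf random. -/
def MLRandom (X : ℕ → Bool) : Prop := MLRandomIn emptyOracle X

/-- The domain of the `e`-th machine, viewed as a set of binary strings. -/
def machineDom (e : ℕ) : Set (List Bool) :=
  {σ | ((Denumerable.ofNat Nat.Partrec.Code e).eval (Encodable.encode σ)).Dom}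

/-- The `e`-th machine is prefix-free. -/
def PrefixFreeMachine (e : ℕ) : Prop := PrefixFreeSet (machineDom e)

/-- Prefix-free Kolmogorov complexity (defined, up to an additive constant, as the
least `|σ| + 2e + 2` over prefix-free machines `e` and programs `σ` producing `x`). -/
noncomputable def Kcpx (x : ℕ) : ℕ :=
  sInf {k | ∃ e, ∃ σ : List Bool, PrefixFreeMachine e ∧
    x ∈ (Denumerable.ofNat Nat.Partrec.Code e).eval (Encodable.encode σ) ∧
    k = σ.length + 2 * e + 2}

/-- `K(n)` means `K(1^n)`. -/
noncomputable def KofNat (n : ℕ) : ℕ := Kcpx (Encodable.encode (List.replicate n true))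

/-- `A` is K-trivial: `K(A↾n) ≤ K(n) + c` for some constant `c`. -/
def KTrivial (A : ℕ → Bool) : Prop :=
  ∃ c, ∀ n, Kcpx (Encodable.encode (strPrefix A n)) ≤ KofNat n + c

section PartP1a

open Primrec

attribute [fun_prop] Computable
attribute [fun_prop] Computable.id
theorem Comp.id' {α} [Primcodable α] : Computable (fun a : α => a) := Computable.id
@[fun_prop] theorem Comp.const {α β} [Primcodable α] [Primcodable β] (b : β) : Computable (fun _ : α => b) := Computable.const b
@[fun_prop] theorem Comp.comp {α β γ} [Primcodable α] [Primcodable β] [Primcodable γ] {f : β → γ} {g : α → β}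
   (hf : Computable f) (hg : Computable g) : Computable (fun a => f (g a)) := hf.comp hg
section
variable {α β γ δ : Type*} [Primcodable α] [Primcodable β] [Primcodable γ] [Primcodable δ]
@[fun_prop] theorem Comp.pair {f : α → β} {g : α → γ} (hf : Computable f) (hg : Computable g) :
  Computable (fun a => (f a, g a)) := hf.pair hg
@[fun_prop] theorem Comp.fst {f : α → β × γ} (hf : Computable f) : Computable (fun a => (f a).1) := Computable.fst.comp hf
@[fun_prop] theorem Comp.snd {f : α → β × γ} (hf : Computable f) : Computable (fun a => (f a).2) := Computable.snd.comp hf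
@[fun_prop] theorem Comp.add {f g : α → ℕ} (hf : Computable f) (hg : Computable g) : Computable (fun a => f a + g a) :=
  Primrec.nat_add.to_comp.comp hf hg
@[fun_prop] theorem Comp.mul {f g : α → ℕ} (hf : Computable f) (hg : Computable g) : Computable (fun a => f a * g a) :=
  Primrec.nat_mul.to_comp.comp hf hg
@[fun_prop] theorem Comp.sub {f g : α → ℕ} (hf : Computable f) (hg : Computable g) : Computable (fun a => f a - g a) :=
  Primrec.nat_sub.to_comp.comp hf hg
@[fun_prop] theorem Comp.npair {f g : α → ℕ} (hf : Computable f) (hg : Computable g) : Computable (fun a => Nat.pair (f a) (g a)) :=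
  Primrec₂.natPair.to_comp.comp hf hg
@[fun_prop] theorem Comp.unpair {f : α → ℕ} (hf : Computable f) : Computable (fun a => Nat.unpair (f a)) :=
  Primrec.unpair.to_comp.comp hf
theorem Comp.pow_aux : Computable (fun p : ℕ × ℕ => p.1 ^ p.2) := by
  refine (Computable.nat_rec (f := fun p : ℕ × ℕ => p.2) (g := fun _ => 1) (h := fun p q => q.2 * p.1) (by fun_prop) (by fun_prop) ?_).of_eq ?_
  · unfold Computable₂; fun_prop
  · rintro ⟨a, b⟩; induction b with
    | zero => rfl
    | succ n ih => simp only at ih ⊢; rw [ih, pow_succ]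
@[fun_prop] theorem Comp.pow {f g : α → ℕ} (hf : Computable f) (hg : Computable g) : Computable (fun a => f a ^ g a) :=
  Comp.pow_aux.comp (hf.pair hg)
@[fun_prop] theorem Comp.some {f : α → β} (hf : Computable f) : Computable (fun a => some (f a)) := Computable.option_some.comp hf
@[fun_prop] theorem Comp.enc {f : α → β} (hf : Computable f) : Computable (fun a => Encodable.encode (f a)) := Computable.encode.comp hf
@[fun_prop] theorem Comp.decode {f : α → ℕ} (hf : Computable f) : Computable (fun a => (Encodable.decode (f a) : Option β)) := Computable.decode.comp hf
@[fun_prop] theorem Comp.cons {f : α → β} {g : α → List β} (hf : Computable f) (hg : Computable g) : Computable (fun a => f a :: g a) :=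
  Computable.list_cons.comp hf hg
@[fun_prop] theorem Comp.append {f g : α → List β} (hf : Computable f) (hg : Computable g) : Computable (fun a => f a ++ g a) :=
  Computable.list_append.comp hf hg
@[fun_prop] theorem Comp.length {f : α → List β} (hf : Computable f) : Computable (fun a => (f a).length) :=
  Computable.list_length.comp hf
@[fun_prop] theorem Comp.getE {f : α → List β} {g : α → ℕ} (hf : Computable f) (hg : Computable g) : Computable (fun a => (f a)[g a]?) :=
  Computable.list_getElem?.comp hf hg
@[fun_prop] theorem Comp.take {f : α → ℕ} {g : α → List β} (hf : Computable f) (hg : Computable g) : Computable (fun a => (g a).take (f a)) :=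
  Primrec.list_take.to_comp.comp hf hg
/-- Boolean equality. -/
def eqb {β} [DecidableEq β] (a b : β) : Bool := decide (a = b)
/-- Boolean comparison. -/
def leb (a b : ℕ) : Bool := decide (a ≤ b)
/-- Boolean strict comparison. -/
def ltb (a b : ℕ) : Bool := decide (a < b)
@[simp] theorem eqb_iff {β} [DecidableEq β] (a b : β) : eqb a b = true ↔ a = b := by simp [eqb]
@[simp] theorem leb_iff (a b : ℕ) : leb a b = true ↔ a ≤ b := by simp [leb]
@[simp] theorem ltb_iff (a b : ℕ) : ltb a b = true ↔ a < b := by simp [ltb]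
@[fun_prop] theorem Comp.eqb [DecidableEq β] {f g : α → β} (hf : Computable f) (hg : Computable g) : Computable (fun a => eqb (f a) (g a)) := by
  have : Computable₂ (fun a b : β => decide (a = b)) := by
    have := (Primrec.eq (α := β)).decide.to_comp
    exact this.of_eq (fun _ => by congr)
  exact this.comp hf hg
@[fun_prop] theorem Comp.leb {f g : α → ℕ} (hf : Computable f) (hg : Computable g) : Computable (fun a => leb (f a) (g a)) := by
  have : Computable₂ (fun a b : ℕ => decide (a ≤ b)) := by
    have := Primrec.nat_le.decide.to_comp
    exact this.of_eq (fun _ => by congr)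
  exact this.comp hf hg
@[fun_prop] theorem Comp.ltb {f g : α → ℕ} (hf : Computable f) (hg : Computable g) : Computable (fun a => ltb (f a) (g a)) := by
  have : Computable₂ (fun a b : ℕ => decide (a < b)) := by
    have := Primrec.nat_lt.decide.to_comp
    exact this.of_eq (fun _ => by congr)
  exact this.comp hf hg
@[fun_prop] theorem Comp.band {f g : α → Bool} (hf : Computable f) (hg : Computable g) : Computable (fun a => f a && g a) :=
  Primrec.and.to_comp.comp hf hg
@[fun_prop] theorem Comp.bor {f g : α → Bool} (hf : Computable f) (hg : Computable g) : Computable (fun a => f a || g a) :=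
  Primrec.or.to_comp.comp hf hg
@[fun_prop] theorem Comp.bnot {f : α → Bool} (hf : Computable f) : Computable (fun a => !(f a)) :=
  Primrec.not.to_comp.comp hf
@[fun_prop] theorem Comp.ite {c : α → Bool} {f g : α → β} (hc : Computable c) (hf : Computable f) (hg : Computable g) :
   Computable (fun a => bif c a then f a else g a) := Computable.cond hc hf hg
@[fun_prop] theorem Comp.isSome {f : α → Option β} (hf : Computable f) : Computable (fun a => (f a).isSome) :=
  Primrec.option_isSome.to_comp.comp hf
@[fun_prop] theorem Comp.evaln {f : α → ℕ} {g : α → ℕ} {h : α → ℕ} (hf : Computable f) (hg : Computable g) (hh : Computable h) :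
   Computable (fun a => Nat.Partrec.Code.evaln (f a) (Denumerable.ofNat Nat.Partrec.Code (g a)) (h a)) := by
  exact Nat.Partrec.Code.primrec_evaln.to_comp.comp ((hf.pair ((Computable.ofNat _).comp hg)).pair hh)
end

end PartP1a

section PartP1b

section
variable {α β γ δ : Type*} [Primcodable α] [Primcodable β] [Primcodable γ] [Primcodable δ]

/-- Bounded existential. -/
def bexb (n : ℕ) (f : ℕ → Bool) : Bool := Nat.rec false (fun i acc => acc || f i) n
theorem bexb_iff (n : ℕ) (f : ℕ → Bool) : bexb n f = true ↔ ∃ i < n, f i = true := by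
  induction n with
  | zero => simp [bexb]
  | succ n ih =>
    have : bexb (n+1) f = (bexb n f || f n) := rfl
    rw [this, Bool.or_eq_true, ih]
    constructor
    · rintro (⟨i, hi, h⟩ | h)
      · exact ⟨i, by omega, h⟩
      · exact ⟨n, by omega, h⟩
    · rintro ⟨i, hi, h⟩
      rcases Nat.lt_succ_iff_lt_or_eq.1 hi with h1 | rfl
      · exact Or.inl ⟨i, h1, h⟩
      · exact Or.inr h
theorem Comp.bexb {f : α → ℕ} {g : α → ℕ → Bool} (hf : Computable f) (hg : Computable fun p : α × ℕ => g p.1 p.2) :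
    Computable fun a => bexb (f a) (g a) := by
  refine (Computable.nat_rec (f := f) (g := fun _ => false) (h := fun a q => q.2 || g a q.1) hf (by fun_prop) ?_).of_eq ?_
  · unfold Computable₂
    have : Computable (fun p : α × (ℕ × Bool) => g p.1 p.2.1) :=
      hg.comp (f := fun p : α × ℕ => g p.1 p.2) (g := fun p : α × (ℕ × Bool) => (p.1, p.2.1)) (by fun_prop)
    fun_prop
  · intro a; rfl

@[simp] theorem strPrefix_length (X : ℕ → Bool) (n : ℕ) : (strPrefix X n).length = n := by simp [strPrefix]
theorem strPrefix_take (X : ℕ → Bool) (n k : ℕ) (h : k ≤ n) : (strPrefix X n).take k = strPrefix X k := by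
  simp [strPrefix, ← List.map_take, List.take_range, h]
theorem strPrefix_get (X : ℕ → Bool) (n k : ℕ) (h : k < n) : (strPrefix X n)[k]? = some (X k) := by
  simp [strPrefix, h]
theorem isPrefixOf_iff (σ : List Bool) (X : ℕ → Bool) : IsPrefixOf σ X ↔ σ = strPrefix X σ.length := by
  constructor
  · intro h
    apply List.ext_getElem
    · simp
    · intro i h1 h2
      have := h ⟨i, h1⟩
      simp at this
      simp [strPrefix, this]
  · intro h i
    have h2 := congrArg (fun l => l[i.1]?) h
    rw [strPrefix_get _ _ _ i.2] at h2
    simp at h2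
    simp [h2]

/-- `p` is `Σ⁰₁` relative to the oracle `X`. -/
def Sig (X : ℕ → Bool) (p : α → Prop) : Prop :=
  ∃ g : List Bool × α → Bool, Computable g ∧ ∀ a, p a ↔ ∃ s, g (strPrefix X s, a) = true

theorem Sig.kernel {X} {p : α → Prop} (h : Sig X p) : ∃ g : List Bool × α → Bool, Computable g ∧
    (∀ a, p a ↔ ∃ s, g (strPrefix X s, a) = true) ∧
    ∀ a s t, s ≤ t → g (strPrefix X s, a) = true → g (strPrefix X t, a) = true := by
  obtain ⟨g, hg, hp⟩ := h
  refine ⟨fun q => bexb (q.1.length + 1) (fun i => g (q.1.take i, q.2)), ?_, ?_, ?_⟩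
  · apply Comp.bexb
    · fun_prop
    · exact hg.comp (g := fun p : (List Bool × α) × ℕ => (p.1.1.take p.2, p.1.2)) (by fun_prop)
  · intro a; rw [hp]; simp only [bexb_iff]
    constructor
    · rintro ⟨s, hs⟩; exact ⟨s, s, by simp, by simpa [strPrefix_take] using hs⟩
    · rintro ⟨s, i, hi, h⟩
      simp at hi
      rw [strPrefix_take _ _ _ (by omega)] at h
      exact ⟨i, h⟩
  · intro a s t hst; simp only [bexb_iff]
    rintro ⟨i, hi, h⟩
    simp at hi
    refine ⟨i, by simp; omega, ?_⟩
    rw [strPrefix_take _ _ _ (by omega)] at h ⊢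
    exact h

theorem Sig.of_iff {X} {p q : α → Prop} (h : Sig X p) (e : ∀ a, q a ↔ p a) : Sig X q := by
  obtain ⟨g, hg, hp⟩ := h
  exact ⟨g, hg, fun a => by rw [e, hp]⟩
theorem Sig.comp {X} {p : β → Prop} (h : Sig X p) {f : α → β} (hf : Computable f) : Sig X (fun a => p (f a)) := by
  obtain ⟨g, hg, hp⟩ := h
  exact ⟨fun q => g (q.1, f q.2), hg.comp (g := fun q : List Bool × α => (q.1, f q.2)) (by fun_prop), fun a => hp _⟩
theorem Sig.and {X} {p q : α → Prop} (h : Sig X p) (h' : Sig X q) : Sig X (fun a => p a ∧ q a) := by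
  obtain ⟨g, hg, hp, hm⟩ := h.kernel
  obtain ⟨g', hg', hp', hm'⟩ := h'.kernel
  refine ⟨fun q => g q && g' q, by fun_prop, fun a => ?_⟩
  simp only [hp, hp', Bool.and_eq_true]
  constructor
  · rintro ⟨⟨s, hs⟩, ⟨t, ht⟩⟩
    exact ⟨max s t, hm _ _ _ (le_max_left _ _) hs, hm' _ _ _ (le_max_right _ _) ht⟩
  · rintro ⟨s, h1, h2⟩; exact ⟨⟨s, h1⟩, ⟨s, h2⟩⟩
theorem Sig.or {X} {p q : α → Prop} (h : Sig X p) (h' : Sig X q) : Sig X (fun a => p a ∨ q a) := by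
  obtain ⟨g, hg, hp⟩ := h
  obtain ⟨g', hg', hp'⟩ := h'
  refine ⟨fun q => g q || g' q, by fun_prop, fun a => ?_⟩
  simp only [hp, hp', Bool.or_eq_true, exists_or]
theorem Sig.ex {X} {p : α → β → Prop} (h : Sig X (fun c : α × β => p c.1 c.2)) : Sig X (fun a => ∃ b, p a b) := by
  obtain ⟨g, hg, hp, hm⟩ := h.kernel
  let k : List Bool × α → ℕ → Bool := fun q i => Option.getD (Option.map (fun b => g (q.1, (q.2, b))) (Encodable.decode i : Option β)) false
  refine ⟨fun q => bexb (q.1.length) (k q), ?_, ?_⟩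
  · apply Comp.bexb (by fun_prop)
    apply Computable.option_getD _ (by fun_prop)
    apply Computable.option_map (f := fun q : (List Bool × α) × ℕ => (Encodable.decode q.2 : Option β)) (g := fun q b => g (q.1.1, (q.1.2, b))) (by fun_prop)
    exact hg.comp (g := fun q : ((List Bool × α) × ℕ) × β => (q.1.1.1, (q.1.1.2, q.2))) (by fun_prop)
  · intro a
    simp only [bexb_iff]
    constructor
    · rintro ⟨b, hb⟩
      obtain ⟨s, hs⟩ := (hp (a, b)).1 hb
      refine ⟨max s (Encodable.encode b + 1), Encodable.encode b, by simp, ?_⟩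
      simpa [k] using hm _ _ _ (le_max_left _ _) hs
    · rintro ⟨s, i, hi, h⟩
      cases hd : (Encodable.decode i : Option β) with
      | none => simp [k, hd] at h
      | some b =>
        simp [k, hd] at h
        exact ⟨b, (hp (a, b)).2 ⟨s, h⟩⟩
theorem Sig.ball {X} {f : α → ℕ} {p : α → ℕ → Prop} (hf : Computable f) (h : Sig X (fun c : α × ℕ => p c.1 c.2)) :
    Sig X (fun a => ∀ i, i < f a → p a i) := by
  obtain ⟨g, hg, hp, hm⟩ := h.kernel
  refine ⟨fun q => !(bexb (f q.2) (fun i => !(g (q.1, (q.2, i))))), ?_, ?_⟩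
  · apply Comp.bnot
    apply Comp.bexb (by fun_prop)
    apply Comp.bnot
    exact hg.comp (g := fun q : (List Bool × α) × ℕ => (q.1.1, (q.1.2, q.2))) (by fun_prop)
  · intro a
    have key : ∀ s, (!(bexb (f a) (fun i => !(g (strPrefix X s, (a, i)))))) = true ↔ ∀ i < f a, g (strPrefix X s, (a, i)) = true := by
      intro s
      rw [Bool.not_eq_true', ← Bool.not_eq_true, bexb_iff]; simp
    simp only [key]
    constructor
    · intro H
      have : ∀ n ≤ f a, ∃ s, ∀ i < n, g (strPrefix X s, (a, i)) = true := by
        intro n; induction n with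
        | zero => intro _; exact ⟨0, by simp⟩
        | succ n ih =>
          intro hn
          obtain ⟨s, hs⟩ := ih (by omega)
          obtain ⟨t, ht⟩ := (hp (a, n)).1 (H n (by omega))
          refine ⟨max s t, fun i hi => ?_⟩
          rcases Nat.lt_succ_iff_lt_or_eq.1 hi with h1 | rfl
          · exact hm _ _ _ (le_max_left _ _) (hs i h1)
          · exact hm _ _ _ (le_max_right _ _) ht
      exact this _ le_rfl
    · rintro ⟨s, hs⟩ i hi
      exact (hp (a, i)).2 ⟨s, hs i hi⟩
theorem Sig.bool {X} {f : α → Bool} (hf : Computable f) : Sig X (fun a => f a = true) :=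
  ⟨fun q => f q.2, by fun_prop, fun a => by simp⟩
theorem Sig.eq {X} [DecidableEq β] {f g : α → β} (hf : Computable f) (hg : Computable g) : Sig X (fun a => f a = g a) :=
  (Sig.bool (f := fun a => eqb (f a) (g a)) (by fun_prop)).of_iff (by simp)
theorem Sig.ne {X} [DecidableEq β] {f g : α → β} (hf : Computable f) (hg : Computable g) : Sig X (fun a => f a ≠ g a) :=
  (Sig.bool (f := fun a => !(eqb (f a) (g a))) (by fun_prop)).of_iff (by simp [eqb])
theorem Sig.le {X} {f g : α → ℕ} (hf : Computable f) (hg : Computable g) : Sig X (fun a => f a ≤ g a) :=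
  (Sig.bool (f := fun a => leb (f a) (g a)) (by fun_prop)).of_iff (by simp)
theorem Sig.lt {X} {f g : α → ℕ} (hf : Computable f) (hg : Computable g) : Sig X (fun a => f a < g a) :=
  (Sig.bool (f := fun a => ltb (f a) (g a)) (by fun_prop)).of_iff (by simp)
theorem Sig.const {X} (P : Prop) : Sig X (fun _ : α => P) := by
  by_cases h : P
  · exact (Sig.bool (f := fun _ => true) (by fun_prop)).of_iff (by simp [h])
  · exact (Sig.bool (f := fun _ => false) (by fun_prop)).of_iff (by simp [h])
theorem Sig.oracle (X : ℕ → Bool) {f : α → ℕ} {g : α → Bool} (hf : Computable f) (hg : Computable g) : Sig X (fun a => X (f a) = g a) := by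
  refine ⟨fun q => eqb (q.1[f q.2]?) (some (g q.2)), by fun_prop, fun a => ?_⟩
  simp only [eqb_iff]
  constructor
  · intro h; exact ⟨f a + 1, by rw [strPrefix_get _ _ _ (by omega), h]⟩
  · rintro ⟨s, hs⟩
    have : f a < s := by
      by_contra hh
      have h0 : (strPrefix X s)[f a]? = none := List.getElem?_eq_none (by simp; omega)
      simp [h0] at hs
    rw [strPrefix_get _ _ _ this] at hs; simpa using hs
theorem Sig.kern {X} {g : List Bool × α → Bool} (hg : Computable g) (v : Bool) {f : β → ℕ} {h : β → α}
    (hf : Computable f) (hh : Computable h) : Sig X (fun b => g (strPrefix X (f b), h b) = v) := by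
  refine ⟨fun q => leb (f q.2) q.1.length && eqb (g (q.1.take (f q.2), h q.2)) v, ?_, fun a => ?_⟩
  · have : Computable (fun q : List Bool × β => g (q.1.take (f q.2), h q.2)) :=
      hg.comp (g := fun q : List Bool × β => (q.1.take (f q.2), h q.2)) (by fun_prop)
    fun_prop
  · simp only [Bool.and_eq_true, leb_iff, eqb_iff]
    constructor
    · intro h; exact ⟨f a, by simp, by rw [strPrefix_take _ _ _ le_rfl]; exact h⟩
    · rintro ⟨s, h1, h2⟩
      simp at h1
      rwa [strPrefix_take _ _ _ h1] at h2
/-- `Δ⁰₁` relative to `X`. -/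
def Del (X : ℕ → Bool) (p : α → Prop) : Prop := Sig X p ∧ Sig X (fun a => ¬ p a)
theorem Del.comp {X} {p : β → Prop} (h : Del X p) {f : α → β} (hf : Computable f) : Del X (fun a => p (f a)) :=
  ⟨h.1.comp hf, h.2.comp hf⟩
theorem Del.of_iff {X} {p q : α → Prop} (h : Del X p) (e : ∀ a, q a ↔ p a) : Del X q :=
  ⟨h.1.of_iff e, h.2.of_iff (fun a => not_congr (e a))⟩
theorem Del.not {X} {p : α → Prop} (h : Del X p) : Del X (fun a => ¬ p a) :=
  ⟨h.2, h.1.of_iff (by simp)⟩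
theorem Del.and {X} {p q : α → Prop} (h : Del X p) (h' : Del X q) : Del X (fun a => p a ∧ q a) :=
  ⟨h.1.and h'.1, (h.2.or h'.2).of_iff (fun a => by tauto)⟩
theorem Del.or {X} {p q : α → Prop} (h : Del X p) (h' : Del X q) : Del X (fun a => p a ∨ q a) :=
  ⟨h.1.or h'.1, (h.2.and h'.2).of_iff (fun a => by tauto)⟩
theorem Del.imp {X} {p q : α → Prop} (h : Del X p) (h' : Del X q) : Del X (fun a => p a → q a) :=
  (h.not.or h').of_iff (fun a => by tauto)
theorem Sig.bex {X} {f : α → ℕ} {p : α → ℕ → Prop} (hf : Computable f) (h : Sig X (fun c : α × ℕ => p c.1 c.2)) :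
    Sig X (fun a => ∃ i, i < f a ∧ p a i) :=
  Sig.ex ((Sig.lt (by fun_prop) (by fun_prop)).and h)
theorem Del.ball {X} {f : α → ℕ} {p : α → ℕ → Prop} (hf : Computable f) (h : Del X (fun c : α × ℕ => p c.1 c.2)) :
    Del X (fun a => ∀ i, i < f a → p a i) :=
  ⟨Sig.ball hf h.1, (Sig.bex (p := fun a i => ¬ p a i) hf h.2).of_iff (fun a => by push Not; rfl)⟩
theorem Del.bex {X} {f : α → ℕ} {p : α → ℕ → Prop} (hf : Computable f) (h : Del X (fun c : α × ℕ => p c.1 c.2)) :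
    Del X (fun a => ∃ i, i < f a ∧ p a i) :=
  ⟨Sig.bex hf h.1, (Sig.ball (p := fun a i => ¬ p a i) hf h.2).of_iff (fun a => by push Not; rfl)⟩
theorem Del.eq {X} [DecidableEq β] {f g : α → β} (hf : Computable f) (hg : Computable g) : Del X (fun a => f a = g a) :=
  ⟨Sig.eq hf hg, Sig.ne hf hg⟩
theorem Del.le {X} {f g : α → ℕ} (hf : Computable f) (hg : Computable g) : Del X (fun a => f a ≤ g a) :=
  ⟨Sig.le hf hg, (Sig.lt hg hf).of_iff (by simp)⟩
theorem Del.lt {X} {f g : α → ℕ} (hf : Computable f) (hg : Computable g) : Del X (fun a => f a < g a) :=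
  ⟨Sig.lt hf hg, (Sig.le hg hf).of_iff (by simp)⟩
theorem Del.const {X} (P : Prop) : Del X (fun _ : α => P) := ⟨Sig.const _, Sig.const _⟩
theorem Del.oracle (X : ℕ → Bool) {f : α → ℕ} {g : α → Bool} (hf : Computable f) (hg : Computable g) : Del X (fun a => X (f a) = g a) :=
  ⟨Sig.oracle X hf hg, (Sig.oracle X hf (g := fun a => !(g a)) (by fun_prop)).of_iff (fun a => by show ¬ (X (f a) = g a) ↔ _; generalize X (f a) = x; generalize g a = y; revert x y; decide)⟩

/-- Quantification over members of a list. -/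
theorem Sig.lall {X} {f : α → List β} {p : α → β → Prop} (hf : Computable f) (h : Sig X (fun c : α × β => p c.1 c.2)) :
    Sig X (fun a => ∀ b, b ∈ f a → p a b) := by
  classical
  have : Sig X (fun a => ∀ i, i < (f a).length → ∃ b, (f a)[i]? = some b ∧ p a b) := by
    apply Sig.ball (by fun_prop)
    apply Sig.ex
    refine Sig.and (Sig.eq (by fun_prop) (by fun_prop)) ?_
    exact h.comp (f := fun c : (α × ℕ) × β => (c.1.1, c.2)) (by fun_prop)
  refine this.of_iff (fun a => ?_)
  constructor
  · intro H i hi; exact ⟨(f a)[i], by simp, H _ (by simp)⟩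
  · intro H b hb
    obtain ⟨i, hi, rfl⟩ := List.getElem_of_mem hb
    obtain ⟨b, h1, h2⟩ := H i hi
    obtain ⟨_, h3⟩ := List.getElem?_eq_some_iff.1 h1
    rw [h3]; exact h2
theorem Sig.lex {X} {f : α → List β} {p : α → β → Prop} (hf : Computable f) (h : Sig X (fun c : α × β => p c.1 c.2)) :
    Sig X (fun a => ∃ b, b ∈ f a ∧ p a b) := by
  classical
  have : Sig X (fun a => ∃ b, (∃ i : ℕ, (f a)[i]? = some b) ∧ p a b) := by
    apply Sig.ex
    refine Sig.and ?_ h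
    apply Sig.ex
    exact (Sig.eq (by fun_prop) (by fun_prop))
  refine this.of_iff (fun a => ?_)
  simp only [List.mem_iff_getElem?]
theorem Del.lall {X} {f : α → List β} {p : α → β → Prop} (hf : Computable f) (h : Del X (fun c : α × β => p c.1 c.2)) :
    Del X (fun a => ∀ b, b ∈ f a → p a b) :=
  ⟨Sig.lall hf h.1, (Sig.lex (p := fun a b => ¬ p a b) hf h.2).of_iff (fun a => by push Not; rfl)⟩
theorem Del.lex {X} {f : α → List β} {p : α → β → Prop} (hf : Computable f) (h : Del X (fun c : α × β => p c.1 c.2)) :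
    Del X (fun a => ∃ b, b ∈ f a ∧ p a b) :=
  ⟨Sig.lex hf h.1, (Sig.lall (p := fun a b => ¬ p a b) hf h.2).of_iff (fun a => by push Not; rfl)⟩
theorem Sig.nodup {X} {f : α → List β} (hf : Computable f) : Sig X (fun a => (f a).Nodup) := by
  classical
  have : Sig X (fun a => ∀ i, i < (f a).length → ∀ j, j < i → (f a)[i]? ≠ (f a)[j]?) := by
    apply Sig.ball (by fun_prop)
    apply Sig.ball (by fun_prop)
    exact Sig.ne (by fun_prop) (by fun_prop)
  refine this.of_iff (fun a => ?_)
  rw [List.nodup_iff_getElem?_ne_getElem?]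
  constructor
  · intro H i hi j hj; exact (H j i hj hi).symm
  · intro H i j hij hj; exact (H j hj i hij).symm
/-- Transitivity of relative computability. -/
theorem Sig.trans {X Y : ℕ → Bool} {p : α → Prop} (h : Sig X p) (hX : Sig Y (fun c : ℕ × Bool => X c.1 = c.2)) : Sig Y p := by
  obtain ⟨g, hg, hp⟩ := h
  have : Sig Y (fun a => ∃ l : List Bool, (∀ i, i < l.length → ∃ b, l[i]? = some b ∧ X i = b) ∧ g (l, a) = true) := by
    apply Sig.ex
    apply Sig.and
    · apply Sig.ball (by fun_prop)
      apply Sig.ex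
      refine Sig.and (Sig.eq (by fun_prop) (by fun_prop)) ?_
      exact hX.comp (f := fun c : ((α × List Bool) × ℕ) × Bool => (c.1.2, c.2)) (by fun_prop)
    · exact Sig.bool (hg.comp (g := fun c : α × List Bool => (c.2, c.1)) (by fun_prop))
  refine this.of_iff (fun a => ?_)
  rw [hp]
  constructor
  · rintro ⟨s, hs⟩
    refine ⟨_, ?_, hs⟩
    intro i hi
    simp at hi
    exact ⟨X i, strPrefix_get _ _ _ hi, rfl⟩
  · rintro ⟨l, h1, h2⟩
    refine ⟨l.length, ?_⟩
    have : strPrefix X l.length = l := by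
      symm; rw [← isPrefixOf_iff]
      intro i
      obtain ⟨b, h3, h4⟩ := h1 i i.2
      simp at h3
      simp [h4, h3]
    rw [this]; exact h2
theorem Del.trans {X Y : ℕ → Bool} {p : α → Prop} (h : Del X p) (hX : Sig Y (fun c : ℕ × Bool => X c.1 = c.2)) : Del Y p :=
  ⟨h.1.trans hX, h.2.trans hX⟩
theorem sig_empty (Y : ℕ → Bool) : Sig Y (fun c : ℕ × Bool => emptyOracle c.1 = c.2) :=
  Sig.eq (f := fun _ => false) (by fun_prop) (by fun_prop)
theorem Sig.up {Y : ℕ → Bool} {p : α → Prop} (h : Sig emptyOracle p) : Sig Y p := h.trans (sig_empty Y)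
theorem Del.up {Y : ℕ → Bool} {p : α → Prop} (h : Del emptyOracle p) : Del Y p := h.trans (sig_empty Y)

/-- Uniformization. -/
theorem Sig.unif {X} {p : α → β → Prop} (h : Sig X (fun c : α × β => p c.1 c.2)) :
    ∃ F : α → β → Prop, Sig X (fun c : α × β => F c.1 c.2) ∧ (∀ a b, F a b → p a b) ∧
      (∀ a b b', F a b → F a b' → b = b') ∧ ∀ a, (∃ b, p a b) → ∃ b, F a b := by
  classical
  obtain ⟨g, hg, hp⟩ := h
  let K : α → ℕ × β → Prop := fun a c => g (strPrefix X c.1, (a, c.2)) = true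
  let F : α → β → Prop := fun a b => ∃ s, K a (s, b) ∧ ∀ n, n < Encodable.encode (s, b) → ∀ c, c ∈ (Encodable.decode n : Option (ℕ × β)).toList → (Encodable.encode c ≠ n ∨ ¬ K a c)
  refine ⟨F, ?_, ?_, ?_, ?_⟩
  · apply Sig.ex
    apply Sig.and
    · exact Sig.kern hg true (f := fun c : (α × β) × ℕ => c.2) (h := fun c : (α × β) × ℕ => (c.1.1, c.1.2)) (by fun_prop) (by fun_prop)
    · apply Sig.ball (by fun_prop)
      apply Sig.lall
      · exact Primrec.optionToList.to_comp.comp (by fun_prop)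
      · apply Sig.or
        · exact Sig.ne (by fun_prop) (by fun_prop)
        refine (Sig.kern (X := X) hg false (f := fun c : (((α × β) × ℕ) × ℕ) × ℕ × β => c.2.1) (h := fun c : (((α × β) × ℕ) × ℕ) × ℕ × β => (c.1.1.1.1, c.2.2)) (by fun_prop) (by fun_prop)).of_iff (fun a => ?_)
        simp [K]
  · rintro a b ⟨s, h, -⟩; exact (hp (a, b)).2 ⟨s, h⟩
  · rintro a b b' ⟨s, h, h2⟩ ⟨s', h', h2'⟩
    rcases lt_trichotomy (Encodable.encode (s, b)) (Encodable.encode (s', b')) with h3 | h3 | h3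
    · have := h2' _ h3 (s, b) (by simp); tauto
    · have := Encodable.encode_injective h3; simp at this; exact this.2
    · have := h2 _ h3 (s', b') (by simp); tauto
  · rintro a ⟨b, hb⟩
    obtain ⟨s, hs⟩ := (hp (a, b)).1 hb
    have hex : ∃ n, ∃ c : ℕ × β, n = Encodable.encode c ∧ K a c := ⟨_, (s, b), rfl, hs⟩
    obtain ⟨⟨s', b'⟩, h1, h2⟩ := Nat.find_spec hex
    refine ⟨b', s', h2, fun n hn c hc => ?_⟩
    rw [← h1] at hn
    by_contra hh
    push Not at hh
    exact Nat.find_min hex hn ⟨c, hh.1.symm, hh.2⟩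
end

end PartP1b

section PartP1c

open Nat.Partrec (Code)
section
variable {α β γ δ : Type*} [Primcodable α] [Primcodable β] [Primcodable γ] [Primcodable δ]

theorem wenum_iff (e n : ℕ) : WEnum e n ↔ ∃ k, (Code.evaln k (Denumerable.ofNat Code e) n).isSome = true := by
  unfold WEnum
  rw [Part.dom_iff_mem]
  constructor
  · rintro ⟨y, hy⟩
    obtain ⟨k, hk⟩ := Code.evaln_complete.1 hy
    exact ⟨k, by rw [Option.mem_def.1 hk]; rfl⟩
  · rintro ⟨k, hk⟩
    obtain ⟨y, hy⟩ := Option.isSome_iff_exists.1 hk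
    exact ⟨y, Code.evaln_sound (Option.mem_def.2 hy)⟩
theorem sig_wenum {X} {f g : α → ℕ} (hf : Computable f) (hg : Computable g) : Sig X (fun a => WEnum (f a) (g a)) := by
  simp only [wenum_iff]
  apply Sig.ex
  apply Sig.bool
  fun_prop
theorem strPrefix_succ (X : ℕ → Bool) (n : ℕ) : strPrefix X (n+1) = strPrefix X n ++ [X n] := by
  simp [strPrefix, List.range_succ]
theorem comp_strPrefix_empty : Computable (fun n : ℕ => strPrefix emptyOracle n) := by
  refine (Computable.nat_rec (f := fun n : ℕ => n) (g := fun _ => ([] : List Bool)) (h := fun _ q => q.2 ++ [false]) (by fun_prop) (by fun_prop) ?_).of_eq ?_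
  · unfold Computable₂; fun_prop
  · intro n; induction n with
    | zero => rfl
    | succ n ih => simp only at ih ⊢; rw [ih, strPrefix_succ]; rfl
/-- decidable kernel for an unrelativized relation -/
theorem Sig.kernel0 {p : α → Prop} (h : Sig emptyOracle p) : ∃ g : α × ℕ → Bool, Computable g ∧
    (∀ a, p a ↔ ∃ s, g (a, s) = true) ∧ ∀ a s t, s ≤ t → g (a, s) = true → g (a, t) = true := by
  obtain ⟨g, hg, hp, hm⟩ := h.kernel
  refine ⟨fun q => g (strPrefix emptyOracle q.2, q.1), ?_, hp, hm⟩
  have := comp_strPrefix_empty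
  exact hg.comp (g := fun q : α × ℕ => (strPrefix emptyOracle q.2, q.1)) (by fun_prop)
theorem exists_wenum {p : ℕ → Prop} (h : Sig emptyOracle p) : ∃ e, ∀ n, WEnum e n ↔ p n := by
  obtain ⟨g, hg, hp, -⟩ := h.kernel0
  have h1 : Partrec (fun n : ℕ => Nat.rfind (fun s => (Part.some (g (n, s)) : Part Bool))) :=
    Partrec.rfind (p := fun n s => (Part.some (g (n, s)) : Part Bool)) (hg.partrec)
  have h2 : Nat.Partrec (fun n : ℕ => Nat.rfind (fun s => (Part.some (g (n, s)) : Part Bool))) := Partrec.nat_iff.1 h1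
  obtain ⟨c, hc⟩ := Code.exists_code.1 h2
  refine ⟨Encodable.encode c, fun n => ?_⟩
  unfold WEnum
  rw [Denumerable.ofNat_encode, hc, hp]
  refine (Nat.rfind_dom' (p := fun s => (Part.some (g (n, s)) : Part Bool))).trans ?_
  simp
theorem sig_pfx {X} {f : α → List Bool} (hf : Computable f) : Sig X (fun a => IsPrefixOf (f a) X) := by
  have : Sig X (fun a => ∀ i, i < (f a).length → ∃ b, (f a)[i]? = some b ∧ X i = b) := by
    apply Sig.ball (by fun_prop)
    apply Sig.ex
    refine Sig.and (Sig.eq (by fun_prop) (by fun_prop)) ?_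
    exact Sig.oracle X (by fun_prop) (by fun_prop)
  refine this.of_iff (fun a => ?_)
  unfold IsPrefixOf
  constructor
  · intro H i hi; exact ⟨(f a)[i], by simp, H ⟨i, hi⟩⟩
  · intro H i
    obtain ⟨b, h1, h2⟩ := H i i.2
    rw [h2]
    simp at h1; simp [h1]
theorem sig_oracleComputes {X} {f g h : α → ℕ} (hf : Computable f) (hg : Computable g) (hh : Computable h) :
    Sig X (fun a => OracleComputes (f a) X (g a) (h a)) := by
  unfold OracleComputes
  apply Sig.ex
  apply Sig.and
  · exact sig_pfx (by fun_prop)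
  · exact sig_wenum (by fun_prop) (by fun_prop)
theorem exists_oracleComputes {X} {p : ℕ → ℕ → Prop} (h : Sig X (fun c : ℕ × ℕ => p c.1 c.2)) :
    ∃ e, ∀ n m, OracleComputes e X n m ↔ p n m := by
  obtain ⟨g, hg, hp⟩ := h
  have : Sig emptyOracle (fun c : ℕ => ∃ σ : List Bool, Encodable.encode σ = c.unpair.1 ∧ g (σ, c.unpair.2.unpair) = true) := by
    apply Sig.ex
    apply Sig.and
    · exact Sig.eq (by fun_prop) (by fun_prop)
    · apply Sig.bool
      exact hg.comp (g := fun q : ℕ × List Bool => (q.2, q.1.unpair.2.unpair)) (by fun_prop)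
  obtain ⟨e, he⟩ := exists_wenum this
  refine ⟨e, fun n m => ?_⟩
  unfold OracleComputes
  simp only [he]
  refine Iff.trans ?_ (hp (n, m)).symm
  constructor
  · rintro ⟨σ, h1, σ', h2, h3⟩
    simp at h2 h3
    subst h2
    rw [isPrefixOf_iff] at h1
    exact ⟨σ'.length, by rw [← h1]; exact h3⟩
  · rintro ⟨s, hs⟩
    exact ⟨strPrefix X s, by rw [isPrefixOf_iff]; simp, strPrefix X s, by simp, by simpa using hs⟩
theorem comp_natOfBool {f : α → Bool} (hf : Computable f) : Computable (fun a => natOfBool (f a)) := by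
  unfold natOfBool; fun_prop
theorem natOfBool_inj {a b : Bool} (h : natOfBool a = natOfBool b) : a = b := by
  revert h; cases a <;> cases b <;> simp [natOfBool]
theorem turingLE_iff {A B : ℕ → Bool} : TuringLE B A ↔ Sig A (fun c : ℕ × Bool => B c.1 = c.2) := by
  constructor
  · rintro ⟨e, he⟩
    refine (sig_oracleComputes (X := A) (f := fun _ : ℕ × Bool => e) (g := fun c => c.1) (h := fun c => natOfBool c.2) (by fun_prop) (by fun_prop) (comp_natOfBool (by fun_prop))).of_iff (fun c => ?_)
    rw [he]
    constructor
    · intro h; simp only [h]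
    · intro h; exact (natOfBool_inj h).symm
  · intro h
    apply exists_oracleComputes (p := fun n m => m = natOfBool (B n))
    have : Sig A (fun c : ℕ × ℕ => ∃ b, B c.1 = b ∧ c.2 = natOfBool b) := by
      apply Sig.ex
      apply Sig.and
      · exact h.comp (f := fun c : (ℕ × ℕ) × Bool => (c.1.1, c.2)) (by fun_prop)
      · exact Sig.eq (by fun_prop) (comp_natOfBool (by fun_prop))
    refine this.of_iff (fun c => ?_)
    simp
theorem sig_graph_of {X B : ℕ → Bool} (h1 : Sig X (fun n => B n = true)) (h2 : Sig X (fun n => B n = false)) : Sig X (fun c : ℕ × Bool => B c.1 = c.2) := by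
  have : Sig X (fun c : ℕ × Bool => (c.2 = true ∧ B c.1 = true) ∨ (c.2 = false ∧ B c.1 = false)) := by
    apply Sig.or
    · exact Sig.and (Sig.eq (by fun_prop) (by fun_prop)) (h1.comp (f := fun c : ℕ × Bool => c.1) (by fun_prop))
    · exact Sig.and (Sig.eq (by fun_prop) (by fun_prop)) (h2.comp (f := fun c : ℕ × Bool => c.1) (by fun_prop))
  refine this.of_iff (fun c => ?_)
  rcases c with ⟨n, b⟩; cases b <;> simp
theorem sig_join_left (A B : ℕ → Bool) : Sig (joinSet A B) (fun c : ℕ × Bool => A c.1 = c.2) := by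
  refine (Sig.oracle (joinSet A B) (f := fun c : ℕ × Bool => 2 * c.1) (g := fun c => c.2) (by fun_prop) (by fun_prop)).of_iff (fun c => ?_)
  simp [joinSet]
theorem sig_join_right (A B : ℕ → Bool) : Sig (joinSet A B) (fun c : ℕ × Bool => B c.1 = c.2) := by
  refine (Sig.oracle (joinSet A B) (f := fun c : ℕ × Bool => 2 * c.1 + 1) (g := fun c => c.2) (by fun_prop) (by fun_prop)).of_iff (fun c => ?_)
  have h1 : (2 * c.1 + 1) / 2 = c.1 := by omega
  simp [joinSet, h1]
theorem sig_join {A B X : ℕ → Bool} (hA : Sig X (fun c : ℕ × Bool => A c.1 = c.2)) (hB : Sig X (fun c : ℕ × Bool => B c.1 = c.2)) :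
    Sig X (fun c : ℕ × Bool => joinSet A B c.1 = c.2) := by
  have : Sig X (fun c : ℕ × Bool => ∃ k, (c.1 = 2 * k ∧ A k = c.2) ∨ (c.1 = 2 * k + 1 ∧ B k = c.2)) := by
    apply Sig.ex
    apply Sig.or
    · exact Sig.and (Sig.eq (by fun_prop) (by fun_prop)) (hA.comp (f := fun c : (ℕ × Bool) × ℕ => (c.2, c.1.2)) (by fun_prop))
    · exact Sig.and (Sig.eq (by fun_prop) (by fun_prop)) (hB.comp (f := fun c : (ℕ × Bool) × ℕ => (c.2, c.1.2)) (by fun_prop))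
  refine this.of_iff (fun c => ?_)
  rcases c with ⟨n, b⟩
  simp only [joinSet]
  split_ifs with h
  · constructor
    · intro h2; exact ⟨n / 2, Or.inl ⟨by omega, h2⟩⟩
    · rintro ⟨k, ⟨h1, h2⟩ | ⟨h1, h2⟩⟩
      · have : n / 2 = k := by omega
        rw [this, h2]
      · omega
  · constructor
    · intro h2; exact ⟨n / 2, Or.inr ⟨by omega, h2⟩⟩
    · rintro ⟨k, ⟨h1, h2⟩ | ⟨h1, h2⟩⟩
      · omega
      · have : n / 2 = k := by omega
        rw [this, h2]
theorem sig_jump (X : ℕ → Bool) : Sig X (fun e => jump X e = true) := by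
  have : Sig X (fun e => ∃ m, OracleComputes e X e m) := by
    apply Sig.ex
    exact sig_oracleComputes (by fun_prop) (by fun_prop) (by fun_prop)
  exact this.of_iff (fun e => by simp [jump])
theorem zeroJump_iff (e : ℕ) : zeroJump e = true ↔ ∃ m, OracleComputes e emptyOracle e m := by simp [zeroJump, jump]
theorem isPrefixOf_strPrefix (X : ℕ → Bool) (n : ℕ) : IsPrefixOf (strPrefix X n) X := by
  rw [isPrefixOf_iff]; simp
/-- Every unrelativized `Σ⁰₁` relation is decidable in `∅′`. -/
theorem Sig.zj {p : α → Prop} (h : Sig emptyOracle p) : Del zeroJump p := by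
  have h1 : Sig emptyOracle (fun n : ℕ => ∃ a : α, Encodable.encode a = n.unpair.1 ∧ p a) := by
    apply Sig.ex
    exact Sig.and (Sig.eq (by fun_prop) (by fun_prop)) (h.comp (f := fun c : ℕ × α => c.2) (by fun_prop))
  obtain ⟨e, he⟩ := exists_wenum h1
  let f : α → ℕ := fun a => Encodable.encode (Code.curry (Denumerable.ofNat Code e) (Encodable.encode a))
  have hf : Computable f := by
    apply Computable.encode.comp
    exact Code.primrec₂_curry.to_comp.comp (Computable.const _) Computable.encode
  have key : ∀ a, p a ↔ zeroJump (f a) = true := by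
    intro a
    have h2 : ∀ n, WEnum (f a) n ↔ p a := by
      intro n
      have h3 := he (Nat.pair (Encodable.encode a) n)
      simp at h3
      rw [← h3]
      unfold WEnum
      simp only [f, Denumerable.ofNat_encode, Code.eval_curry]
    rw [zeroJump_iff]
    unfold OracleComputes
    simp only [h2]
    constructor
    · intro h; exact ⟨0, [], by intro i; exact i.elim0, h⟩
    · rintro ⟨_, _, _, h⟩; exact h
  have h3 : Del zeroJump (fun a => zeroJump (f a) = true) := Del.oracle zeroJump hf (by fun_prop)
  exact h3.of_iff key
end

end PartP1c

section PartP1d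

section
variable {α β γ δ : Type*} [Primcodable α] [Primcodable β] [Primcodable γ] [Primcodable δ]

theorem Sig.iter {X} {s : α → ℕ → β} {F : α → ℕ → β → β → Prop} {s0 : α → β} (h0 : Computable s0)
    (hs0 : ∀ a, s a 0 = s0 a)
    (hF : Sig X (fun c : α × ℕ × β × β => F c.1 c.2.1 c.2.2.1 c.2.2.2))
    (hs : ∀ a i, F a i (s a i) (s a (i+1)))
    (hfun : ∀ a i t, F a i (s a i) t → t = s a (i+1)) : Sig X (fun c : α × ℕ × β => s c.1 c.2.1 = c.2.2) := by
  classical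
  have : Sig X (fun c : α × ℕ × β => ∃ h : List β, h[0]? = some (s0 c.1) ∧
     (∀ i, i < c.2.1 → ∃ u : β × β, h[i]? = some u.1 ∧ h[i+1]? = some u.2 ∧ F c.1 i u.1 u.2) ∧ h[c.2.1]? = some c.2.2) := by
    apply Sig.ex
    apply Sig.and
    · exact Sig.eq (by fun_prop) (by fun_prop)
    apply Sig.and
    · apply Sig.ball (by fun_prop)
      apply Sig.ex
      apply Sig.and
      · exact Sig.eq (by fun_prop) (by fun_prop)
      apply Sig.and
      · exact Sig.eq (by fun_prop) (by fun_prop)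
      exact hF.comp (f := fun c : (((α × ℕ × β) × List β) × ℕ) × β × β => (c.1.1.1.1, c.1.2, c.2.1, c.2.2)) (by fun_prop)
    · exact Sig.eq (by fun_prop) (by fun_prop)
  refine this.of_iff ?_
  rintro ⟨a, e, t⟩
  simp only
  constructor
  · intro h
    refine ⟨(List.range (e+1)).map (s a), ?_, ?_, ?_⟩
    · simp [hs0]
    · intro i hi
      refine ⟨(s a i, s a (i+1)), ?_, ?_, hs a i⟩
      · rw [List.getElem?_map, List.getElem?_range (by omega)]; rfl
      · rw [List.getElem?_map, List.getElem?_range (by omega)]; rfl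
    · simp [h]
  · rintro ⟨h, h1, h2, h3⟩
    have key : ∀ i, i ≤ e → h[i]? = some (s a i) := by
      intro i
      induction i with
      | zero => intro _; rw [h1, hs0]
      | succ i ih =>
        intro hi
        obtain ⟨u, u1, u2, u3⟩ := h2 i (by omega)
        rw [ih (by omega)] at u1
        simp at u1
        rw [← u1] at u3
        rw [u2, hfun a i _ u3]
    rw [key e le_rfl] at h3
    simpa using h3

open Classical in
/-- greedy choice of a color -/
noncomputable def pickCol (T : ℕ → ℕ → Prop) (j : ℕ) (l : List (Option ℕ)) : Option ℕ :=
  if h : ∃ d, d ≤ j ∧ T d j ∧ some d ∉ l then some (Nat.find h) else none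
/-- list of colors chosen so far -/
noncomputable def cols (T : ℕ → ℕ → Prop) : ℕ → List (Option ℕ)
  | 0 => []
  | j+1 => cols T j ++ [pickCol T j (cols T j)]
theorem cols_length (T : ℕ → ℕ → Prop) (j : ℕ) : (cols T j).length = j := by
  induction j with
  | zero => rfl
  | succ j ih => simp [cols, ih]
theorem cols_mem (T : ℕ → ℕ → Prop) (j : ℕ) (o : Option ℕ) : o ∈ cols T j ↔ ∃ i < j, pickCol T i (cols T i) = o := by
  induction j with
  | zero => simp [cols]
  | succ j ih =>
    simp only [cols, List.mem_append, ih, List.mem_singleton]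
    constructor
    · rintro (⟨i, h, h'⟩ | h)
      · exact ⟨i, by omega, h'⟩
      · exact ⟨j, by omega, h.symm⟩
    · rintro ⟨i, hi, h⟩
      rcases Nat.lt_succ_iff_lt_or_eq.1 hi with h1 | rfl
      · exact Or.inl ⟨i, h1, h⟩
      · exact Or.inr h.symm
/-- specification of pickCol -/
def pickSpec (T : ℕ → ℕ → Prop) (j : ℕ) (l : List (Option ℕ)) (o : Option ℕ) : Prop :=
  (∃ d, d < j + 1 ∧ (o = some d ∧ ((T d j ∧ ∀ x, x ∈ l → x ≠ some d) ∧ ∀ d', d' < d → ¬ (T d' j ∧ ∀ x, x ∈ l → x ≠ some d')))) ∨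
  (o = none ∧ ∀ d, d < j + 1 → ¬ (T d j ∧ ∀ x, x ∈ l → x ≠ some d))
theorem pickSpec_iff (T : ℕ → ℕ → Prop) (j : ℕ) (l : List (Option ℕ)) (o : Option ℕ) : pickSpec T j l o ↔ o = pickCol T j l := by
  classical
  have hm : ∀ d, (∀ x, x ∈ l → x ≠ some d) ↔ some d ∉ l := by
    intro d; constructor
    · intro h h'; exact h _ h' rfl
    · rintro h x hx rfl; exact h hx
  unfold pickSpec pickCol
  simp only [hm]
  split_ifs with h
  · have hsp := Nat.find_spec h
    have hmin := fun m => Nat.find_min h (m := m)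
    set n := Nat.find h
    constructor
    · rintro (⟨d, h1, rfl, h3, h4⟩ | ⟨rfl, h2⟩)
      · rcases lt_trichotomy d n with h5 | h5 | h5
        · exact absurd ⟨by omega, h3⟩ (hmin d h5)
        · rw [h5]
        · exact absurd hsp.2 (h4 n h5)
      · exact absurd hsp.2 (h2 n (by omega))
    · rintro rfl
      left
      exact ⟨n, by omega, rfl, hsp.2, fun d' hd' h' => hmin d' hd' ⟨by omega, h'⟩⟩
  · constructor
    · rintro (⟨d, h1, rfl, h3, h4⟩ | ⟨rfl, h2⟩)
      · exact absurd ⟨d, by omega, h3⟩ h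
      · rfl
    · rintro rfl
      right
      exact ⟨rfl, fun d hd h' => h ⟨d, by omega, h'⟩⟩
theorem del_free {Z} {f : γ → List (Option ℕ)} {g : γ → ℕ} (hf : Computable f) (hg : Computable g) :
    Del Z (fun c => ∀ x, x ∈ f c → x ≠ some (g c)) := by
  apply Del.lall hf
  exact (Del.eq (f := fun c : γ × Option ℕ => c.2) (g := fun c => some (g c.1)) (by fun_prop) (by fun_prop)).not
/-- Coloring lemma. -/
theorem coloring {Z} {T : α → ℕ → ℕ → Prop} (hT : Del Z (fun c : α × ℕ × ℕ => T c.1 c.2.1 c.2.2)) :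
    ∃ Col : α → ℕ → ℕ → Prop, Sig Z (fun c : α × ℕ × ℕ => Col c.1 c.2.1 c.2.2) ∧
      (∀ a j d d', Col a j d → Col a j d' → d = d') ∧
      ∀ a d, (∀ N, ∃ j, N ≤ j ∧ T a d j) → ∃ j, Col a j d ∧ T a d j := by
  classical
  refine ⟨fun a j d => pickCol (T a) j (cols (T a) j) = some d, ?_, ?_, ?_⟩
  · have h1 : Sig Z (fun c : α × ℕ × List (Option ℕ) × Option ℕ => pickSpec (T c.1) c.2.1 c.2.2.1 c.2.2.2) := by
      apply Sig.or
      · apply Sig.bex (by fun_prop)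
        apply Sig.and (Sig.eq (by fun_prop) (by fun_prop))
        apply Sig.and
        · apply Sig.and
          · exact hT.1.comp (f := fun c : (α × ℕ × List (Option ℕ) × Option ℕ) × ℕ => (c.1.1, c.2, c.1.2.1)) (by fun_prop)
          · exact (del_free (by fun_prop) (by fun_prop)).1
        · apply Sig.ball (by fun_prop)
          refine Sig.of_iff (Del.and ?_ (del_free ?_ ?_)).2 (fun _ => Iff.rfl)
          · exact hT.comp (f := fun c : ((α × ℕ × List (Option ℕ) × Option ℕ) × ℕ) × ℕ => (c.1.1.1, c.2, c.1.1.2.1)) (by fun_prop)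
          · fun_prop
          · fun_prop
      · apply Sig.and (Sig.eq (by fun_prop) (by fun_prop))
        apply Sig.ball (by fun_prop)
        refine Sig.of_iff (Del.and ?_ (del_free ?_ ?_)).2 (fun _ => Iff.rfl)
        · exact hT.comp (f := fun c : (α × ℕ × List (Option ℕ) × Option ℕ) × ℕ => (c.1.1, c.2, c.1.2.1)) (by fun_prop)
        · fun_prop
        · fun_prop
    have h2 : Sig Z (fun c : α × ℕ × List (Option ℕ) => cols (T c.1) c.2.1 = c.2.2) := by
      apply Sig.iter (s := fun a i => cols (T a) i) (F := fun a j l l' => ∃ o, l' = l ++ [o] ∧ pickSpec (T a) j l o) (s0 := fun _ => []) (by fun_prop)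
      · intro a; rfl
      · apply Sig.ex
        apply Sig.and (Sig.eq (by fun_prop) (by fun_prop))
        exact h1.comp (f := fun c : (α × ℕ × List (Option ℕ) × List (Option ℕ)) × Option ℕ => (c.1.1, c.1.2.1, c.1.2.2.1, c.2)) (by fun_prop)
      · intro a i
        exact ⟨_, rfl, (pickSpec_iff _ _ _ _).2 rfl⟩
      · rintro a i t ⟨o, rfl, h⟩
        rw [pickSpec_iff] at h
        rw [h]; rfl
    have h3 : Sig Z (fun c : α × ℕ × ℕ => ∃ l, cols (T c.1) c.2.1 = l ∧ pickSpec (T c.1) c.2.1 l (some c.2.2)) := by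
      apply Sig.ex
      apply Sig.and
      · exact h2.comp (f := fun c : (α × ℕ × ℕ) × List (Option ℕ) => (c.1.1, c.1.2.1, c.2)) (by fun_prop)
      · exact h1.comp (f := fun c : (α × ℕ × ℕ) × List (Option ℕ) => (c.1.1, c.1.2.1, c.2, some c.1.2.2)) (by fun_prop)
    refine h3.of_iff (fun c => ?_)
    simp [pickSpec_iff, eq_comm]
  · intro a j d d' h h'
    rw [h] at h'; simpa using h'
  · intro a d hinf
    set P : ℕ → Option ℕ := fun j => pickCol (T a) j (cols (T a) j) with hP
    have hcol : ∀ j d, P j = some d → T a d j ∧ some d ∉ cols (T a) j := by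
      intro j d h
      simp only [hP, pickCol] at h
      split_ifs at h with h1
      have := Nat.find_spec h1
      simp at h; rw [h] at this; exact this.2
    by_contra hne
    push Not at hne
    have hno : ∀ j, P j ≠ some d := fun j h => hne j h (hcol j d h).1
    have hlt : ∀ j, d ≤ j → T a d j → ∃ d', d' < d ∧ P j = some d' := by
      intro j hj hTj
      have hex : ∃ d, d ≤ j ∧ T a d j ∧ some d ∉ cols (T a) j :=
        ⟨d, hj, hTj, fun h => by
          rw [cols_mem] at h
          obtain ⟨i, _, h⟩ := h
          exact hno i h⟩
      have h1 : P j = some (Nat.find hex) := by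
        simp only [hP, pickCol]; rw [dif_pos hex]
      refine ⟨Nat.find hex, ?_, h1⟩
      have h2 : Nat.find hex ≤ d := Nat.find_min' hex ⟨hj, hTj, by
        intro h; rw [cols_mem] at h
        obtain ⟨i, _, h⟩ := h
        exact hno i h⟩
      rcases Nat.lt_or_eq_of_le h2 with h3 | h3
      · exact h3
      · rw [h3] at h1; exact absurd h1 (hno j)
    have hinj : ∀ i j e, P i = some e → P j = some e → i = j := by
      have : ∀ i j e, i < j → P i = some e → P j = some e → False := by
        intro i j e hij h1 h2
        apply (hcol j e h2).2
        rw [cols_mem]; exact ⟨i, hij, h1⟩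
      intro i j e h1 h2
      rcases lt_trichotomy i j with h | h | h
      · exact (this _ _ _ h h1 h2).elim
      · exact h
      · exact (this _ _ _ h h2 h1).elim
    have hI : Set.Infinite {j | d ≤ j ∧ T a d j} := by
      rw [Set.infinite_iff_exists_gt]
      intro N
      obtain ⟨j, h1, h2⟩ := hinf (max (N+1) d)
      exact ⟨j, ⟨by omega, h2⟩, by omega⟩
    have hmap : Set.MapsTo (fun j => (P j).getD 0) {j | d ≤ j ∧ T a d j} (Set.Iio d) := by
      rintro j ⟨h1, h2⟩
      obtain ⟨d', h3, h4⟩ := hlt j h1 h2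
      simpa [h4] using h3
    obtain ⟨x, hx, y, hy, hxy, h⟩ := hI.exists_ne_map_eq_of_mapsTo hmap (Set.finite_Iio d)
    obtain ⟨d1, h3, h4⟩ := hlt x hx.1 hx.2
    obtain ⟨d2, h5, h6⟩ := hlt y hy.1 hy.2
    simp [h4, h6] at h
    subst h
    exact hxy (hinj _ _ _ h4 h6)
/-- Effective dependent choice. -/
theorem Sig.dc {X} {P : ℕ → β → β → Prop} {Inv : ℕ → β → Prop} {b0 : β} (h : Sig X (fun c : ℕ × β × β => P c.1 c.2.1 c.2.2))
    (h0 : Inv 0 b0) (hstep : ∀ i b, Inv i b → ∃ b', P i b b') (hinv : ∀ i b b', Inv i b → P i b b' → Inv (i+1) b') :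
    ∃ s : ℕ → β, s 0 = b0 ∧ (∀ i, P i (s i) (s (i+1))) ∧ (∀ i, Inv i (s i)) ∧ Sig X (fun c : ℕ × β => s c.1 = c.2) := by
  classical
  have h' : Sig X (fun c : (ℕ × β) × β => P c.1.1 c.1.2 c.2) := h.comp (f := fun c : (ℕ × β) × β => (c.1.1, c.1.2, c.2)) (by fun_prop)
  obtain ⟨F, hF, hFP, hFf, hFt⟩ := Sig.unif (p := fun (c : ℕ × β) b => P c.1 c.2 b) h'
  let s : ℕ → β := fun n => Nat.rec b0 (fun i b => if h : ∃ b', F (i, b) b' then h.choose else b0) n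
  have hs : ∀ i, s (i+1) = if h : ∃ b', F (i, s i) b' then h.choose else b0 := fun i => rfl
  have key : ∀ i, Inv i (s i) := by
    intro i
    induction i with
    | zero => exact h0
    | succ i ih =>
      have h1 := hFt (i, s i) (hstep i _ ih)
      rw [hs, dif_pos h1]
      exact hinv i _ _ ih (hFP _ _ h1.choose_spec)
  have key2 : ∀ i, F (i, s i) (s (i+1)) := by
    intro i
    have h1 := hFt (i, s i) (hstep i _ (key i))
    rw [hs, dif_pos h1]
    exact h1.choose_spec
  refine ⟨s, rfl, fun i => hFP _ _ (key2 i), key, ?_⟩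
  have := Sig.iter (X := X) (α := Unit) (s := fun _ => s) (s0 := fun _ => b0) (F := fun _ i b b' => F (i, b) b') (by fun_prop) (fun _ => rfl)
    (hF.comp (f := fun c : Unit × ℕ × β × β => ((c.2.1, c.2.2.1), c.2.2.2)) (by fun_prop)) (fun _ => key2) (fun _ i t ht => hFf _ _ _ ht (key2 i))
  exact this.comp (f := fun c : ℕ × β => ((), c.1, c.2)) (by fun_prop)
end

end PartP1d

section PartP2a

open MeasureTheory
/-- numerical value of a binary string -/
def valS (σ : List Bool) : ℕ := σ.foldl (fun v b => 2 * v + natOfBool b) 0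
theorem valS_snoc (σ : List Bool) (b : Bool) : valS (σ ++ [b]) = 2 * valS σ + natOfBool b := by
  simp [valS]
theorem valS_lt (σ : List Bool) : valS σ < 2 ^ σ.length := by
  induction σ using List.reverseRecOn with
  | nil => simp [valS]
  | append_singleton l b ih =>
    rw [valS_snoc]; simp [pow_succ]
    cases b <;> simp [natOfBool] <;> omega
theorem binaryDigits_measurable : Measurable binaryDigits := by
  rw [measurable_pi_iff]
  intro n
  unfold binaryDigits
  have h : Measurable (fun k : ℤ => decide (k % 2 = 1)) := measurable_from_top
  exact h.comp (Int.measurable_floor.comp (by fun_prop))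
theorem floor_step (x : ℝ) (n : ℕ) : ⌊x * 2 ^ n⌋ = ⌊x * 2 ^ (n+1)⌋ / 2 := by
  have := Int.floor_div_natCast (x * 2 ^ (n+1)) 2
  have h2 : x * 2 ^ (n+1) / ((2:ℕ):ℝ) = x * 2 ^ n := by push_cast; rw [pow_succ]; ring
  rw [h2] at this
  exact_mod_cast this
theorem strPrefix_binary (x : ℝ) (hx : x ∈ Set.Ico (0:ℝ) 1) (σ : List Bool) :
    strPrefix (binaryDigits x) σ.length = σ ↔ ⌊x * 2 ^ σ.length⌋ = (valS σ : ℤ) := by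
  induction σ using List.reverseRecOn with
  | nil =>
    simp [strPrefix, valS, Int.floor_eq_zero_iff, hx]
  | append_singleton l b ih =>
    simp only [List.length_append, List.length_singleton]
    rw [strPrefix_succ]
    have h1 : strPrefix (binaryDigits x) l.length ++ [binaryDigits x l.length] = l ++ [b] ↔
       strPrefix (binaryDigits x) l.length = l ∧ binaryDigits x l.length = b := by
      constructor
      · intro h
        have := List.append_inj' h rfl
        exact ⟨this.1, by simpa using this.2⟩
      · rintro ⟨h, h'⟩; rw [h, h']
    rw [h1, ih, floor_step, valS_snoc]
    unfold binaryDigits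
    generalize ⌊x * 2 ^ (l.length+1)⌋ = k
    cases b
    · simp [natOfBool]; omega
    · simp [natOfBool]; omega
theorem cylinder_measurable (σ : List Bool) : MeasurableSet (cylinder σ) := by
  have : cylinder σ = ⋂ i : Fin σ.length, {X : ℕ → Bool | X i = σ.get i} := by
    ext X; simp [_root_.cylinder, IsPrefixOf]
  rw [this]
  refine MeasurableSet.iInter (fun i => ?_)
  exact measurableSet_eq_fun (measurable_pi_apply (i : ℕ)) measurable_const
theorem openOf_measurable (S : Set (List Bool)) : MeasurableSet (openOf S) :=
  MeasurableSet.biUnion (Set.to_countable _) (fun σ _ => cylinder_measurable σ)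
theorem mem_cyl (σ : List Bool) (X : ℕ → Bool) : X ∈ cylinder σ ↔ strPrefix X σ.length = σ := by
  unfold _root_.cylinder; rw [Set.mem_ofPred_eq, isPrefixOf_iff, eq_comm]
instance : IsProbabilityMeasure μCantor := by
  unfold μCantor
  have : IsProbabilityMeasure (volume.restrict (Set.Ico (0:ℝ) 1)) := ⟨by simp⟩
  exact Measure.isProbabilityMeasure_map binaryDigits_measurable.aemeasurable
theorem mu_cylinder (σ : List Bool) : μCantor (cylinder σ) = (2⁻¹ : ENNReal) ^ σ.length := by
  unfold μCantor
  rw [Measure.map_apply binaryDigits_measurable (cylinder_measurable σ), Measure.restrict_apply (binaryDigits_measurable (cylinder_measurable σ))]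
  have hpos : (0:ℝ) < 2 ^ σ.length := by positivity
  have : binaryDigits ⁻¹' cylinder σ ∩ Set.Ico 0 1 = Set.Ico ((valS σ : ℝ) / 2 ^ σ.length) ((valS σ + 1 : ℝ) / 2 ^ σ.length) := by
    ext x
    have hlt : (valS σ : ℝ) + 1 ≤ 2 ^ σ.length := by exact_mod_cast valS_lt σ
    simp only [Set.mem_inter_iff, Set.mem_preimage, mem_cyl]
    have e1 : x ∈ Set.Ico ((valS σ : ℝ) / 2 ^ σ.length) ((valS σ + 1 : ℝ) / 2 ^ σ.length) ↔ ⌊x * 2 ^ σ.length⌋ = (valS σ : ℤ) := by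
      rw [Int.floor_eq_iff, Set.mem_Ico, div_le_iff₀ hpos, lt_div_iff₀ hpos]
      push_cast; rfl
    rw [e1]
    constructor
    · rintro ⟨h, hx⟩
      exact (strPrefix_binary x hx σ).1 h
    · intro h
      have hx : x ∈ Set.Ico (0:ℝ) 1 := by
        have h2 := e1.2 h
        refine ⟨le_trans (by positivity) h2.1, lt_of_lt_of_le h2.2 ?_⟩
        rw [div_le_one hpos]; exact hlt
      exact ⟨(strPrefix_binary x hx σ).2 h, hx⟩
  rw [this, Real.volume_Ico]
  have h3 : (valS σ + 1 : ℝ) / 2 ^ σ.length - (valS σ : ℝ) / 2 ^ σ.length = (2⁻¹ : ℝ) ^ σ.length := by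
    rw [inv_pow]; field_simp; ring
  rw [h3, ENNReal.ofReal_pow (by positivity), ENNReal.ofReal_inv_of_pos (by norm_num)]
  simp

end PartP2a

section PartP2b

open MeasureTheory ProbabilityTheory
/-- fair coin -/
noncomputable def coin : Measure Bool := (2⁻¹ : ENNReal) • Measure.count
instance : IsProbabilityMeasure coin := ⟨by
  rw [coin, Measure.smul_apply, Measure.count_univ]
  simp [ENNReal.inv_mul_cancel]⟩
theorem coin_singleton (b : Bool) : coin {b} = 2⁻¹ := by simp [coin]
theorem pi_cylinder (σ : List Bool) : Measure.infinitePi (fun _ : ℕ => coin) (_root_.cylinder σ) = (2⁻¹ : ENNReal) ^ σ.length := by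
  have : _root_.cylinder σ = Set.pi (Finset.range σ.length : Finset ℕ) (fun i => {(σ[i]?).getD false}) := by
    ext X
    simp [_root_.cylinder, IsPrefixOf]
    constructor
    · intro h i hi; simpa [hi] using h ⟨i, hi⟩
    · intro h i; simpa using h i i.2
  rw [this, Measure.infinitePi_pi _ (fun _ _ => MeasurableSet.singleton _)]
  simp [coin_singleton]
theorem cylinder_inter (σ τ : List Bool) (h : σ.length ≤ τ.length) (hne : (_root_.cylinder σ ∩ _root_.cylinder τ).Nonempty) : _root_.cylinder σ ∩ _root_.cylinder τ = _root_.cylinder τ := by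
  obtain ⟨X, h1, h2⟩ := hne
  rw [_root_.mem_cyl] at h1 h2
  ext Y
  constructor
  · exact fun h => h.2
  · intro hY
    refine ⟨?_, hY⟩
    rw [_root_.mem_cyl] at hY ⊢
    rw [← strPrefix_take Y _ _ h, hY, ← h2, strPrefix_take X _ _ h, h1]
theorem mu_eq_pi : μCantor = Measure.infinitePi (fun _ : ℕ => coin) := by
  refine ext_of_generate_finite (Set.range _root_.cylinder) ?_ ?_ ?_ (by simp)
  · apply le_antisymm
    · unfold MeasurableSpace.pi
      refine iSup_le (fun i => ?_)
      rw [← measurable_iff_comap_le]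
      refine @measurable_to_bool _ (_) _ ?_
      have : (fun X : ℕ → Bool => X i) ⁻¹' {true} = ⋃ σ ∈ {σ : List Bool | σ[i]? = some true}, _root_.cylinder σ := by
        ext X
        simp only [Set.mem_preimage, Set.mem_singleton_iff, Set.mem_iUnion, Set.mem_ofPred_eq, exists_prop]
        constructor
        · intro h
          exact ⟨strPrefix X (i+1), by rw [strPrefix_get _ _ _ (by omega), h], by rw [_root_.mem_cyl]; simp⟩
        · rintro ⟨σ, h1, h2⟩
          rw [_root_.mem_cyl] at h2
          have hi : i < σ.length := by
            obtain ⟨h, _⟩ := List.getElem?_eq_some_iff.1 h1; exact h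
          rw [← h2, strPrefix_get _ _ _ hi] at h1
          simpa using h1
      rw [this]
      exact @MeasurableSet.biUnion _ _ (_) _ _ (Set.to_countable _) (fun σ _ => MeasurableSpace.measurableSet_generateFrom ⟨σ, rfl⟩)
    · apply MeasurableSpace.generateFrom_le
      rintro _ ⟨σ, rfl⟩
      exact cylinder_measurable σ
  · rintro _ ⟨σ, rfl⟩ _ ⟨τ, rfl⟩ hne
    rcases le_total σ.length τ.length with h | h
    · exact ⟨τ, (cylinder_inter σ τ h hne).symm⟩
    · rw [Set.inter_comm] at hne ⊢
      exact ⟨σ, (cylinder_inter τ σ h hne).symm⟩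
  · rintro _ ⟨σ, rfl⟩
    rw [mu_cylinder, pi_cylinder]
/-- real valued measure -/
noncomputable def M (S : Set (ℕ → Bool)) : ℝ := μCantor.real S
/-- The block event. -/
def blockE (len : ℕ → ℕ) (c : ℕ) : Set (ℕ → Bool) := {Y | ∀ i, i < len c → Y (Nat.pair c i) = false}
theorem coord_indep : iIndepFun (fun (i : ℕ) (X : ℕ → Bool) => X i) μCantor := by
  rw [mu_eq_pi]
  exact iIndepFun_infinitePi (X := fun _ b => b) (fun _ => measurable_id)
/-- the coordinates of a block -/
def blockS (len : ℕ → ℕ) (c : ℕ) : Finset ℕ := (Finset.range (len c)).image (Nat.pair c)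
theorem blockE_eq (len c) : blockE len c = Set.pi (blockS len c) (fun _ => {false}) := by
  ext X; simp [blockE, blockS]
theorem blockE_meas (len c) : MeasurableSet (blockE len c) := by
  rw [blockE_eq]; exact MeasurableSet.pi (Finset.countable_toSet _) (fun _ _ => MeasurableSet.singleton _)
theorem mu_blockE (len c) : μCantor (blockE len c) = 2⁻¹ ^ len c := by
  rw [blockE_eq, mu_eq_pi, Measure.infinitePi_pi _ (fun _ _ => MeasurableSet.singleton _)]
  simp only [coin_singleton, Finset.prod_const]
  congr 1
  unfold blockS
  rw [Finset.card_image_of_injective]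
  · simp
  · intro i j h; simpa using h
theorem M_blockE (len c) : M (blockE len c) = (1/2) ^ len c := by
  simp [M, Measure.real, mu_blockE]
theorem indep_blocks (len : ℕ → ℕ) (F : Finset ℕ) : M (⋂ c ∈ F, (blockE len c)ᶜ) = ∏ c ∈ F, (1 - (1/2 : ℝ) ^ len c) := by
  classical
  induction F using Finset.induction_on with
  | empty => simp [M]
  | insert a F ha ih =>
    rw [Finset.prod_insert ha, ← ih, Finset.set_biInter_insert]
    set G := ⋂ c ∈ F, (blockE len c)ᶜ with hG
    have hind := coord_indep.indepFun_finset (F.biUnion (blockS len)) (blockS len a) (by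
      rw [Finset.disjoint_left]
      intro x hx hx'
      simp only [Finset.mem_biUnion, blockS, Finset.mem_image] at hx hx'
      obtain ⟨c, hc, i, _, rfl⟩ := hx
      obtain ⟨j, _, h⟩ := hx'
      rw [Nat.pair_eq_pair] at h
      rw [h.1] at ha; exact ha hc) (fun i => measurable_pi_apply i)
    let G' : Set ((i : F.biUnion (blockS len)) → Bool) := {w | ∀ c ∈ F, ∃ i < len c, ∃ h : Nat.pair c i ∈ F.biUnion (blockS len), w ⟨_, h⟩ = true}
    let E' : Set ((i : blockS len a) → Bool) := {w | ∀ i, w i = false}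
    have hm := hind.measure_inter_preimage_eq_mul G' E' (MeasurableSet.of_discrete) (MeasurableSet.of_discrete)
    have h1 : (fun (X : ℕ → Bool) (i : F.biUnion (blockS len)) => X i) ⁻¹' G' = G := by
      ext X
      simp only [Set.mem_preimage, G', Set.mem_ofPred_eq, hG, Set.mem_iInter, Set.mem_compl_iff, blockE]
      push Not
      refine forall₂_congr (fun c hc => exists_congr fun i => ?_)
      constructor
      · rintro ⟨hi, _, h⟩; exact ⟨hi, by simpa using h⟩
      · rintro ⟨hi, h⟩
        refine ⟨hi, ?_, by simpa using h⟩
        simp only [Finset.mem_biUnion, blockS, Finset.mem_image]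
        exact ⟨c, hc, i, by simpa using hi, rfl⟩
    have h2 : (fun (X : ℕ → Bool) (i : blockS len a) => X i) ⁻¹' E' = blockE len a := by
      ext X
      simp [E', blockE, blockS]
    rw [h1, h2] at hm
    have hm' : M (G ∩ blockE len a) = M G * M (blockE len a) := by
      simp only [M, Measure.real, hm, ENNReal.toReal_mul]
    have h3 : M G = M (G ∩ blockE len a) + M (G \ blockE len a) := by
      exact (measureReal_inter_add_sdiff (blockE_meas len a)).symm
    have h4 : (blockE len a)ᶜ ∩ G = G \ blockE len a := by rw [Set.inter_comm]; rfl
    rw [h4, ← M_blockE]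
    linarith

end PartP2b

section PartP2c

open MeasureTheory
theorem M_nonneg (S) : 0 ≤ M S := measureReal_nonneg
theorem M_mono {S T : Set (ℕ → Bool)} (h : S ⊆ T) : M S ≤ M T := measureReal_mono h
theorem M_le_one (S) : M S ≤ 1 := measureReal_le_one
theorem M_univ : M Set.univ = 1 := by simp [M]
theorem M_union_le (S T : Set (ℕ → Bool)) : M (S ∪ T) ≤ M S + M T := measureReal_union_le S T
theorem M_diff_ge (S T : Set (ℕ → Bool)) : M S - M T ≤ M (S \ T) := by
  have : M S ≤ M (S \ T) + M T := by
    refine le_trans (M_mono ?_) (M_union_le _ _)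
    intro x hx; by_cases h : x ∈ T
    · exact Or.inr h
    · exact Or.inl ⟨hx, h⟩
  linarith
theorem M_inter_add (S : Set (ℕ → Bool)) {T : Set (ℕ → Bool)} (hT : MeasurableSet T) : M (S ∩ T) + M (S \ T) = M S :=
  measureReal_inter_add_sdiff hT
theorem M_compl {S : Set (ℕ → Bool)} (h : MeasurableSet S) : M Sᶜ = 1 - M S := by
  have := M_inter_add Set.univ h
  rw [M_univ, Set.univ_inter] at this
  have h2 : Set.univ \ S = Sᶜ := by ext; simp
  rw [h2] at this; linarith
theorem M_cylinder (σ : List Bool) : M (_root_.cylinder σ) = (1/2) ^ σ.length := by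
  simp [M, Measure.real, mu_cylinder]
theorem M_biUnion_le {ι : Type*} (s : Finset ι) (f : ι → Set (ℕ → Bool)) : M (⋃ i ∈ s, f i) ≤ ∑ i ∈ s, M (f i) :=
  measureReal_biUnion_finset_le s f
theorem M_biUnion {ι : Type*} (s : Finset ι) (f : ι → Set (ℕ → Bool)) (hd : (s : Set ι).PairwiseDisjoint f) (hm : ∀ i ∈ s, MeasurableSet (f i)) :
    M (⋃ i ∈ s, f i) = ∑ i ∈ s, M (f i) := measureReal_biUnion_finset hd hm
theorem M_iUnion_mono_lt {f : ℕ → Set (ℕ → Bool)} (hf : Monotone f) {r : ℝ} (h : r < M (⋃ i, f i)) : ∃ i, r < M (f i) := by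
  have h1 : Filter.Tendsto (fun i => M (f i)) Filter.atTop (nhds (M (⋃ i, f i))) := by
    have := tendsto_measure_iUnion_atTop (μ := μCantor) hf
    exact (ENNReal.tendsto_toReal (measure_ne_top _ _)).comp this
  obtain ⟨i, hi⟩ := (h1.eventually (lt_mem_nhds h)).exists
  exact ⟨i, hi⟩
theorem M_iUnion_le {f : ℕ → Set (ℕ → Bool)} {g : ℕ → ℝ} {r : ℝ} (hg : ∀ i, M (f i) ≤ g i) (hr : ∀ N, ∑ i ∈ Finset.range N, g i ≤ r) :
    M (⋃ i, f i) ≤ r := by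
  by_contra h
  push Not at h
  have e : (⋃ i, f i) = ⋃ n, ⋃ i ∈ Finset.range n, f i := by
    ext x; simp only [Set.mem_iUnion, Finset.mem_range, exists_prop]
    constructor
    · rintro ⟨i, hi⟩; exact ⟨i+1, i, by omega, hi⟩
    · rintro ⟨n, i, _, hi⟩; exact ⟨i, hi⟩
  rw [e] at h
  obtain ⟨n, hn⟩ := M_iUnion_mono_lt (by
    intro a b hab
    apply Set.biUnion_subset_biUnion_left
    intro x; simp only [Finset.mem_coe, Finset.mem_range]
    intro h; exact lt_of_lt_of_le h hab) h
  have := (M_biUnion_le (Finset.range n) f).trans (Finset.sum_le_sum (fun i _ => hg i))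
  linarith [hr n]
theorem cyl_disjoint {σ τ : List Bool} (h : σ.length = τ.length) (hne : σ ≠ τ) : Disjoint (_root_.cylinder σ) (_root_.cylinder τ) := by
  rw [Set.disjoint_left]
  intro X h1 h2
  rw [mem_cyl] at h1 h2
  rw [h, h2] at h1
  exact hne h1.symm
theorem mem_openOf (S : Set (List Bool)) (X : ℕ → Bool) : X ∈ openOf S ↔ ∃ n, strPrefix X n ∈ S := by
  simp only [openOf, Set.mem_iUnion, exists_prop]
  constructor
  · rintro ⟨σ, h, h'⟩
    rw [mem_cyl] at h'
    exact ⟨σ.length, by rw [h']; exact h⟩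
  · rintro ⟨n, h⟩
    exact ⟨_, h, by rw [mem_cyl]; simp⟩
theorem M_level (N : ℕ) (F : Finset (List Bool)) (hF : ∀ ρ ∈ F, ρ.length = N) : M (⋃ ρ ∈ F, _root_.cylinder ρ) = F.card * (1/2) ^ N := by
  rw [M_biUnion F _ _ (fun ρ _ => cylinder_measurable ρ)]
  · rw [Finset.sum_congr rfl (fun ρ hρ => by rw [M_cylinder, hF ρ hρ])]
    simp
  · intro ρ hρ ρ' hρ' hne
    exact cyl_disjoint (by rw [hF _ hρ, hF _ hρ']) hne
theorem finite_len (N : ℕ) : {ρ : List Bool | ρ.length = N}.Finite := List.finite_length_eq Bool N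
theorem lt_M_openOf (V : Set (List Bool)) (r : ℝ) : r < M (openOf V) ↔
    ∃ N, ∃ F : List (List Bool), F.Nodup ∧ (∀ ρ ∈ F, ρ.length = N ∧ ∃ i, i < N + 1 ∧ ρ.take i ∈ V) ∧ r < F.length * (1/2) ^ N := by
  classical
  constructor
  · intro h
    let f : ℕ → Set (ℕ → Bool) := fun N => {X | ∃ i ≤ N, strPrefix X i ∈ V}
    have e : openOf V = ⋃ N, f N := by
      ext X; rw [mem_openOf]; simp only [f, Set.mem_iUnion, Set.mem_ofPred_eq]
      constructor
      · rintro ⟨n, h⟩; exact ⟨n, n, le_rfl, h⟩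
      · rintro ⟨_, n, _, h⟩; exact ⟨n, h⟩
    rw [e] at h
    obtain ⟨N, hN⟩ := M_iUnion_mono_lt (by
      rintro a b hab X ⟨i, hi, h⟩; exact ⟨i, hi.trans hab, h⟩) h
    have hfin : {ρ : List Bool | ρ.length = N ∧ ∃ i, i < N + 1 ∧ ρ.take i ∈ V}.Finite :=
      (finite_len N).subset (fun ρ h => h.1)
    refine ⟨N, hfin.toFinset.toList, Finset.nodup_toList _, ?_, ?_⟩
    · intro ρ hρ; simpa using hρ
    · rw [Finset.length_toList, ← M_level N]
      · refine lt_of_lt_of_le hN (M_mono ?_)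
        rintro X ⟨i, hi, h⟩
        simp only [Set.mem_iUnion, exists_prop]
        refine ⟨strPrefix X N, ?_, by rw [mem_cyl]; simp⟩
        simp only [Set.Finite.mem_toFinset, Set.mem_ofPred_eq]
        exact ⟨by simp, i, by omega, by rwa [strPrefix_take _ _ _ hi]⟩
      · intro ρ hρ; simp at hρ; exact hρ.1
  · rintro ⟨N, F, h1, h2, h3⟩
    refine lt_of_lt_of_le h3 ?_
    have h4 : F.length = F.toFinset.card := (List.toFinset_card_of_nodup h1).symm
    rw [h4, ← M_level N _ (fun ρ hρ => (h2 ρ (by simpa using hρ)).1)]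
    apply M_mono
    intro X hX
    simp only [Set.mem_iUnion, exists_prop] at hX
    obtain ⟨ρ, hρ, hX⟩ := hX
    obtain ⟨h5, i, hi, h6⟩ := h2 ρ (by simpa using hρ)
    rw [mem_openOf]
    rw [mem_cyl] at hX
    refine ⟨i, ?_⟩
    rw [← strPrefix_take X N i (by omega), ← h5, hX]; exact h6
theorem cyl_compl (V : Set (List Bool)) (τ : List Bool) : (openOf V)ᶜ ∩ _root_.cylinder τ = (openOf {ρ | ρ ∈ V ∨ (ρ.length = τ.length ∧ ρ ≠ τ)})ᶜ := by
  ext X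
  simp only [Set.mem_inter_iff, Set.mem_compl_iff, mem_openOf, mem_cyl, Set.mem_ofPred_eq]
  push Not
  constructor
  · rintro ⟨h1, h2⟩ n
    refine ⟨h1 n, fun h => ?_⟩
    simp at h; rw [h, h2]
  · intro h
    exact ⟨fun n => (h n).1, (h τ.length).2 (by simp)⟩
section
variable {α : Type*} [Primcodable α]
/-- Effectivity of upper bounds for measures of `Π⁰₁` classes. -/
theorem sig_meas {V : α → List Bool → Prop} (hV : Sig emptyOracle (fun c : α × List Bool => V c.1 c.2)) :
    Sig emptyOracle (fun c : α × List Bool × ℕ => M ((openOf {ρ | V c.1 ρ})ᶜ ∩ _root_.cylinder c.2.1) < (1/2) ^ c.2.2) := by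
  have h1 : Sig emptyOracle (fun c : α × List Bool × ℕ => ∃ N, ∃ F : List (List Bool), F.Nodup ∧ (∀ ρ, ρ ∈ F → (ρ.length = N ∧ ∃ i, i < N + 1 ∧
      (V c.1 (ρ.take i) ∨ ((ρ.take i).length = c.2.1.length ∧ ρ.take i ≠ c.2.1)))) ∧ 2 ^ c.2.2 * 2 ^ N < 2 ^ N + 2 ^ c.2.2 * F.length) := by
    apply Sig.ex
    apply Sig.ex
    apply Sig.and (Sig.nodup (by fun_prop))
    apply Sig.and
    · apply Sig.lall (by fun_prop)
      apply Sig.and (Sig.eq (by fun_prop) (by fun_prop))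
      apply Sig.bex (by fun_prop)
      apply Sig.or
      · exact hV.comp (f := fun c : ((((α × List Bool × ℕ) × ℕ) × List (List Bool)) × List Bool) × ℕ => (c.1.1.1.1.1, c.1.2.take c.2)) (by fun_prop)
      · exact Sig.and (Sig.eq (by fun_prop) (by fun_prop)) (Sig.ne (by fun_prop) (by fun_prop))
    · exact Sig.lt (by fun_prop) (by fun_prop)
  refine h1.of_iff ?_
  rintro ⟨a, τ, n⟩
  simp only
  rw [cyl_compl, M_compl (openOf_measurable _)]
  have h2 : 1 - M (openOf {ρ | ρ ∈ {ρ | V a ρ} ∨ ρ.length = τ.length ∧ ρ ≠ τ}) < (1/2) ^ n ↔ 1 - (1/2) ^ n < M (openOf {ρ | ρ ∈ {ρ | V a ρ} ∨ ρ.length = τ.length ∧ ρ ≠ τ}) := by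
    constructor <;> intro h <;> linarith
  rw [h2, lt_M_openOf]
  refine exists_congr fun N => exists_congr fun F => and_congr Iff.rfl (and_congr Iff.rfl ?_)
  have hn : (0:ℝ) < 2 ^ n := by positivity
  have hN : (0:ℝ) < 2 ^ N := by positivity
  rw [← Nat.cast_lt (α := ℝ)]
  push_cast
  rw [one_div, inv_pow, inv_pow, ← mul_lt_mul_iff_right₀ (mul_pos hn hN)]
  have e1 : (2:ℝ) ^ n * 2 ^ N * (1 - (2 ^ n)⁻¹) = 2 ^ n * 2 ^ N - 2 ^ N := by field_simp
  have e2 : (2:ℝ) ^ n * 2 ^ N * (F.length * (2 ^ N)⁻¹) = 2 ^ n * F.length := by field_simp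
  rw [e1, e2]
  constructor <;> intro h <;> linarith
end
/-- complement of a clopen set, as a set of strings -/
def coClop (K : List Bool → Prop) (s : ℕ) : Set (List Bool) := {ρ | ρ.length = s ∧ ∀ i, i < s + 1 → ¬ K (ρ.take i)}
theorem coClop_compl (K : List Bool → Prop) (s : ℕ) : (openOf (coClop K s))ᶜ = openOf {ρ | K ρ ∧ ρ.length ≤ s} := by
  ext X
  simp only [Set.mem_compl_iff, mem_openOf, coClop, Set.mem_ofPred_eq, strPrefix_length]
  constructor
  · intro h
    by_contra h'
    push Not at h'
    refine h ⟨s, rfl, fun i hi hk => ?_⟩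
    rw [strPrefix_take _ _ _ (by omega)] at hk
    have := h' i hk; omega
  · rintro ⟨n, h1, h2⟩ ⟨m, rfl, h3⟩
    apply h3 n (by omega)
    rwa [strPrefix_take _ _ _ h2]

end PartP2c

section PartP3

open Nat.Partrec (Code)
theorem exists_code_fun {Q : ℕ → ℕ → Prop} (h : Sig emptyOracle (fun c : ℕ × ℕ => Q c.1 c.2)) (hf : ∀ n x y, Q n x → Q n y → x = y) :
    ∃ e, ∀ n x, x ∈ (Denumerable.ofNat Code e).eval n ↔ Q n x := by
  obtain ⟨g, hg, hp, -⟩ := h.kernel0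
  let k : ℕ → ℕ →. Bool := fun n w => (Part.some (g ((n, w.unpair.1), w.unpair.2)) : Part Bool)
  have h1 : Partrec (fun n : ℕ => (Nat.rfind (k n)).map (fun w => w.unpair.1)) := by
    apply Partrec.map
    · apply Partrec.rfind
      exact Computable.partrec (hg.comp (g := fun c : ℕ × ℕ => ((c.1, c.2.unpair.1), c.2.unpair.2)) (by fun_prop))
    · unfold Computable₂; fun_prop
  obtain ⟨c, hc⟩ := Code.exists_code.1 (Partrec.nat_iff.1 h1)
  refine ⟨Encodable.encode c, fun n x => ?_⟩
  rw [Denumerable.ofNat_encode, hc]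
  have h2 : ∀ w, w ∈ Nat.rfind (k n) → Q n w.unpair.1 := by
    intro w hw
    have := (Nat.mem_rfind.1 hw).1
    simp [k] at this
    exact (hp (n, w.unpair.1)).2 ⟨_, this⟩
  constructor
  · intro hx
    obtain ⟨w, hw, rfl⟩ := (Part.mem_map_iff _).1 hx
    exact h2 w hw
  · intro hx
    obtain ⟨s, hs⟩ := (hp (n, x)).1 hx
    have hd : (Nat.rfind (k n)).Dom := by
      rw [Nat.rfind_dom]
      refine ⟨Nat.pair x s, ?_, fun _ => by simp [k]⟩
      simp only [k, Nat.unpair_pair]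
      rw [hs]; simp
    obtain ⟨w, hw⟩ := Part.dom_iff_mem.1 hd
    exact (Part.mem_map_iff _).2 ⟨w, hw, hf _ _ _ (h2 w hw) hx⟩
theorem valS_append (σ ρ : List Bool) : valS (σ ++ ρ) = valS σ * 2 ^ ρ.length + valS ρ := by
  induction ρ using List.reverseRecOn with
  | nil => simp [valS]
  | append_singleton l b ih =>
    rw [← List.append_assoc, valS_snoc, valS_snoc, ih]; simp [pow_succ]; ring
theorem valS_surj (l v : ℕ) (h : v < 2 ^ l) : ∃ σ : List Bool, σ.length = l ∧ valS σ = v := by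
  induction l generalizing v with
  | zero => exact ⟨[], rfl, by simp at h; simp [valS, h]⟩
  | succ l ih =>
    obtain ⟨σ, h1, h2⟩ := ih (v / 2) (by rw [pow_succ] at h; omega)
    refine ⟨σ ++ [decide (v % 2 = 1)], by simp [h1], ?_⟩
    rw [valS_snoc, h2]
    by_cases hv : v % 2 = 1
    · simp [hv, natOfBool]; omega
    · simp [hv, natOfBool]; omega
theorem valS_inj {σ τ : List Bool} (hl : σ.length = τ.length) (hv : valS σ = valS τ) : σ = τ := by
  induction σ using List.reverseRecOn generalizing τ with
  | nil => simp at hl; exact (List.length_eq_zero_iff.1 hl.symm).symm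
  | append_singleton l b ih =>
    rcases List.eq_nil_or_concat τ with rfl | ⟨l', b', rfl⟩
    · simp at hl
    · simp at hl hv ⊢
      rw [valS_snoc, valS_snoc] at hv
      have hb : b = b' := by revert hv; cases b <;> cases b' <;> simp [natOfBool] <;> omega
      subst hb
      exact ⟨ih hl (by omega), rfl⟩
theorem comp_valS {α} [Primcodable α] {f : α → List Bool} (hf : Computable f) : Computable (fun a => valS (f a)) := by
  have : Primrec valS := by
    unfold valS
    apply Primrec.list_foldl (h := fun _ p => 2 * p.1 + natOfBool p.2) Primrec.id (Primrec.const 0)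
    apply Primrec.nat_add.comp
    · exact Primrec.nat_mul.comp (Primrec.const 2) (Primrec.fst.comp Primrec.snd)
    · exact Primrec.cond (Primrec.snd.comp Primrec.snd) (Primrec.const 1) (Primrec.const 0)
  exact this.to_comp.comp hf
/-- Cumulative numerators. -/
def cumN (act : ℕ → Bool) (i : ℕ) : ℕ :=
  Nat.rec 0 (fun i N => bif act i then 2 * N + 2 ^ (i + 1 - i.unpair.1.unpair.2) else 2 * N) i
theorem kk_le (i : ℕ) : i.unpair.1.unpair.2 ≤ i := (Nat.unpair_right_le _).trans (Nat.unpair_left_le _)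
theorem cumN_succ (act : ℕ → Bool) (c0 i : ℕ) : (cumN act (i+1) : ℝ) / 2 ^ (c0 + (i+1)) =
    (cumN act i : ℝ) / 2 ^ (c0 + i) + if act i = true then (1/2 : ℝ) ^ (i.unpair.1.unpair.2 + c0) else 0 := by
  have e : cumN act (i+1) = bif act i then 2 * cumN act i + 2 ^ (i + 1 - i.unpair.1.unpair.2) else 2 * cumN act i := rfl
  have hk := kk_le i
  rw [e]
  generalize i.unpair.1.unpair.2 = k at *
  cases act i
  · simp [← add_assoc, pow_succ]; field_simp
  · simp only [cond_true, if_true]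
    push_cast
    rw [← add_assoc, pow_succ 2 (c0 + i), add_div]
    congr 1
    · field_simp
    · obtain ⟨j, rfl⟩ := Nat.exists_eq_add_of_le hk
      have : k + j + 1 - k = j + 1 := by omega
      rw [this, one_div, inv_pow]; field_simp; ring
theorem cumN_sum (act : ℕ → Bool) (c0 i : ℕ) : (cumN act i : ℝ) / 2 ^ (c0 + i) = ∑ j ∈ (Finset.range i).filter (fun j => act j = true), (1/2 : ℝ) ^ (j.unpair.1.unpair.2 + c0) := by
  rw [Finset.sum_filter]
  induction i with
  | zero => simp [cumN]
  | succ i ih => rw [cumN_succ, Finset.sum_range_succ, ih]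
theorem comp_cumN {act : ℕ → Bool} (h : Computable act) : Computable (cumN act) := by
  refine (Computable.nat_rec (f := fun n : ℕ => n) (g := fun _ => 0) (h := fun (_ : ℕ) q => bif act q.1 then 2 * q.2 + 2 ^ (q.1 + 1 - q.1.unpair.1.unpair.2) else 2 * q.2) (by fun_prop) (by fun_prop) ?_).of_eq (fun n => rfl)
  unfold Computable₂; fun_prop
/-- Kraft–Chaitin. -/
theorem kraft_chaitin {V : ℕ → ℕ → Prop} (hV : Sig emptyOracle (fun c : ℕ × ℕ => V c.1 c.2)) (c0 : ℕ)
    (hb : ∀ F : Finset (ℕ × ℕ), (∀ p ∈ F, V p.1 p.2) → ∑ p ∈ F, (1/2 : ℝ) ^ p.2 ≤ 2 ^ c0) :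
    ∃ c, ∀ x k, V x k → Kcpx x ≤ k + c := by
  classical
  obtain ⟨g, hg, hp, hm⟩ := hV.kernel0
  let act : ℕ → Bool := fun i => g (i.unpair.1.unpair, i.unpair.2) && !(bexb i.unpair.2 (fun w => g (i.unpair.1.unpair, w)))
  have hact : ∀ i, act i = true ↔ g (i.unpair.1.unpair, i.unpair.2) = true ∧ ∀ w < i.unpair.2, ¬ g (i.unpair.1.unpair, w) = true := by
    intro i
    simp only [act, Bool.and_eq_true, Bool.not_eq_true', ← Bool.not_eq_true, bexb_iff]
    push Not; rfl
  have cact : Computable act := by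
    apply Comp.band
    · exact hg.comp (g := fun i : ℕ => (i.unpair.1.unpair, i.unpair.2)) (by fun_prop)
    · apply Comp.bnot
      apply Comp.bexb (by fun_prop)
      exact hg.comp (g := fun c : ℕ × ℕ => (c.1.unpair.1.unpair, c.2)) (by fun_prop)
  have cN := comp_cumN cact
  have hinj : ∀ i j, act i = true → act j = true → i.unpair.1.unpair = j.unpair.1.unpair → i = j := by
    intro i j hi hj h
    rw [hact] at hi hj
    have h1 : i.unpair.2 = j.unpair.2 := by
      rcases lt_trichotomy i.unpair.2 j.unpair.2 with h2 | h2 | h2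
      · exact absurd (h ▸ hi.1) (hj.2 _ h2)
      · exact h2
      · exact absurd (h ▸ hj.1) (hi.2 _ h2)
    have h2 : i.unpair.1 = j.unpair.1 := by
      rw [← Nat.pair_unpair i.unpair.1, ← Nat.pair_unpair j.unpair.1, h]
    rw [← Nat.pair_unpair i, ← Nat.pair_unpair j, h1, h2]
  have hex : ∀ x k, V x k → ∃ i, act i = true ∧ i.unpair.1.unpair = (x, k) := by
    intro x k h
    have h1 := (hp (x, k)).1 h
    refine ⟨Nat.pair (Nat.pair x k) (Nat.find h1), ?_, by simp⟩
    rw [hact]; simp only [Nat.unpair_pair]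
    exact ⟨Nat.find_spec h1, fun w hw => Nat.find_min h1 hw⟩
  let S : ℕ → ℝ := fun i => (cumN act i : ℝ) / 2 ^ (c0 + i)
  have hS1 : ∀ i, S i ≤ 1 := by
    intro i
    have h1 := hb (((Finset.range i).filter (fun j => act j = true)).image (fun j => j.unpair.1.unpair)) (by
      intro p hp'
      simp only [Finset.mem_image, Finset.mem_filter] at hp'
      obtain ⟨j, ⟨_, h2⟩, rfl⟩ := hp'
      rw [hact] at h2
      exact (hp _).2 ⟨_, h2.1⟩)
    rw [Finset.sum_image (by
      intro a ha b hb' h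
      simp only [Finset.coe_filter, Set.mem_ofPred_eq] at ha hb'
      exact hinj _ _ ha.2 hb'.2 h)] at h1
    simp only [S]
    rw [cumN_sum]
    simp only [pow_add]
    rw [← Finset.sum_mul]
    calc _ ≤ (2:ℝ) ^ c0 * (1/2) ^ c0 := by gcongr
      _ = 1 := by rw [← mul_pow]; norm_num
  have hSs : ∀ i, S (i+1) = S i + if act i = true then (1/2 : ℝ) ^ (i.unpair.1.unpair.2 + c0) else 0 := fun i => cumN_succ act c0 i
  have hSm : Monotone S := by
    apply monotone_nat_of_le_succ
    intro i; rw [hSs]; split_ifs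
    · simp
    · simp
  -- the coding relation
  let R : ℕ → List Bool → Prop := fun i σ => act i = true ∧ σ.length = i.unpair.1.unpair.2 + c0 + 1 ∧
     cumN act i * 2 ^ σ.length ≤ valS σ * 2 ^ (c0 + i) ∧ valS σ * 2 ^ (c0 + i) < cumN act i * 2 ^ σ.length + 2 ^ (c0 + i)
  have hR : ∀ i σ, R i σ → S i ≤ (valS σ : ℝ) / 2 ^ σ.length ∧ ((valS σ : ℝ) + 1) / 2 ^ σ.length ≤ S (i+1) := by
    rintro i σ ⟨h1, h2, h3, h4⟩
    have p1 : (0:ℝ) < 2 ^ (c0 + i) := by positivity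
    have p2 : (0:ℝ) < 2 ^ σ.length := by positivity
    constructor
    · simp only [S]
      rw [div_le_div_iff₀ p1 p2]; exact_mod_cast h3
    · rw [hSs, if_pos h1]
      have h5 : (1/2 : ℝ) ^ (i.unpair.1.unpair.2 + c0) = 2 / 2 ^ σ.length := by
        rw [h2, pow_succ, one_div, inv_pow]; field_simp
      rw [h5, div_le_iff₀ p2, add_mul, div_mul_cancel₀ _ p2.ne']
      have h6 : (valS σ : ℝ) * 2 ^ (c0 + i) < cumN act i * 2 ^ σ.length + 2 ^ (c0 + i) := by exact_mod_cast h4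
      have h7 : (valS σ : ℝ) < S i * 2 ^ σ.length + 1 := by
        have : S i * 2 ^ σ.length + 1 = (cumN act i * 2 ^ σ.length + 2 ^ (c0 + i)) / 2 ^ (c0 + i) := by
          simp only [S]; field_simp
        rw [this, lt_div_iff₀ p1]; exact h6
      linarith
  have hRp : ∀ i j σ τ, R i σ → R j τ → σ <+: τ → i = j := by
    rintro i j σ τ hi hj ⟨ρ, rfl⟩
    have a1 := hR _ _ hi
    have a2 := hR _ _ hj
    have p2 : (0:ℝ) < 2 ^ σ.length := by positivity
    have p3 : (0:ℝ) < 2 ^ ρ.length := by positivity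
    have h4 : (valS ρ : ℝ) < 2 ^ ρ.length := by exact_mod_cast valS_lt ρ
    have h0 : (0:ℝ) ≤ valS ρ := by positivity
    have e : (valS (σ ++ ρ) : ℝ) / 2 ^ (σ ++ ρ).length = (valS σ + valS ρ / 2 ^ ρ.length) / 2 ^ σ.length := by
      rw [valS_append, List.length_append, pow_add]; push_cast; field_simp
    have b1 : (valS σ : ℝ) / 2 ^ σ.length ≤ (valS (σ ++ ρ) : ℝ) / 2 ^ (σ ++ ρ).length := by
      rw [e]; gcongr; simp; positivity
    have b2 : (valS (σ ++ ρ) : ℝ) / 2 ^ (σ ++ ρ).length < ((valS σ : ℝ) + 1) / 2 ^ σ.length := by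
      rw [e]; gcongr; rw [div_lt_one p3]; exact h4
    have b3 : (valS (σ ++ ρ) : ℝ) / 2 ^ (σ ++ ρ).length < (valS (σ ++ ρ) + 1 : ℝ) / 2 ^ (σ ++ ρ).length := by
      gcongr; simp
    rcases lt_trichotomy i j with h | h | h
    · have := hSm (show i + 1 ≤ j from h)
      linarith [a1.2, a2.1]
    · exact h
    · have := hSm (show j + 1 ≤ i from h)
      linarith [a1.1, a2.2]
  let Q : ℕ → ℕ → Prop := fun n x => ∃ σ : List Bool, n = Encodable.encode σ ∧ ∃ i, R i σ ∧ x = i.unpair.1.unpair.1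
  have sR : Sig emptyOracle (fun c : ℕ × List Bool => R c.1 c.2) := by
    have := comp_valS (α := ℕ × List Bool) (f := fun c => c.2) (by fun_prop)
    apply Sig.and
    · exact Sig.bool (by fun_prop)
    apply Sig.and
    · exact Sig.eq (by fun_prop) (by fun_prop)
    apply Sig.and
    · exact Sig.le (by fun_prop) (by fun_prop)
    · exact Sig.lt (by fun_prop) (by fun_prop)
  have sQ : Sig emptyOracle (fun c : ℕ × ℕ => Q c.1 c.2) := by
    apply Sig.ex
    apply Sig.and (Sig.eq (by fun_prop) (by fun_prop))
    apply Sig.ex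
    apply Sig.and
    · exact sR.comp (f := fun c : ((ℕ × ℕ) × List Bool) × ℕ => (c.2, c.1.2)) (by fun_prop)
    · exact Sig.eq (by fun_prop) (by fun_prop)
  obtain ⟨e, he⟩ := exists_code_fun sQ (by
    rintro n x y ⟨σ, rfl, i, h1, rfl⟩ ⟨τ, h2, j, h3, rfl⟩
    have := Encodable.encode_injective h2
    subst this
    rw [hRp i j σ σ h1 h3 (List.prefix_refl _)])
  have hpf : PrefixFreeMachine e := by
    intro σ hσ τ hτ hpre
    simp only [machineDom, Set.mem_ofPred_eq, Part.dom_iff_mem] at hσ hτ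
    obtain ⟨x, hx⟩ := hσ
    obtain ⟨y, hy⟩ := hτ
    rw [he] at hx hy
    obtain ⟨σ', h1, i, h2, _⟩ := hx
    obtain ⟨τ', h3, j, h4, _⟩ := hy
    have h1 := Encodable.encode_injective h1
    have h3 := Encodable.encode_injective h3
    subst h1; subst h3
    have := hRp i j _ _ h2 h4 hpre
    subst this
    exact hpre.eq_of_length (by rw [h2.2.1, h4.2.1])
  refine ⟨c0 + 1 + 2 * e + 2, fun x k hxk => ?_⟩
  obtain ⟨i, hi, hik⟩ := hex x k hxk
  have hk : i.unpair.1.unpair.2 = k := by rw [hik]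
  have hx : i.unpair.1.unpair.1 = x := by rw [hik]
  obtain ⟨σ, hσ⟩ : ∃ σ, R i σ := by
    set l := k + c0 + 1 with hl
    let v := (cumN act i * 2 ^ l + (2 ^ (c0 + i) - 1)) / 2 ^ (c0 + i)
    have p1 : 0 < 2 ^ (c0 + i) := by positivity
    have v1 : cumN act i * 2 ^ l ≤ v * 2 ^ (c0 + i) := by
      have := Nat.lt_div_mul_add (a := cumN act i * 2 ^ l + (2 ^ (c0 + i) - 1)) p1
      simp only [v]; omega
    have v2 : v * 2 ^ (c0 + i) < cumN act i * 2 ^ l + 2 ^ (c0 + i) := by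
      have := Nat.div_mul_le_self (cumN act i * 2 ^ l + (2 ^ (c0 + i) - 1)) (2 ^ (c0 + i))
      simp only [v]; omega
    have hlt : v < 2 ^ l := by
      have h1 := hS1 (i+1)
      rw [hSs, if_pos hi, hk] at h1
      have q1 : (0:ℝ) < 2 ^ (c0 + i) := by positivity
      have q2 : (0:ℝ) < 2 ^ l := by positivity
      have h5 : (1/2 : ℝ) ^ (k + c0) = 2 / 2 ^ l := by
        rw [hl, pow_succ, one_div, inv_pow]; field_simp
      have h6 : (v : ℝ) * 2 ^ (c0 + i) < cumN act i * 2 ^ l + 2 ^ (c0 + i) := by exact_mod_cast v2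
      have h7 : (v : ℝ) < S i * 2 ^ l + 1 := by
        have : S i * 2 ^ l + 1 = (cumN act i * 2 ^ l + 2 ^ (c0 + i)) / 2 ^ (c0 + i) := by
          simp only [S]; field_simp
        rw [this, lt_div_iff₀ q1]; exact h6
      have h8 : S i * 2 ^ l + 2 ≤ 2 ^ l := by
        rw [h5] at h1
        have := mul_le_mul_of_nonneg_right h1 q2.le
        rw [add_mul, div_mul_cancel₀ _ q2.ne', one_mul] at this
        exact this
      have : (v : ℝ) < 2 ^ l := by linarith
      exact_mod_cast this
    obtain ⟨σ, s1, s2⟩ := valS_surj l v hlt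
    refine ⟨σ, hi, by rw [s1, hk], ?_, ?_⟩
    · rw [s1, s2]; exact v1
    · rw [s1, s2]; exact v2
  apply Nat.sInf_le
  refine ⟨e, σ, hpf, (he _ _).2 ⟨σ, rfl, i, hσ, hx.symm⟩, ?_⟩
  rw [hσ.2.1, hk]; ring

end PartP3

section PartP4a

open Nat.Partrec (Code)
@[fun_prop] theorem comp_replicate {α} [Primcodable α] {f : α → ℕ} (hf : Computable f) : Computable (fun a => List.replicate (f a) true) := by
  refine (Computable.nat_rec (f := f) (g := fun _ => ([] : List Bool)) (h := fun _ q => true :: q.2) hf (by fun_prop) ?_).of_eq ?_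
  · unfold Computable₂; fun_prop
  · intro a; induction f a with
    | zero => rfl
    | succ n ih => simp only at ih ⊢; rw [ih]; rfl
/-- Decode a string. -/
def stO (i : ℕ) : List Bool := (Encodable.decode i : Option (List Bool)).getD []
theorem stO_enc (σ : List Bool) : stO (Encodable.encode σ) = σ := by simp [stO]
@[fun_prop] theorem comp_stO {α} [Primcodable α] {f : α → ℕ} (hf : Computable f) : Computable (fun a => stO (f a)) :=
  Computable.option_getD (f := fun a => (Encodable.decode (f a) : Option (List Bool))) (g := fun _ => []) (by fun_prop) (by fun_prop)
/-- evaluation, `e`th code -/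
def evn (s e i : ℕ) : Option ℕ := Code.evaln s (Denumerable.ofNat Code e) i
/-- The machine looks prefix-free at stage `s`. -/
def PFs (e s : ℕ) : Prop := ∀ i, i < s → ∀ j, j < s → ((evn s e i).isSome = true ∧ (evn s e j).isSome = true ∧
  Encodable.encode (stO i) = i ∧ Encodable.encode (stO j) = j ∧ stO i = (stO j).take (stO i).length) → stO i = stO j
def tE (t : ℕ) : ℕ := t.unpair.1
def tS (t : ℕ) : ℕ := t.unpair.2.unpair.1
def mm (t : ℕ) : ℕ := t.unpair.2.unpair.2.unpair.1
def tN (t : ℕ) : ℕ := t.unpair.2.unpair.2.unpair.2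
def km (t : ℕ) : ℕ := (stO (tS t)).length + 2 * tE t + 2
/-- Active indices. -/
def act (t : ℕ) : Prop := Encodable.encode (stO (tS t)) = tS t ∧
  evn (tN t) (tE t) (tS t) = some (Encodable.encode (List.replicate (mm t) true)) ∧
  (∀ s, s < tN t → evn s (tE t) (tS t) = none) ∧ PFs (tE t) (tN t)
theorem mm_le (t : ℕ) : mm t ≤ t :=
  (Nat.unpair_left_le _).trans ((Nat.unpair_right_le _).trans (Nat.unpair_right_le _))
section
variable {α : Type*} [Primcodable α] {f g h : α → ℕ}
@[fun_prop] theorem comp_tE (hf : Computable f) : Computable (fun a => tE (f a)) := by unfold tE; fun_prop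
@[fun_prop] theorem comp_tS (hf : Computable f) : Computable (fun a => tS (f a)) := by unfold tS; fun_prop
@[fun_prop] theorem comp_tN (hf : Computable f) : Computable (fun a => tN (f a)) := by unfold tN; fun_prop
@[fun_prop] theorem comp_mm (hf : Computable f) : Computable (fun a => mm (f a)) := by unfold mm; fun_prop
@[fun_prop] theorem comp_km (hf : Computable f) : Computable (fun a => km (f a)) := by unfold km; fun_prop
@[fun_prop] theorem comp_evn (hf : Computable f) (hg : Computable g) (hh : Computable h) : Computable (fun a => evn (f a) (g a) (h a)) := by unfold evn; fun_prop
theorem del_PFs {X} (hf : Computable f) (hg : Computable g) : Del X (fun a => PFs (f a) (g a)) := by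
  unfold PFs
  apply Del.ball hg
  apply Del.ball (by fun_prop)
  apply Del.imp
  · apply Del.and (Del.eq (by fun_prop) (by fun_prop))
    apply Del.and (Del.eq (by fun_prop) (by fun_prop))
    apply Del.and (Del.eq (by fun_prop) (by fun_prop))
    apply Del.and (Del.eq (by fun_prop) (by fun_prop))
    exact Del.eq (by fun_prop) (by fun_prop)
  · exact Del.eq (by fun_prop) (by fun_prop)
theorem del_act {X} (hf : Computable f) : Del X (fun a => act (f a)) := by
  unfold act
  apply Del.and (Del.eq (by fun_prop) (by fun_prop))
  apply Del.and (Del.eq (by fun_prop) (by fun_prop))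
  apply Del.and
  · apply Del.ball (by fun_prop)
    exact Del.eq (by fun_prop) (by fun_prop)
  · exact del_PFs (by fun_prop) (by fun_prop)
end
theorem evn_mono {s t e i : ℕ} (h : s ≤ t) {x} (hx : evn s e i = some x) : evn t e i = some x :=
  Code.evaln_mono h hx
theorem act_inj {t u : ℕ} (ht : act t) (hu : act u) (he : tE t = tE u) (hs : tS t = tS u) : t = u := by
  have key : tN t = tN u := by
    rcases lt_trichotomy (tN t) (tN u) with h | h | h
    · have := hu.2.2.1 _ h; rw [← he, ← hs, ht.2.1] at this; simp at this
    · exact h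
    · have := ht.2.2.1 _ h; rw [he, hs, hu.2.1] at this; simp at this
  have k2 : mm t = mm u := by
    have h1 := ht.2.1
    rw [key, he, hs, hu.2.1] at h1
    have := congrArg List.length (Encodable.encode_injective (Option.some.inj h1))
    simpa using this.symm
  have e1 : ∀ t, t = Nat.pair (tE t) (Nat.pair (tS t) (Nat.pair (mm t) (tN t))) := by
    intro t; simp [tE, tS, mm, tN]
  rw [e1 t, e1 u, key, k2, he, hs]
theorem act_pf {t u : ℕ} (ht : act t) (hu : act u) (he : tE t = tE u)
    (hp : stO (tS t) = (stO (tS u)).take (stO (tS t)).length) : t = u := by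
  apply act_inj ht hu he
  have aux : ∀ s, PFs (tE t) s → tN t ≤ s → tN u ≤ s → tS t = tS u := by
    intro s hs h1 h2
    have e1 := evn_mono h1 ht.2.1
    have e2 := evn_mono h2 hu.2.1
    rw [← he] at e2
    have := hs (tS t) (Code.evaln_bound e1) (tS u) (Code.evaln_bound e2) ⟨by rw [e1]; rfl, by rw [e2]; rfl, ht.1, hu.1, hp⟩
    rw [← ht.1, ← hu.1, this]
  rcases le_total (tN t) (tN u) with h | h
  · exact aux _ (he ▸ hu.2.2.2) h le_rfl
  · exact aux _ ht.2.2.2 le_rfl h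
theorem act_kraft_e (e : ℕ) (F : Finset ℕ) (hF : ∀ t ∈ F, act t ∧ tE t = e) : ∑ t ∈ F, (1/2 : ℝ) ^ (stO (tS t)).length ≤ 1 := by
  rw [← Finset.sum_congr rfl (fun t _ => M_cylinder (stO (tS t))), ← M_biUnion F (fun t => _root_.cylinder (stO (tS t)))]
  · exact M_le_one _
  · intro t ht u hu hne
    show Disjoint _ _
    rw [Set.disjoint_left]
    intro X h1 h2
    rw [mem_cyl] at h1 h2
    apply hne
    have ht' := hF t ht; have hu' := hF u hu
    rcases le_total (stO (tS t)).length (stO (tS u)).length with h | h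
    · apply act_pf ht'.1 hu'.1 (ht'.2.trans hu'.2.symm)
      rw [← h2, strPrefix_take _ _ _ h, h1]
    · symm; apply act_pf hu'.1 ht'.1 (hu'.2.trans ht'.2.symm)
      rw [← h1, strPrefix_take _ _ _ h, h2]
  · exact fun t _ => cylinder_measurable _
theorem act_kraft (F : Finset ℕ) (hF : ∀ t ∈ F, act t) : ∑ t ∈ F, (1/2 : ℝ) ^ km t ≤ 1 := by
  classical
  rw [← Finset.sum_fiberwise_of_maps_to (t := F.image tE) (g := tE) (fun t ht => Finset.mem_image_of_mem _ ht)]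
  have h1 : ∀ e ∈ F.image tE, ∑ t ∈ F.filter (fun t => tE t = e), (1/2 : ℝ) ^ km t ≤ (1/2)^(e+1) := by
    intro e _
    have h2 : ∀ t ∈ F.filter (fun t => tE t = e), (1/2 : ℝ) ^ km t ≤ (1/2)^(e+1) * (1/2 : ℝ) ^ (stO (tS t)).length := by
      intro t ht
      rw [← pow_add]
      apply pow_le_pow_of_le_one (by norm_num) (by norm_num)
      have := (Finset.mem_filter.1 ht).2
      unfold km; omega
    refine (Finset.sum_le_sum h2).trans ?_
    rw [← Finset.mul_sum]
    have := act_kraft_e e (F.filter (fun t => tE t = e)) (fun t ht => ⟨hF t (Finset.mem_filter.1 ht).1, (Finset.mem_filter.1 ht).2⟩)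
    have p : (0:ℝ) ≤ (1/2)^(e+1) := by positivity
    nlinarith
  refine (Finset.sum_le_sum h1).trans ?_
  obtain ⟨N, hN⟩ := (F.image tE).exists_nat_subset_range
  refine (Finset.sum_le_sum_of_subset_of_nonneg hN (fun _ _ _ => by positivity)).trans ?_
  have : ∀ N : ℕ, ∑ e ∈ Finset.range N, (1/2 : ℝ)^(e+1) = 1 - (1/2)^N := by
    intro N; induction N with
    | zero => simp
    | succ n ih => rw [Finset.sum_range_succ, ih, pow_succ]; ring
  rw [this]
  have p : (0:ℝ) ≤ (1/2)^N := by positivity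
  linarith
theorem act_pfm {e : ℕ} (h : PrefixFreeMachine e) (s : ℕ) : PFs e s := by
  rintro i - j - ⟨h1, h2, h3, h4, h5⟩
  have aux : ∀ i, (evn s e i).isSome = true → Encodable.encode (stO i) = i → stO i ∈ machineDom e := by
    intro i hi h3
    obtain ⟨x, hx⟩ := Option.isSome_iff_exists.1 hi
    show ((Denumerable.ofNat Nat.Partrec.Code e).eval (Encodable.encode (stO i))).Dom
    rw [h3, Part.dom_iff_mem]
    exact ⟨x, Code.evaln_sound hx⟩
  exact h _ (aux i h1 h3) _ (aux j h2 h4) (by rw [h5]; exact ⟨_, List.take_append_drop _ _⟩)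
theorem exists_act (m : ℕ) : ∃ t, act t ∧ mm t = m ∧ km t = KofNat m := by
  classical
  have hne : {k | ∃ e, ∃ σ : List Bool, PrefixFreeMachine e ∧
    (Encodable.encode (List.replicate m true)) ∈ (Denumerable.ofNat Nat.Partrec.Code e).eval (Encodable.encode σ) ∧
    k = σ.length + 2 * e + 2}.Nonempty := by
    obtain ⟨e, he⟩ := exists_code_fun (Q := fun n x => n = Encodable.encode ([] : List Bool) ∧ x = Encodable.encode (List.replicate m true))
      ((Sig.eq (by fun_prop) (by fun_prop)).and (Sig.eq (by fun_prop) (by fun_prop))) (fun n x y hx hy => hx.2.trans hy.2.symm)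
    refine ⟨_, e, [], ?_, (he _ _).2 ⟨rfl, rfl⟩, rfl⟩
    have : ∀ σ ∈ machineDom e, σ = [] := by
      intro σ hσ
      obtain ⟨x, hx⟩ := Part.dom_iff_mem.1 hσ
      exact Encodable.encode_injective ((he _ _).1 hx).1
    intro σ hσ τ hτ _
    rw [this σ hσ, this τ hτ]
  obtain ⟨e, σ, hpf, hx, hk⟩ := Nat.sInf_mem hne
  have hx' : ∃ s, evn s e (Encodable.encode σ) = some (Encodable.encode (List.replicate m true)) := Code.evaln_complete.1 hx
  have hs := Nat.find_spec hx'
  have hmin := fun s (h : s < Nat.find hx') => Nat.find_min hx' h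
  generalize Nat.find hx' = s at hs hmin
  have a1 : tE (Nat.pair e (Nat.pair (Encodable.encode σ) (Nat.pair m s))) = e := by simp [tE]
  have a2 : tS (Nat.pair e (Nat.pair (Encodable.encode σ) (Nat.pair m s))) = Encodable.encode σ := by simp [tS]
  have a3 : mm (Nat.pair e (Nat.pair (Encodable.encode σ) (Nat.pair m s))) = m := by simp [mm]
  have a4 : tN (Nat.pair e (Nat.pair (Encodable.encode σ) (Nat.pair m s))) = s := by simp [tN]
  refine ⟨Nat.pair e (Nat.pair (Encodable.encode σ) (Nat.pair m s)), ⟨?_, ?_, ?_, ?_⟩, a3, ?_⟩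
  · rw [a2, stO_enc]
  · rw [a1, a2, a3, a4, hs]
  · rw [a1, a2, a4]
    intro u hu
    cases hc : evn u e (Encodable.encode σ) with
    | none => rfl
    | some x =>
      exfalso; apply hmin u hu
      have := evn_mono hu.le hc
      rw [hs] at this; rw [hc, this]
  · rw [a1, a4]; exact act_pfm hpf s
  · unfold km; rw [a1, a2, stO_enc]; exact hk.symm
theorem ktrivial_of {V : List Bool → ℕ → Prop} (hV : Sig emptyOracle (fun c : List Bool × ℕ => V c.1 c.2)) (c0 : ℕ)
    (hb : ∀ F : Finset (List Bool × ℕ), (∀ p ∈ F, V p.1 p.2) → ∑ p ∈ F, (1/2 : ℝ) ^ p.2 ≤ 2 ^ c0)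
    (A : ℕ → Bool) (hA : ∀ t, act t → V (strPrefix A (mm t)) (km t)) : KTrivial A := by
  classical
  obtain ⟨c, hc⟩ := kraft_chaitin (V := fun x k => ∃ ρ : List Bool, Encodable.encode ρ = x ∧ V ρ k) (by
    apply Sig.ex
    apply Sig.and (Sig.eq (by fun_prop) (by fun_prop))
    exact hV.comp (f := fun c : (ℕ × ℕ) × List Bool => (c.2, c.1.2)) (by fun_prop)) c0 (by
    intro F hF
    let g : ℕ × ℕ → List Bool × ℕ := fun p => (stO p.1, p.2)
    have h1 : ∀ p ∈ F, Encodable.encode (stO p.1) = p.1 ∧ V (stO p.1) p.2 := by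
      intro p hp
      obtain ⟨ρ, h1, h2⟩ := hF p hp
      rw [← h1, stO_enc]; exact ⟨rfl, h2⟩
    have h2 : ∑ p ∈ F, (1/2 : ℝ) ^ p.2 = ∑ p ∈ F.image g, (1/2 : ℝ) ^ p.2 := by
      rw [Finset.sum_image]
      intro p hp q hq h
      have h3 := (h1 p hp).1; have h4 := (h1 q hq).1
      simp only [g, Prod.mk.injEq] at h
      rw [h.1, h4] at h3
      exact Prod.ext h3.symm h.2
    rw [h2]
    apply hb
    intro p hp
    obtain ⟨q, hq, rfl⟩ := Finset.mem_image.1 hp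
    exact (h1 q hq).2)
  refine ⟨c, fun n => ?_⟩
  obtain ⟨t, h1, h2, h3⟩ := exists_act n
  have := hc (Encodable.encode (strPrefix A (mm t))) (km t) ⟨_, rfl, hA t h1⟩
  rwa [h2, h3] at this

end PartP4a

section PartP4b

/-- Code of a pair (string, number). -/
def cod (y : List Bool) (k : ℕ) : ℕ := Nat.pair k (Encodable.encode y)
/-- Block length. -/
def lenF (n c : ℕ) : ℕ := c.unpair.1 + n + 1
theorem lenF_cod (n y k) : lenF n (cod y k) = k + n + 1 := by simp [lenF, cod]
theorem cod_inj {y k y' k'} (h : cod y k = cod y' k') : y = y' ∧ k = k' := by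
  unfold cod at h
  have := Nat.pair_eq_pair.1 h
  exact ⟨Encodable.encode_injective this.2, this.1⟩
def Hit (n : ℕ) (x σ : List Bool) : Prop := ∃ t, t < σ.length ∧ (act t ∧ ∀ i, i < km t + n + 1 → σ[Nat.pair (cod (x.take (mm t)) (km t)) i]? = some false)
def SS (n : ℕ) (x σ : List Bool) : Prop := Hit n x σ ∧ ¬ Hit n x (σ.take (σ.length - 1))
section
variable {α : Type*} [Primcodable α] {f : α → ℕ} {g h : α → List Bool}
theorem del_Hit {X} (hf : Computable f) (hg : Computable g) (hh : Computable h) : Del X (fun a => Hit (f a) (g a) (h a)) := by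
  unfold Hit cod
  apply Del.bex (by fun_prop)
  apply Del.and (del_act (by fun_prop))
  apply Del.ball (by fun_prop)
  exact Del.eq (by fun_prop) (by fun_prop)
theorem del_SS {X} (hf : Computable f) (hg : Computable g) (hh : Computable h) : Del X (fun a => SS (f a) (g a) (h a)) :=
  (del_Hit hf hg hh).and (del_Hit hf hg (by fun_prop)).not
end
theorem Hit_mono {n x} {σ τ : List Bool} (hp : σ = τ.take σ.length) (h : Hit n x σ) : Hit n x τ := by
  obtain ⟨t, ht, ha, hi⟩ := h
  have hl : σ.length ≤ τ.length := by
    have := congrArg List.length hp; simp at this; omega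
  refine ⟨t, by omega, ha, fun i hi' => ?_⟩
  have := hi i hi'
  rw [hp, List.getElem?_take] at this
  split_ifs at this
  exact this
theorem Hit_congr {n} {x x' σ : List Bool} (hx : x.take σ.length = x'.take σ.length) : Hit n x σ ↔ Hit n x' σ := by
  unfold Hit
  apply exists_congr; intro t
  apply and_congr_right; intro ht
  have : x.take (mm t) = x'.take (mm t) := by
    have h1 := mm_le t
    have h2 := congrArg (List.take (mm t)) hx
    rwa [List.take_take, List.take_take, min_eq_left (by omega)] at h2
  rw [this]
theorem SS_congr {n} {x x' σ : List Bool} (hx : x.take σ.length = x'.take σ.length) : SS n x σ ↔ SS n x' σ := by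
  unfold SS
  rw [Hit_congr hx, Hit_congr (σ := σ.take (σ.length - 1)) (x := x) (x' := x')]
  have := congrArg (List.take (σ.take (σ.length-1)).length) hx
  rwa [List.take_take, List.take_take, min_eq_left (by simp)] at this
/-- Everything that is hit has a minimal hit. -/
theorem exists_SS {n} {x : List Bool} {R : ℕ → Bool} (h : Hit n x (strPrefix R x.length)) :
    ∃ l, 0 < l ∧ l ≤ x.length ∧ SS n (x.take l) (strPrefix R l) := by
  classical
  have hex : ∃ l, Hit n x (strPrefix R l) := ⟨_, h⟩
  have hs := Nat.find_spec hex
  have hmin := fun s (h : s < Nat.find hex) => Nat.find_min hex h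
  have hle : Nat.find hex ≤ x.length := Nat.find_min' hex h
  generalize Nat.find hex = l at hs hmin hle
  have h0 : 0 < l := by
    rcases Nat.eq_zero_or_pos l with h | h
    · subst h; obtain ⟨t, ht, -⟩ := hs; simp at ht
    · exact h
  refine ⟨l, h0, hle, ?_⟩
  rw [SS_congr (x' := x) (by simp)]
  refine ⟨hs, ?_⟩
  rw [strPrefix_length, strPrefix_take _ _ _ (by omega)]
  exact hmin _ (by omega)
/-- `σ` is a minimal hit along `A`. -/
def SA (A : ℕ → Bool) (n : ℕ) (σ : List Bool) : Prop := SS n (strPrefix A σ.length) σ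
theorem SA_unique {A : ℕ → Bool} {n} {R : ℕ → Bool} {a b : ℕ} (ha : SA A n (strPrefix R a)) (hb : SA A n (strPrefix R b)) : a = b := by
  have aux : ∀ a b, SA A n (strPrefix R a) → SA A n (strPrefix R b) → ¬ a < b := by
    intro a b ha hb hlt
    apply hb.2
    simp only [strPrefix_length]
    rw [strPrefix_take _ _ _ (by omega)]
    have h1 := ha.1
    simp only [strPrefix_length] at h1
    rw [Hit_congr (x' := strPrefix A b)] at h1
    · exact Hit_mono (by simp only [strPrefix_length]; rw [strPrefix_take _ _ _ (by omega)]) h1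
    · simp only [strPrefix_length]
      rw [strPrefix_take _ _ _ le_rfl, strPrefix_take _ _ _ hlt.le]
  have := aux a b ha hb; have := aux b a hb ha; omega
theorem hpw_pos (k : ℕ) : (0:ℝ) < (1/2)^k := by positivity
theorem M_hits (A : ℕ → Bool) (n : ℕ) : M {R | ∃ l, SA A n (strPrefix R l)} ≤ (1/2)^(n+1) := by
  classical
  have hsub : {R | ∃ l, SA A n (strPrefix R l)} ⊆ ⋃ t : ℕ, if act t then blockE (lenF n) (cod (strPrefix A (mm t)) (km t)) else ∅ := by
    rintro R ⟨l, ⟨t, ht, ha, hi⟩, -⟩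
    rw [Set.mem_iUnion]
    refine ⟨t, ?_⟩
    rw [if_pos ha]
    intro i hi'
    rw [lenF_cod] at hi'
    have := hi i hi'
    rw [strPrefix_length] at this ht
    rw [strPrefix_take _ _ _ ((mm_le t).trans ht.le)] at this
    have hlt : Nat.pair (cod (strPrefix A (mm t)) (km t)) i < l := by
      by_contra hcon
      rw [List.getElem?_eq_none (by simp; omega)] at this
      simp at this
    rw [strPrefix_get _ _ _ hlt] at this
    exact Option.some.inj this
  refine (M_mono hsub).trans (M_iUnion_le (g := fun t => if act t then (1/2)^(km t + n + 1) else 0) ?_ ?_)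
  · intro t
    split_ifs
    · rw [M_blockE, lenF_cod]
    · simp [M]
  · intro N
    rw [← Finset.sum_filter]
    have := act_kraft ((Finset.range N).filter act) (fun t ht => (Finset.mem_filter.1 ht).2)
    have e : ∀ t, (1/2:ℝ)^(km t + n + 1) = (1/2)^(n+1) * (1/2)^(km t) := by intro t; rw [← pow_add]; ring_nf
    simp only [e]
    rw [← Finset.mul_sum]
    have := hpw_pos (n+1)
    nlinarith
/-- Bad strings. -/
def Bad (A : ℕ → Bool) (n J : ℕ) (V : List Bool → Prop) (x : List Bool) : Prop :=
  J ≤ x.length ∧ x.take J = strPrefix A J ∧ ∀ l, l < x.length + 1 → J ≤ l → ∀ v, v < 2 ^ l → ∃ σ : List Bool, σ.length = l ∧ valS σ = v ∧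
    (¬ SS n (x.take l) σ ∨ M ((openOf {ρ | V ρ})ᶜ ∩ _root_.cylinder σ) < (1/2)^(3 * l + n + 2))
theorem Bad_iff {A n J V x} : Bad A n J V x ↔ J ≤ x.length ∧ x.take J = strPrefix A J ∧ ∀ σ : List Bool, σ.length ≤ x.length → J ≤ σ.length →
    SS n (x.take σ.length) σ → M ((openOf {ρ | V ρ})ᶜ ∩ _root_.cylinder σ) < (1/2)^(3 * σ.length + n + 2) := by
  unfold Bad
  apply and_congr_right; intro _
  apply and_congr_right; intro _
  constructor
  · intro h σ h1 h2 h3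
    obtain ⟨σ', e1, e2, e3⟩ := h σ.length (by omega) h2 (valS σ) (valS_lt σ)
    have := valS_inj e1 e2
    subst this
    tauto
  · intro h l h1 h2 v hv
    obtain ⟨σ, e1, e2⟩ := valS_surj l v hv
    refine ⟨σ, e1, e2, ?_⟩
    have := h σ (by omega) (by omega)
    rw [e1] at this
    tauto
theorem sig_Bad (A n J) {V : List Bool → Prop} (hV : Sig emptyOracle V) : Sig emptyOracle (Bad A n J V) := by
  unfold Bad
  apply Sig.and (Sig.le (by fun_prop) (by fun_prop))
  apply Sig.and (Sig.eq (by fun_prop) (by fun_prop))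
  apply Sig.ball (by fun_prop)
  refine Sig.of_iff ?_ (fun _ => imp_iff_not_or)
  apply Sig.or (Del.le (by fun_prop) (by fun_prop)).2
  apply Sig.ball (by fun_prop)
  apply Sig.ex
  apply Sig.and (Sig.eq (by fun_prop) (by fun_prop))
  apply Sig.and (Sig.eq (comp_valS (by fun_prop)) (by fun_prop))
  apply Sig.or
  · exact (del_SS (by fun_prop) (by fun_prop) (by fun_prop)).2
  · have := sig_meas (α := ℕ) (V := fun _ => V) (hV.comp (f := fun c : ℕ × List Bool => c.2) (by fun_prop))
    exact this.comp (f := fun c : ((List Bool × ℕ) × ℕ) × List Bool => (0, c.2, 3 * c.1.1.2 + n + 2)) (by fun_prop)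
theorem prod_bound {ι : Type*} (F : Finset ι) (k : ι → ℕ) (n : ℕ) (h : (1/2:ℝ)^(n+2) ≤ ∏ c ∈ F, (1 - (1/2:ℝ)^(k c + n + 1))) :
    ∑ c ∈ F, (1/2:ℝ)^k c ≤ 2^(2*n+3) := by
  have h1 : ∏ c ∈ F, (1 - (1/2:ℝ)^(k c + n + 1)) ≤ Real.exp (- ∑ c ∈ F, (1/2:ℝ)^(k c + n + 1)) := by
    rw [← Finset.sum_neg_distrib, Real.exp_sum]
    apply Finset.prod_le_prod
    · intro i _
      have : (1/2:ℝ)^(k i + n + 1) ≤ 1 := pow_le_one₀ (by norm_num) (by norm_num)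
      linarith
    · intro i _
      have := Real.add_one_le_exp (-(1/2:ℝ)^(k i + n + 1))
      linarith
  have h2 : ∑ c ∈ F, (1/2:ℝ)^(k c + n + 1) = (1/2)^(n+1) * ∑ c ∈ F, (1/2:ℝ)^k c := by
    rw [Finset.mul_sum]; apply Finset.sum_congr rfl; intro i _; rw [← pow_add]; ring_nf
  rw [h2] at h1
  set S := ∑ c ∈ F, (1/2:ℝ)^k c
  have h3 := h.trans h1
  rw [Real.exp_neg] at h3
  have h4 := Real.add_one_le_exp ((1/2)^(n+1) * S)
  have h5 : Real.exp ((1/2)^(n+1) * S) ≤ 2^(n+2) := by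
    rw [one_div, inv_pow] at h3 ⊢
    rw [inv_pow] at h3
    exact (inv_le_inv₀ (by positivity) (Real.exp_pos _)).1 h3
  have h6 : (1/2)^(n+1) * S ≤ 2^(n+2) := by linarith
  have h7 : (2:ℝ)^(n+1) * ((1/2)^(n+1) * S) ≤ 2^(n+1) * 2^(n+2) := mul_le_mul_of_nonneg_left h6 (by positivity)
  rw [← mul_assoc, ← mul_pow] at h7
  norm_num at h7
  rw [← pow_add] at h7
  convert h7 using 2; ring
theorem hitting {A : ℕ → Bool} (hA : ¬ KTrivial A) {V : List Bool → Prop} (hV : Sig emptyOracle V) (n : ℕ)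
    (hQ : (1/2)^n ≤ M (openOf {ρ | V ρ})ᶜ) (J : ℕ) :
    ∃ σ : List Bool, J ≤ σ.length ∧ SA A n σ ∧ (1/2)^(3 * σ.length + n + 2) ≤ M ((openOf {ρ | V ρ})ᶜ ∩ _root_.cylinder σ) := by
  classical
  by_contra! H
  apply hA
  set Q := (openOf {ρ | V ρ})ᶜ with hQd
  let V' : List Bool → ℕ → Prop := fun y k => ∃ x : List Bool, ∃ t : ℕ, Bad A n J V x ∧ act t ∧ y = x.take (mm t) ∧ k = km t ∧ t < x.length ∧
    ∀ i, i < k + n + 1 → Nat.pair (Nat.pair k (Encodable.encode y)) i < x.length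
  have sV' : Sig emptyOracle (fun c : List Bool × ℕ => V' c.1 c.2) := by
    apply Sig.ex
    apply Sig.ex
    apply Sig.and ((sig_Bad A n J hV).comp (f := fun c : ((List Bool × ℕ) × List Bool) × ℕ => c.1.2) (by fun_prop))
    apply Sig.and (del_act (by fun_prop)).1
    apply Sig.and (Sig.eq (by fun_prop) (by fun_prop))
    apply Sig.and (Sig.eq (by fun_prop) (by fun_prop))
    apply Sig.and (Sig.lt (by fun_prop) (by fun_prop))
    apply Sig.ball (by fun_prop)
    exact Sig.lt (by fun_prop) (by fun_prop)
  let W := {R | ∃ l, SA A n (strPrefix R l)}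
  let B : ℕ → Finset (List Bool × List Bool) := fun l =>
    (((finite_len (l+1)).prod (finite_len (l+1))).toFinset).filter (fun p => Bad A n J V p.1 ∧ SS n p.1 p.2)
  have hB : ∀ l p, p ∈ B l ↔ (p.1.length = l+1 ∧ p.2.length = l+1) ∧ Bad A n J V p.1 ∧ SS n p.1 p.2 := by
    intro l p; simp [B]
  have cardB : ∀ l, ((B l).card : ℝ) ≤ 4^(l+1) := by
    intro l
    have h1 : (B l).card ≤ ((finite_len (l+1)).toFinset ×ˢ (finite_len (l+1)).toFinset).card := by
      apply Finset.card_le_card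
      intro p hp
      have := (hB l p).1 hp
      simp [this.1.1, this.1.2]
    have h2 : (finite_len (l+1)).toFinset.card = 2^(l+1) := by
      have := M_level (l+1) (finite_len (l+1)).toFinset (by simp)
      have h3 : (⋃ ρ ∈ (finite_len (l+1)).toFinset, _root_.cylinder ρ) = Set.univ := by
        ext X; simp only [Set.mem_iUnion, Set.mem_univ, iff_true, exists_prop]
        exact ⟨strPrefix X (l+1), by simp, by rw [mem_cyl]; simp⟩
      rw [h3, M_univ, one_div, inv_pow] at this
      have h4 := eq_mul_inv_iff_mul_eq₀ (by positivity) |>.1 this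
      rw [one_mul] at h4
      exact_mod_cast h4.symm
    rw [Finset.card_product, h2, ← mul_pow] at h1
    norm_num at h1
    exact_mod_cast h1
  let U : ℕ → Set (ℕ → Bool) := fun l => ⋃ p ∈ B l, (Q ∩ _root_.cylinder p.2)
  have MU : M (⋃ l, U l) ≤ (1/2)^(n+2) := by
    apply M_iUnion_le (g := fun l => (1/2)^(n+2) * (1/2)^(l+1))
    · intro l
      refine (M_biUnion_le _ _).trans ?_
      have h1 : ∀ p ∈ B l, M (Q ∩ _root_.cylinder p.2) ≤ (1/2)^(3*(l+1)+n+2) := by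
        intro p hp
        obtain ⟨⟨h1, h2⟩, h3, h4⟩ := (hB l p).1 hp
        have h5 := (Bad_iff.1 h3)
        have := h5.2.2 p.2 (by omega) (by omega) (by rw [h2, ← h1, List.take_length]; exact h4)
        rw [h2] at this
        exact this.le
      refine (Finset.sum_le_sum h1).trans ?_
      rw [Finset.sum_const, nsmul_eq_mul]
      refine (mul_le_mul_of_nonneg_right (cardB l) (by positivity)).trans ?_
      have : (4:ℝ) = (1/2)^(-2:ℤ) := by norm_num
      apply le_of_eq
      rw [show 3*(l+1)+n+2 = (n+2) + (l+1) + 2 * (l+1) by ring, pow_add _ ((n+2)+(l+1)), pow_mul _ 2, pow_add _ (n+2)]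
      rw [mul_comm, mul_assoc, ← mul_pow]; norm_num
    · intro N
      rw [← Finset.mul_sum]
      have : ∀ N : ℕ, ∑ e ∈ Finset.range N, (1/2 : ℝ)^(e+1) = 1 - (1/2)^N := by
        intro N; induction N with
        | zero => simp
        | succ n ih => rw [Finset.sum_range_succ, ih, pow_succ]; ring
      rw [this]
      have p := hpw_pos N
      have p' := hpw_pos (n+2)
      nlinarith
  have MQ : (1/2)^(n+2) ≤ M ((Q \ W) \ ⋃ l, U l) := by
    have h1 := M_diff_ge Q W
    have h2 := M_diff_ge (Q \ W) (⋃ l, U l)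
    have h3 : M W ≤ _ := M_hits A n
    have e1 : (1/2:ℝ)^(n+2) = (1/2)^n * (1/4) := by rw [pow_add]; norm_num
    have e2 : (1/2:ℝ)^(n+1) = (1/2)^n * (1/2) := by rw [pow_add]; norm_num
    linarith
  have avoid : ∀ y k, V' y k → ∀ R ∈ (Q \ W) \ ⋃ l, U l, R ∉ blockE (lenF n) (cod y k) := by
    rintro y k ⟨x, t, hbad, ht, rfl, rfl, htx, hpos⟩ R ⟨⟨hRQ, hRW⟩, hRU⟩ hR
    have hhit : Hit n x (strPrefix R x.length) := by
      refine ⟨t, by simpa using htx, ht, fun i hi => ?_⟩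
      have := hpos i hi
      unfold cod
      rw [strPrefix_get _ _ _ this]
      congr 1
      apply hR
      rwa [lenF_cod]
    obtain ⟨l, h0, hl, hS⟩ := exists_SS hhit
    have hb := Bad_iff.1 hbad
    rcases le_total l J with h | h
    · apply hRW
      refine ⟨l, ?_⟩
      unfold SA
      rw [strPrefix_length]
      have h3 := congrArg (List.take l) hb.2.1
      rw [strPrefix_take _ _ _ h, List.take_take, min_eq_left h] at h3
      rwa [← h3]
    · apply hRU
      rw [Set.mem_iUnion]
      refine ⟨l-1, ?_⟩
      simp only [U, Set.mem_iUnion]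
      refine ⟨(x.take l, strPrefix R l), (hB _ _).2 ⟨⟨?_, ?_⟩, ?_, hS⟩, hRQ, ?_⟩
      · simp; omega
      · simp; omega
      · rw [Bad_iff]
        refine ⟨by simp; omega, ?_, ?_⟩
        · rw [List.take_take, min_eq_left h]; exact hb.2.1
        · intro σ h1 h2 h3
          simp at h1
          apply hb.2.2 σ (by omega) h2
          rwa [List.take_take, min_eq_left (by omega)] at h3
      · rw [mem_cyl]; simp
  refine ktrivial_of (V := V') sV' (2*n+3) ?_ A ?_
  · intro F hF
    apply prod_bound F (fun p => p.2) n
    refine MQ.trans ?_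
    have e : ∏ c ∈ F, (1 - (1/2:ℝ)^(c.2 + n + 1)) = ∏ c ∈ F.image (fun p => cod p.1 p.2), (1 - (1/2:ℝ)^lenF n c) := by
      rw [Finset.prod_image]
      · simp only [lenF_cod]
      · intro p _ q _ h
        obtain ⟨h1, h2⟩ := cod_inj h
        exact Prod.ext h1 h2
    rw [e, ← indep_blocks]
    apply M_mono
    intro R hR
    simp only [Set.mem_iInter]
    intro c hc
    obtain ⟨p, hp, rfl⟩ := Finset.mem_image.1 hc
    exact avoid _ _ (hF p hp) R hR
  · intro t ht
    let c := Nat.pair (km t) (Encodable.encode (strPrefix A (mm t)))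
    let N := J + t + 1 + Nat.pair c (km t + n + 1)
    have hm := mm_le t
    refine ⟨strPrefix A N, t, ?_, ht, ?_, rfl, ?_, ?_⟩
    · rw [Bad_iff]
      refine ⟨by simp [N]; omega, ?_, ?_⟩
      · rw [strPrefix_take _ _ _ (by omega)]
      · intro σ h1 h2 h3
        rw [strPrefix_length] at h1
        apply H σ h2
        rwa [strPrefix_take _ _ _ h1] at h3
    · rw [strPrefix_take _ _ _ (by omega)]
    · simp [N]; omega
    · intro i hi
      have := Nat.pair_lt_pair_right c hi
      rw [strPrefix_length]
      change Nat.pair c i < N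
      omega

end PartP4b

section PartP5

theorem cyl_nil : _root_.cylinder [] = Set.univ := by ext X; simp [mem_cyl, strPrefix]
theorem openOf_mono {S T : Set (List Bool)} (h : S ⊆ T) : openOf S ⊆ openOf T := by
  intro X; rw [mem_openOf, mem_openOf]; rintro ⟨n, hn⟩; exact ⟨n, h hn⟩
theorem exists_V0 : ∃ V0 : List Bool → Prop, Sig emptyOracle V0 ∧ (1/2)^1 ≤ M (openOf {ρ | V0 ρ})ᶜ ∧
    ∀ X, X ∉ openOf {ρ | V0 ρ} → MLRandom X := by
  classical
  have hs : Sig emptyOracle (fun c : ℕ × List Bool => ∃ m, OracleComputes c.1 emptyOracle (Nat.pair (c.1 + 3) (Encodable.encode c.2)) m) := by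
    apply Sig.ex
    exact sig_oracleComputes (by fun_prop) (by fun_prop) (by fun_prop)
  obtain ⟨g, hg, hp, hm⟩ := hs.kernel0
  let K : ℕ → ℕ → List Bool → Prop := fun e s ρ => g ((e, ρ), s) = true
  let C : ℕ → ℕ → Set (ℕ → Bool) := fun e s => openOf {ρ | K e s ρ ∧ ρ.length ≤ s}
  have hC : ∀ e s, (openOf (coClop (K e s) s))ᶜ = C e s := fun e s => coClop_compl _ _
  have Cmono : ∀ e s t, s ≤ t → C e s ⊆ C e t := by
    intro e s t hst
    apply openOf_mono
    rintro ρ ⟨h1, h2⟩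
    exact ⟨hm _ _ _ hst h1, h2.trans hst⟩
  let V0 : List Bool → Prop := fun ρ => ∃ e s, K e s ρ ∧ ρ.length ≤ s ∧ M ((openOf {ρ | ρ ∈ coClop (K e s) s})ᶜ ∩ _root_.cylinder []) < (1/2)^(e+2)
  have hV0 : ∀ ρ, V0 ρ ↔ ∃ e s, K e s ρ ∧ ρ.length ≤ s ∧ M (C e s) < (1/2)^(e+2) := by
    intro ρ
    simp only [V0, ← hC, cyl_nil, Set.inter_univ]
    rfl
  refine ⟨V0, ?_, ?_, ?_⟩
  · apply Sig.ex
    apply Sig.ex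
    have hgc : ∀ v, Sig emptyOracle (fun c : (ℕ × List Bool) × ℕ => g c = v) := fun v => Sig.eq hg (by fun_prop)
    apply Sig.and ((hgc true).comp (f := fun c : (List Bool × ℕ) × ℕ => ((c.1.2, c.1.1), c.2)) (by fun_prop))
    apply Sig.and (Sig.le (by fun_prop) (by fun_prop))
    have := sig_meas (α := ℕ × ℕ) (V := fun c ρ => ρ ∈ coClop (K c.1 c.2) c.2) (by
      unfold coClop
      apply Sig.and (Sig.eq (by fun_prop) (by fun_prop))
      apply Sig.ball (by fun_prop)
      refine ((hgc false).comp (f := fun c : ((ℕ × ℕ) × List Bool) × ℕ => ((c.1.1.1, c.1.2.take c.2), c.1.1.2)) (by fun_prop)).of_iff (fun c => ?_)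
      simp [K])
    exact this.comp (f := fun c : (List Bool × ℕ) × ℕ => ((c.1.2, c.2), [], c.1.2 + 2)) (by fun_prop)
  · rw [M_compl (openOf_measurable _)]
    let f : ℕ → ℕ → Set (ℕ → Bool) := fun e s => if M (C e s) < (1/2)^(e+2) then C e s else ∅
    have hf : ∀ e s, f e s ⊆ C e s := by
      intro e s; simp only [f]; split_ifs <;> simp
    have key : ∀ e, M (⋃ s, f e s) ≤ (1/2)^(e+2) := by
      intro e
      by_contra hcon
      push Not at hcon
      have e1 : (⋃ s, f e s) = ⋃ n, ⋃ s, ⋃ (_ : s < n), f e s := by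
        ext X; simp only [Set.mem_iUnion]
        constructor
        · rintro ⟨s, hs⟩; exact ⟨s+1, s, by omega, hs⟩
        · rintro ⟨n, s, -, hs⟩; exact ⟨s, hs⟩
      rw [e1] at hcon
      obtain ⟨n, hn⟩ := M_iUnion_mono_lt (by
        intro a b hab X
        simp only [Set.mem_iUnion]
        rintro ⟨s, h1, h2⟩; exact ⟨s, by omega, h2⟩) hcon
      have : ∀ n, M (⋃ s, ⋃ (_ : s < n), f e s) ≤ (1/2)^(e+2) := by
        intro n
        induction n with
        | zero => simp [M]
        | succ n ih =>
          by_cases hg : M (C e n) < (1/2)^(e+2)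
          · refine le_trans (M_mono ?_) hg.le
            intro X; simp only [Set.mem_iUnion]
            rintro ⟨s, h1, h2⟩
            exact Cmono e s n (by omega) (hf e s h2)
          · refine le_trans (M_mono ?_) ih
            intro X; simp only [Set.mem_iUnion]
            rintro ⟨s, h1, h2⟩
            refine ⟨s, ?_, h2⟩
            rcases Nat.lt_or_ge s n with h | h
            · exact h
            · have : s = n := by omega
              subst this
              simp only [f, if_neg hg] at h2; exact h2.elim
      exact absurd (this n) (not_le.2 hn)
    have hsub : openOf {ρ | V0 ρ} ⊆ ⋃ e, ⋃ s, f e s := by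
      intro X hX
      obtain ⟨n, hn⟩ := (mem_openOf _ _).1 hX
      obtain ⟨e, s, h1, h2, h3⟩ := (hV0 _).1 hn
      simp only [Set.mem_iUnion]
      refine ⟨e, s, ?_⟩
      simp only [f, if_pos h3]
      exact (mem_openOf _ _).2 ⟨n, h1, h2⟩
    have h1 : M (openOf {ρ | V0 ρ}) ≤ 1/2 := by
      refine (M_mono hsub).trans (M_iUnion_le key ?_)
      intro N
      have : ∀ N : ℕ, ∑ e ∈ Finset.range N, (1/2 : ℝ)^(e+2) = 1/2 - (1/2)^(N+1) := by
        intro N; induction N with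
        | zero => simp
        | succ n ih => rw [Finset.sum_range_succ, ih, pow_succ _ (n+1)]; ring
      rw [this]
      have := hpw_pos (N+1)
      linarith
    linarith
  · intro X hX G hG
    by_contra hcon
    push Not at hcon
    apply hX
    obtain ⟨⟨e, he⟩, hmu⟩ := hG
    have hXe := hcon (e+3)
    rw [he] at hXe
    obtain ⟨n, hn⟩ := (mem_openOf _ _).1 hXe
    obtain ⟨s, hs⟩ := (hp (e, strPrefix X n)).1 hn
    refine (mem_openOf _ _).2 ⟨n, (hV0 _).2 ⟨e, max s n, hm _ _ _ (le_max_left _ _) hs, by simp, ?_⟩⟩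
    have h1 : M (C e (max s n)) ≤ M (testLevel e emptyOracle (e+3)) := by
      apply M_mono
      apply openOf_mono
      rintro ρ ⟨h1, -⟩
      exact (hp (e, ρ)).2 ⟨_, h1⟩
    have h2 : M (testLevel e emptyOracle (e+3)) ≤ (1/2)^(e+3) := by
      have := hmu (e+3)
      rw [he] at this
      unfold M MeasureTheory.Measure.real
      have h3 := ENNReal.toReal_mono (by simp) this
      simpa using h3
    have h3 : (1/2:ℝ)^(e+3) < (1/2)^(e+2) := by
      rw [pow_succ _ (e+2)]; have := hpw_pos (e+2); linarith
    linarith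

end PartP5

section PartP6a

/-- The complement of the universal class. -/
noncomputable def V0 : List Bool → Prop := exists_V0.choose
theorem V0_sig : Sig emptyOracle V0 := exists_V0.choose_spec.1
theorem V0_M : (1/2)^1 ≤ M (openOf {ρ | V0 ρ})ᶜ := exists_V0.choose_spec.2.1
theorem V0_ml : ∀ X, X ∉ openOf {ρ | V0 ρ} → MLRandom X := exists_V0.choose_spec.2.2
/-- The basic open sets. -/
def BB (q : ℕ × ℕ × ℕ) (ρ : List Bool) : Prop := (q.1 = 0 ∧ V0 ρ) ∨
  ((q.1 = 1 ∧ ∃ m, WEnum q.2.1 (Nat.pair (Encodable.encode ρ) (Nat.pair q.2.1 m))) ∨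
  (q.1 = 2 ∧ WEnum q.2.1 (Nat.pair (Encodable.encode ρ) q.2.2)))
theorem BB_sig : Sig emptyOracle (fun c : (ℕ × ℕ × ℕ) × List Bool => BB c.1 c.2) := by
  unfold BB
  apply Sig.or
  · apply Sig.and (Sig.eq (by fun_prop) (by fun_prop))
    exact V0_sig.comp (f := fun c : (ℕ × ℕ × ℕ) × List Bool => c.2) (by fun_prop)
  apply Sig.or
  · apply Sig.and (Sig.eq (by fun_prop) (by fun_prop))
    apply Sig.ex
    exact sig_wenum (by fun_prop) (by fun_prop)
  · apply Sig.and (Sig.eq (by fun_prop) (by fun_prop))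
    exact sig_wenum (by fun_prop) (by fun_prop)
noncomputable def gB : ((ℕ × ℕ × ℕ) × List Bool) × ℕ → Bool := BB_sig.kernel0.choose
theorem gB_comp : Computable gB := BB_sig.kernel0.choose_spec.1
theorem gB_iff (q ρ) : BB q ρ ↔ ∃ s, gB ((q, ρ), s) = true := BB_sig.kernel0.choose_spec.2.1 (q, ρ)
theorem gB_mono : ∀ a s t, s ≤ t → gB (a, s) = true → gB (a, t) = true := BB_sig.kernel0.choose_spec.2.2
abbrev Constr := (ℕ × ℕ × ℕ) × Option ℕ
/-- strings forbidden by a constraint -/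
def Av (c : Constr) (ρ : List Bool) : Prop := (c.2 = none ∧ BB c.1 ρ) ∨
  ∃ N, c.2 = some N ∧ (ρ.length = N ∧ ∀ i, i < N + 1 → gB ((c.1, ρ.take i), N) = false)
def AvL (L : List Constr) (ρ : List Bool) : Prop := ∃ c, c ∈ L ∧ Av c ρ
theorem Av_sig : Sig emptyOracle (fun c : Constr × List Bool => Av c.1 c.2) := by
  unfold Av
  apply Sig.or
  · apply Sig.and (Sig.eq (by fun_prop) (by fun_prop))
    exact BB_sig.comp (f := fun c : Constr × List Bool => (c.1.1, c.2)) (by fun_prop)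
  · apply Sig.ex
    apply Sig.and (Sig.eq (by fun_prop) (by fun_prop))
    apply Sig.and (Sig.eq (by fun_prop) (by fun_prop))
    apply Sig.ball (by fun_prop)
    have : Sig emptyOracle (fun c : ((ℕ × ℕ × ℕ) × List Bool) × ℕ => gB c = false) := Sig.eq gB_comp (by fun_prop)
    exact this.comp (f := fun c : ((Constr × List Bool) × ℕ) × ℕ => ((c.1.1.1.1, c.1.1.2.take c.2), c.1.2)) (by fun_prop)
theorem AvL_sig : Sig emptyOracle (fun c : List Constr × List Bool => AvL c.1 c.2) := by
  unfold AvL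
  apply Sig.lex (by fun_prop)
  exact Av_sig.comp (f := fun c : (List Constr × List Bool) × Constr => (c.2, c.1.2)) (by fun_prop)
/-- The class given by a list of constraints. -/
def PP (L : List Constr) : Set (ℕ → Bool) := (openOf {ρ | AvL L ρ})ᶜ
theorem mem_PP {L X} : X ∈ PP L ↔ ∀ c ∈ L, ∀ n, ¬ Av c (strPrefix X n) := by
  unfold PP
  rw [Set.mem_compl_iff, mem_openOf]
  simp only [Set.mem_ofPred_eq, AvL]
  push Not
  exact ⟨fun h c hc n => h n c hc, fun h n c hc => h c hc n⟩
theorem PP_cons (c L) : PP (c :: L) = PP L ∩ PP [c] := by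
  ext X; simp only [Set.mem_inter_iff, mem_PP, List.mem_cons]
  constructor
  · intro h; exact ⟨fun d hd => h d (Or.inr hd), fun d hd => h d (by simp at hd; exact Or.inl hd)⟩
  · rintro ⟨h1, h2⟩ d (hd | hd)
    · exact h2 d (by simp [hd])
    · exact h1 d hd
theorem PP_none (q) : PP [(q, none)] = (openOf {ρ | BB q ρ})ᶜ := by
  unfold PP; congr 2; ext ρ; simp [AvL, Av]
theorem PP_some (q N) : PP [(q, some N)] = openOf {ρ | gB ((q, ρ), N) = true ∧ ρ.length ≤ N} := by
  rw [← coClop_compl]; unfold PP; congr 2; ext ρ; simp [AvL, Av, coClop]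
  constructor <;> (rintro ⟨rfl, h⟩; exact ⟨rfl, h⟩)
theorem PP_meas (L) : MeasurableSet (PP L) := (openOf_measurable _).compl
theorem PP_some_sub (q N) : PP [(q, some N)] ⊆ openOf {ρ | BB q ρ} := by
  rw [PP_some]; apply openOf_mono; rintro ρ ⟨h, -⟩; exact (gB_iff _ _).2 ⟨_, h⟩
theorem open_eq (q) : openOf {ρ | BB q ρ} = ⋃ N, PP [(q, some N)] := by
  apply Set.Subset.antisymm
  · intro X hX
    obtain ⟨n, hn⟩ := (mem_openOf _ _).1 hX
    obtain ⟨s, hs⟩ := (gB_iff _ _).1 hn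
    rw [Set.mem_iUnion]
    refine ⟨max s n, ?_⟩
    rw [PP_some, mem_openOf]
    exact ⟨n, gB_mono _ _ _ (le_max_left _ _) hs, by simp⟩
  · exact Set.iUnion_subset (PP_some_sub q)
theorem some_mono (q) : Monotone (fun N => PP [(q, some N)]) := by
  intro a b hab
  simp only [PP_some]
  apply openOf_mono
  rintro ρ ⟨h1, h2⟩; exact ⟨gB_mono _ _ _ hab h1, h2.trans hab⟩
/-- measures of the pieces cut out by a constraint -/
theorem cut_lt (S : Set (ℕ → Bool)) (q) {r : ℝ} (h : ∀ N, M (S ∩ PP [(q, some N)]) ≤ r) : M S ≤ M (S ∩ PP [(q, none)]) + r := by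
  have h1 := M_inter_add S (openOf_measurable {ρ | BB q ρ})
  have h2 : M (S ∩ openOf {ρ | BB q ρ}) ≤ r := by
    rw [open_eq, Set.inter_iUnion]
    by_contra hcon
    push Not at hcon
    obtain ⟨N, hN⟩ := M_iUnion_mono_lt (fun a b hab => Set.inter_subset_inter_right S (some_mono q hab)) hcon
    exact absurd (h N) (not_le.2 hN)
  rw [PP_none, ← Set.sdiff_eq]
  linarith
theorem meas_sig : Sig emptyOracle (fun c : List Constr × List Bool × ℕ => M (PP c.1 ∩ _root_.cylinder c.2.1) < (1/2)^c.2.2) :=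
  sig_meas (V := AvL) AvL_sig
theorem cons_inter (c L τ) : PP (c :: L) ∩ _root_.cylinder τ = (PP L ∩ _root_.cylinder τ) ∩ PP [c] := by
  rw [PP_cons]; ext X; simp only [Set.mem_inter_iff]; tauto
theorem choose1 (L τ n) (h : (1/2)^n ≤ M (PP L ∩ _root_.cylinder τ)) (q) :
    ∃ o, (1/2)^(n+1) ≤ M (PP ((q,o) :: L) ∩ _root_.cylinder τ) := by
  by_contra! hcon
  have h1 := hcon none
  have h2 : ∀ N, M ((PP L ∩ _root_.cylinder τ) ∩ PP [(q, some N)]) ≤ (1/2)^(n+1) := by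
    intro N; rw [← cons_inter]; exact (hcon (some N)).le
  have h3 := cut_lt _ q h2
  rw [cons_inter] at h1
  have : (1/2:ℝ)^(n+1) = (1/2)^n * (1/2) := pow_succ _ _
  linarith
/-- The shape of the second constraint. -/
def Sh (D : ℕ → Bool) (e : ℕ) (c : Constr) : Prop := ∃ x, (c.1 = (2, e, Nat.pair x (natOfBool (D x))) ∧ c.2 = none) ∨
  (c.1 = (2, e, Nat.pair x (natOfBool (!(D x)))) ∧ c.2 ≠ none)
theorem choose2 {D : ℕ → Bool} (hD : ¬ ComputableSet D) (L τ n) (h : (1/2)^n ≤ M (PP L ∩ _root_.cylinder τ)) (e) :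
    ∃ c, Sh D e c ∧ (1/2)^(n+1) ≤ M (PP (c :: L) ∩ _root_.cylinder τ) := by
  by_contra! hcon
  apply hD
  unfold ComputableSet
  rw [turingLE_iff]
  have hs := meas_sig.comp (f := fun c : ℕ × Bool => (((2, e, Nat.pair c.1 (natOfBool c.2)), none) :: L, τ, n+1)) (by
    have := comp_natOfBool (α := ℕ × Bool) (f := fun c => c.2) (by fun_prop)
    fun_prop)
  refine hs.of_iff ?_
  rintro ⟨x, b⟩
  have h1 := hcon ((2, e, Nat.pair x (natOfBool (D x))), none) ⟨x, Or.inl ⟨rfl, rfl⟩⟩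
  have h2 : ∀ N, M ((PP L ∩ _root_.cylinder τ) ∩ PP [((2, e, Nat.pair x (natOfBool (!(D x)))), some N)]) ≤ (1/2)^(n+1) := by
    intro N; rw [← cons_inter]
    exact (hcon ((2, e, Nat.pair x (natOfBool (!(D x)))), some N) ⟨x, Or.inr ⟨rfl, by simp⟩⟩).le
  have h3 := cut_lt _ _ h2
  rw [← cons_inter] at h3
  have h4 : (1/2:ℝ)^(n+1) = (1/2)^n * (1/2) := pow_succ _ _
  simp only
  by_cases hb : D x = b
  · simp only [hb, true_iff]
    rw [hb] at h1; exact h1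
  · have hb' : (!(D x)) = b := by revert hb; cases D x <;> cases b <;> simp
    simp only [hb, false_iff, not_lt]
    rw [hb'] at h3
    linarith
theorem hit_step {A : ℕ → Bool} (hA : ¬ KTrivial A) (L τ n) (h : (1/2)^n ≤ M (PP L ∩ _root_.cylinder τ)) (J : ℕ) :
    ∃ σ : List Bool, J ≤ σ.length ∧ SA A n σ ∧ (1/2)^(3 * σ.length + n + 2) ≤ M ((PP L ∩ _root_.cylinder τ) ∩ _root_.cylinder σ) := by
  have e := cyl_compl {ρ | AvL L ρ} τ
  have hs : Sig emptyOracle (fun ρ : List Bool => AvL L ρ ∨ (ρ.length = τ.length ∧ ρ ≠ τ)) := by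
    apply Sig.or
    · exact AvL_sig.comp (f := fun ρ : List Bool => (L, ρ)) (by fun_prop)
    · exact (Sig.eq (by fun_prop) (by fun_prop)).and (Sig.ne (by fun_prop) (by fun_prop))
  have e' : PP L ∩ _root_.cylinder τ = (openOf {ρ | AvL L ρ ∨ (ρ.length = τ.length ∧ ρ ≠ τ)})ᶜ := e
  rw [e'] at h ⊢
  exact hitting hA hs n h J
theorem len_le_enc (σ : List Bool) : σ.length ≤ Encodable.encode σ := by
  induction σ with
  | nil => simp
  | cons a l ih =>
    rw [Encodable.encode_list_cons, List.length_cons]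
    have := Nat.right_le_pair (Encodable.encode a) (Encodable.encode l)
    omega

end PartP6a

section PartP6b

abbrev St := List Bool × ℕ × List Constr
abbrev De := ℕ × Bool × Constr × Constr
/-- decode a decision -/
def deD (d : ℕ) : De := (Encodable.decode d : Option De).getD (0, false, ((0,0,0),none), ((0,0,0),none))
theorem deD_enc (x : De) : deD (Encodable.encode x) = x := by simp [deD]
@[fun_prop] theorem comp_deD {α} [Primcodable α] {f : α → ℕ} (hf : Computable f) : Computable (fun a => deD (f a)) :=
  Computable.option_getD (f := fun a => (Encodable.decode (f a) : Option De)) (g := fun _ => (0, false, ((0,0,0),none), ((0,0,0),none))) (by fun_prop) (by fun_prop)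
/-- The list after a decision. -/
def nL (st : St) (d : ℕ) : List Constr := (deD d).2.2.2 :: (deD d).2.2.1 :: st.2.2
@[fun_prop] theorem comp_nL {α} [Primcodable α] {f : α → ℕ} {g : α → St} (hf : Computable f) (hg : Computable g) : Computable (fun a => nL (g a) (f a)) := by
  unfold nL; fun_prop
/-- New strings acceptable for decision `d`. -/
def TT (A : ℕ → Bool) (st : St) (d : ℕ) (σ : List Bool) : Prop :=
  st.1.length < σ.length ∧ (deD d).1 ≤ σ.length ∧ st.1 = σ.take st.1.length ∧ SA A (st.2.1 + 2) σ ∧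
    ¬ M (PP (nL st d) ∩ _root_.cylinder σ) < (1/2)^(3 * σ.length + st.2.1 + 4)
theorem del_SA {α} [Primcodable α] {X A : ℕ → Bool} (hA : Sig X (fun c : ℕ × Bool => A c.1 = c.2)) {f : α → ℕ} {g : α → List Bool}
    (hf : Computable f) (hg : Computable g) : Del X (fun a => SA A (f a) (g a)) := by
  have key : Sig X (fun a => ∃ x : List Bool, (IsPrefixOf x A ∧ x.length = (g a).length) ∧ SS (f a) x (g a)) ∧
     Sig X (fun a => ∃ x : List Bool, (IsPrefixOf x A ∧ x.length = (g a).length) ∧ ¬ SS (f a) x (g a)) := by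
    have h1 : Sig X (fun c : α × List Bool => IsPrefixOf c.2 A) := (sig_pfx (X := A) (f := fun c : α × List Bool => c.2) (by fun_prop)).trans hA
    have h2 := del_SS (X := X) (α := α × List Bool) (f := fun c => f c.1) (g := fun c => c.2) (h := fun c => g c.1) (by fun_prop) (by fun_prop) (by fun_prop)
    exact ⟨Sig.ex ((h1.and (Sig.eq (by fun_prop) (by fun_prop))).and h2.1), Sig.ex ((h1.and (Sig.eq (by fun_prop) (by fun_prop))).and h2.2)⟩
  have e : ∀ (Pp : List Bool → Prop) (l : ℕ), Pp (strPrefix A l) ↔ ∃ x : List Bool, (IsPrefixOf x A ∧ x.length = l) ∧ Pp x := by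
    intro Pp l
    constructor
    · intro h; exact ⟨_, ⟨isPrefixOf_strPrefix A l, by simp⟩, h⟩
    · rintro ⟨x, ⟨h1, rfl⟩, h⟩; rw [← (isPrefixOf_iff _ _).1 h1]; exact h
  exact ⟨key.1.of_iff (fun a => e (fun x => SS (f a) x (g a)) _), key.2.of_iff (fun a => e (fun x => ¬ SS (f a) x (g a)) _)⟩
theorem del_TT {A : ℕ → Bool} {X} (hA : Sig X (fun c : ℕ × Bool => A c.1 = c.2)) (hz : Sig X (fun c : ℕ × Bool => zeroJump c.1 = c.2)) :
    Del X (fun c : St × ℕ × List Bool => TT A c.1 c.2.1 c.2.2) := by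
  unfold TT
  apply Del.and (Del.lt (by fun_prop) (by fun_prop))
  apply Del.and (Del.le (by fun_prop) (by fun_prop))
  apply Del.and (Del.eq (by fun_prop) (by fun_prop))
  apply Del.and (del_SA hA (by fun_prop) (by fun_prop))
  apply Del.not
  exact (meas_sig.zj.trans hz).comp (f := fun c : St × ℕ × List Bool => (nL c.1 c.2.1, c.2.2, 3 * c.2.2.length + c.1.2.1 + 4)) (by fun_prop)
/-- kernel of the halting problem -/
theorem exists_kz : ∃ k : ℕ × ℕ → Bool, Computable k ∧ (∀ e, zeroJump e = true ↔ ∃ s, k (e, s) = true) ∧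
    ∀ e s t, s ≤ t → k (e, s) = true → k (e, t) = true := (sig_jump emptyOracle).kernel0
noncomputable def kz : ℕ × ℕ → Bool := exists_kz.choose
theorem kz_comp : Computable kz := exists_kz.choose_spec.1
theorem kz_iff (e) : zeroJump e = true ↔ ∃ s, kz (e, s) = true := exists_kz.choose_spec.2.1 e
theorem kz_mono : ∀ e s t, s ≤ t → kz (e, s) = true → kz (e, t) = true := exists_kz.choose_spec.2.2
/-- acceptable decisions -/
def Dec (D : ℕ → Bool) (e : ℕ) (st : St) (d : ℕ) : Prop :=
  D e = (deD d).2.1 ∧ (zeroJump e = false ∨ kz (e, (deD d).1) = true) ∧ (deD d).2.2.1.1 = (1, e, 0) ∧ Sh D e (deD d).2.2.2 ∧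
    ¬ M (PP (nL st d) ∩ _root_.cylinder st.1) < (1/2)^(st.2.1 + 2)
/-- code of a graph point -/
def gpt (x : ℕ) (b : Bool) : ℕ := Nat.pair x (natOfBool b)
theorem comp_gpt {α} [Primcodable α] {f : α → ℕ} {g : α → Bool} (hf : Computable f) (hg : Computable g) : Computable (fun a => gpt (f a) (g a)) := by
  unfold gpt
  have := comp_natOfBool hg
  fun_prop
theorem sig_Sh {D : ℕ → Bool} {X} (hD : Sig X (fun c : ℕ × Bool => D c.1 = c.2)) : Sig X (fun c : ℕ × Constr => Sh D c.1 c.2) := by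
  have : Sig X (fun c : ℕ × Constr => ∃ y : ℕ × Bool, D y.1 = y.2 ∧ ((c.2.1 = (2, c.1, gpt y.1 y.2) ∧ c.2.2 = none) ∨
       (c.2.1 = (2, c.1, gpt y.1 (!y.2)) ∧ c.2.2 ≠ none))) := by
    apply Sig.ex
    have n1 : Computable (fun c : (ℕ × Constr) × ℕ × Bool => gpt c.2.1 c.2.2) := comp_gpt (by fun_prop) (by fun_prop)
    have n2 : Computable (fun c : (ℕ × Constr) × ℕ × Bool => gpt c.2.1 (!c.2.2)) := comp_gpt (by fun_prop) (by fun_prop)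
    have m1 : Computable (fun c : (ℕ × Constr) × ℕ × Bool => (2, c.1.1, gpt c.2.1 c.2.2)) := (Computable.const 2).pair ((Computable.fst.comp Computable.fst).pair n1)
    have m2 : Computable (fun c : (ℕ × Constr) × ℕ × Bool => (2, c.1.1, gpt c.2.1 (!c.2.2))) := (Computable.const 2).pair ((Computable.fst.comp Computable.fst).pair n2)
    have m0 : Computable (fun c : (ℕ × Constr) × ℕ × Bool => c.1.2.1) := by fun_prop
    have m3 : Computable (fun c : (ℕ × Constr) × ℕ × Bool => c.1.2.2) := by fun_prop
    have k1 : Sig X (fun c : (ℕ × Constr) × ℕ × Bool => c.1.2.2 = none) := Sig.eq m3 (Computable.const none)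
    have k2 : Sig X (fun c : (ℕ × Constr) × ℕ × Bool => c.1.2.2 ≠ none) := Sig.ne m3 (Computable.const none)
    exact Sig.and (hD.comp (f := fun c : (ℕ × Constr) × ℕ × Bool => c.2) (by fun_prop))
      (Sig.or ((Sig.eq m0 m1).and k1) ((Sig.eq m0 m2).and k2))
  refine this.of_iff (fun c => ?_)
  unfold Sh
  constructor
  · rintro ⟨x, h⟩; exact ⟨(x, D x), rfl, h⟩
  · rintro ⟨⟨x, b⟩, h0, h⟩
    simp only at h0
    rw [← h0] at h
    exact ⟨x, h⟩
theorem sig_Dec {D : ℕ → Bool} {X} (hD : Sig X (fun c : ℕ × Bool => D c.1 = c.2)) (hz : Sig X (fun c : ℕ × Bool => zeroJump c.1 = c.2)) :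
    Sig X (fun c : ℕ × St × ℕ => Dec D c.1 c.2.1 c.2.2) := by
  unfold Dec
  apply Sig.and (hD.comp (f := fun c : ℕ × St × ℕ => (c.1, (deD c.2.2).2.1)) (by fun_prop))
  apply Sig.and
  · apply Sig.or (hz.comp (f := fun c : ℕ × St × ℕ => (c.1, false)) (by fun_prop))
    have := kz_comp
    exact Sig.eq (f := fun c : ℕ × St × ℕ => kz (c.1, (deD c.2.2).1)) (this.comp (g := fun c : ℕ × St × ℕ => (c.1, (deD c.2.2).1)) (by fun_prop)) (by fun_prop)
  apply Sig.and (Sig.eq (by fun_prop) (by fun_prop))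
  apply Sig.and
  · exact (sig_Sh hD).comp (f := fun c : ℕ × St × ℕ => (c.1, (deD c.2.2).2.2.2)) (by fun_prop)
  · exact (meas_sig.zj.trans hz).2.comp (f := fun c : ℕ × St × ℕ => (nL c.2.1 c.2.2, c.2.1.1, c.2.1.2.1 + 2)) (by fun_prop)
theorem exists_Dec {D : ℕ → Bool} (hD : ¬ ComputableSet D) (e : ℕ) (st : St) (h : (1/2)^st.2.1 ≤ M (PP st.2.2 ∩ _root_.cylinder st.1)) :
    ∃ d, Dec D e st d := by
  obtain ⟨o, ho⟩ := choose1 _ _ _ h (1, e, 0)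
  obtain ⟨c2, hc, hm⟩ := choose2 hD _ _ _ ho e
  have : ∃ m, zeroJump e = false ∨ kz (e, m) = true := by
    by_cases hz : zeroJump e = true
    · obtain ⟨s, hs⟩ := (kz_iff e).1 hz; exact ⟨s, Or.inr hs⟩
    · exact ⟨0, Or.inl (by simpa using hz)⟩
  obtain ⟨m, hm'⟩ := this
  refine ⟨Encodable.encode ((m, D e, ((1,e,0),o), c2) : De), ?_⟩
  unfold Dec nL
  simp only [deD_enc]
  exact ⟨trivial, hm', trivial, hc, not_lt.2 hm⟩
theorem exists_TT {A D : ℕ → Bool} (hA : ¬ KTrivial A) {e : ℕ} {st : St} {d : ℕ} (h : Dec D e st d) (N : ℕ) :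
    ∃ j, N ≤ j ∧ Encodable.encode (stO j) = j ∧ TT A st d (stO j) := by
  obtain ⟨σ, h1, h2, h3⟩ := hit_step hA _ _ _ (not_lt.1 h.2.2.2.2) (N + st.1.length + 1 + (deD d).1)
  refine ⟨Encodable.encode σ, by have := len_le_enc σ; omega, by rw [stO_enc], ?_⟩
  rw [stO_enc]
  have hpos : 0 < M ((PP (nL st d) ∩ _root_.cylinder st.1) ∩ _root_.cylinder σ) := lt_of_lt_of_le (hpw_pos _) h3
  have hne : (_root_.cylinder st.1 ∩ _root_.cylinder σ).Nonempty := by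
    by_contra hcon
    rw [Set.not_nonempty_iff_eq_empty] at hcon
    rw [Set.inter_assoc, hcon] at hpos
    simp [M] at hpos
  refine ⟨by omega, by omega, ?_, h2, ?_⟩
  · obtain ⟨X, hX1, hX2⟩ := hne
    rw [mem_cyl] at hX1 hX2
    rw [← hX2, strPrefix_take _ _ _ (by omega), hX1]
  · rw [Set.inter_assoc, cylinder_inter _ _ (by omega) hne] at h3
    have e : 3*σ.length + st.2.1 + 4 = 3*σ.length + (st.2.1+2) + 2 := by ring
    rw [e]; exact not_lt.2 h3

end PartP6b

section PartP6c

/-- Properties of the constructed sequence of conditions. -/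
structure Good (A D : ℕ → Bool) (Col : St → ℕ → ℕ → Prop) (s : ℕ → St) : Prop where
  s0 : s 0 = ([], 1, [((0,0,0),none)])
  step : ∀ e, ∃ d, Dec D e (s e) d ∧ Col (s e) (Encodable.encode (s (e+1)).1) d ∧ TT A (s e) d (s (e+1)).1 ∧
    (s (e+1)).2.1 = 3 * (s (e+1)).1.length + (s e).2.1 + 4 ∧ (s (e+1)).2.2 = nL (s e) d
  inv : ∀ e, (1/2)^(s e).2.1 ≤ M (PP (s e).2.2 ∩ _root_.cylinder (s e).1)
theorem exists_good {A D : ℕ → Bool} (hA : ¬ KTrivial A) (hD : ¬ ComputableSet D) :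
    ∃ Col : St → ℕ → ℕ → Prop, Sig (joinSet A zeroJump) (fun c : St × ℕ × ℕ => Col c.1 c.2.1 c.2.2) ∧
      (∀ a j d d', Col a j d → Col a j d' → d = d') ∧
      ∃ s, Good A D Col s ∧ Sig (joinSet A (joinSet D zeroJump)) (fun c : ℕ × St => s c.1 = c.2) := by
  have gA := sig_join_left A zeroJump
  have gz := sig_join_right A zeroJump
  have hT : Del (joinSet A zeroJump) (fun c : St × ℕ × ℕ => Encodable.encode (stO c.2.2) = c.2.2 ∧ TT A c.1 c.2.1 (stO c.2.2)) := by
    apply Del.and (Del.eq (by fun_prop) (by fun_prop))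
    exact (del_TT gA gz).comp (f := fun c : St × ℕ × ℕ => (c.1, c.2.1, stO c.2.2)) (by fun_prop)
  obtain ⟨Col, hC1, hC2, hC3⟩ := coloring (T := fun st d j => Encodable.encode (stO j) = j ∧ TT A st d (stO j)) hT
  refine ⟨Col, hC1, hC2, ?_⟩
  have hAZ := sig_join_left A (joinSet D zeroJump)
  have hDZ := (sig_join_left D zeroJump).trans (sig_join_right A (joinSet D zeroJump))
  have hzZ := (sig_join_right D zeroJump).trans (sig_join_right A (joinSet D zeroJump))
  have hCZ := hC1.trans (sig_join hAZ hzZ)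
  have hP : Sig (joinSet A (joinSet D zeroJump)) (fun c : ℕ × St × St => ∃ d, Dec D c.1 c.2.1 d ∧ Col c.2.1 (Encodable.encode c.2.2.1) d ∧ TT A c.2.1 d c.2.2.1 ∧
    c.2.2.2.1 = 3 * c.2.2.1.length + c.2.1.2.1 + 4 ∧ c.2.2.2.2 = nL c.2.1 d) := by
    apply Sig.ex
    apply Sig.and ((sig_Dec hDZ hzZ).comp (f := fun c : (ℕ × St × St) × ℕ => (c.1.1, c.1.2.1, c.2)) (by fun_prop))
    apply Sig.and (hCZ.comp (f := fun c : (ℕ × St × St) × ℕ => (c.1.2.1, Encodable.encode c.1.2.2.1, c.2)) (by fun_prop))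
    apply Sig.and ((del_TT hAZ hzZ).1.comp (f := fun c : (ℕ × St × St) × ℕ => (c.1.2.1, c.2, c.1.2.2.1)) (by fun_prop))
    exact Sig.and (Sig.eq (by fun_prop) (by fun_prop)) (Sig.eq (by fun_prop) (by fun_prop))
  obtain ⟨s, h0, h1, h2, h3⟩ := Sig.dc (P := fun e (st st' : St) => ∃ d, Dec D e st d ∧ Col st (Encodable.encode st'.1) d ∧ TT A st d st'.1 ∧
    st'.2.1 = 3 * st'.1.length + st.2.1 + 4 ∧ st'.2.2 = nL st d)
    (Inv := fun _ (st : St) => (1/2)^st.2.1 ≤ M (PP st.2.2 ∩ _root_.cylinder st.1)) (b0 := ([], 1, [((0,0,0),none)])) hP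
    (by
      show (1/2)^1 ≤ M (PP [((0,0,0),none)] ∩ _root_.cylinder [])
      rw [PP_none, cyl_nil, Set.inter_univ]
      have : {ρ | BB (0,0,0) ρ} = {ρ | V0 ρ} := by ext ρ; simp [BB]
      rw [this]; exact V0_M)
    (by
      intro e st hst
      obtain ⟨d, hd⟩ := exists_Dec hD e st hst
      obtain ⟨j, hj1, hj2, hj3⟩ := hC3 st d (fun N => exists_TT hA hd N)
      exact ⟨(stO j, 3 * (stO j).length + st.2.1 + 4, nL st d), d, hd, by simp only [hj2]; exact hj1, hj3, rfl, rfl⟩)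
    (by
      rintro e st st' hst ⟨d, hd, hc, ht, h4, h5⟩
      rw [h4, h5]
      exact not_lt.1 ht.2.2.2.2)
  exact ⟨s, ⟨h0, h1, h2⟩, h3⟩
namespace Good
variable {A D : ℕ → Bool} {Col : St → ℕ → ℕ → Prop} {s : ℕ → St}
/-- The limit real. -/
def R (s : ℕ → St) (i : ℕ) : Bool := (((s (i+1)).1)[i]?).getD false
theorem len_lt (h : Good A D Col s) (e : ℕ) : (s e).1.length < (s (e+1)).1.length := by
  obtain ⟨d, _, _, ht, _⟩ := h.step e; exact ht.1
theorem len_ge (h : Good A D Col s) (e : ℕ) : e ≤ (s e).1.length := by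
  induction e with
  | zero => simp
  | succ e ih => have := h.len_lt e; omega
theorem take (h : Good A D Col s) (e k : ℕ) : (s e).1 = (s (e+k)).1.take (s e).1.length ∧ (s e).1.length ≤ (s (e+k)).1.length := by
  induction k with
  | zero => simp
  | succ k ih =>
    obtain ⟨d, _, _, ht, _⟩ := h.step (e+k)
    have h1 := ht.2.2.1
    have h2 := ht.1
    have h3 : (s (e+(k+1))).1 = (s (e+k+1)).1 := rfl
    rw [h3]
    refine ⟨?_, by omega⟩
    have := ih.1
    rw [h1, List.take_take, min_eq_left ih.2] at this
    exact this
theorem take' (h : Good A D Col s) {e k : ℕ} (hk : e ≤ k) : (s e).1 = (s k).1.take (s e).1.length := by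
  obtain ⟨m, rfl⟩ := Nat.exists_eq_add_of_le hk; exact (h.take e m).1
theorem get (h : Good A D Col s) {e i : ℕ} (hi : i < (s e).1.length) : (s e).1[i]? = some (R s i) := by
  have hl := h.len_ge (i+1)
  have key : (s (i+1)).1[i]? = some (R s i) := by
    unfold R; rw [List.getElem?_eq_getElem (by omega)]; simp
  rcases le_total e (i+1) with he | he
  · rw [h.take' he, List.getElem?_take_of_lt hi]; exact key
  · rw [h.take' he, List.getElem?_take_of_lt (by omega)] at key; exact key
theorem pre (h : Good A D Col s) (e : ℕ) : strPrefix (R s) (s e).1.length = (s e).1 := by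
  apply List.ext_getElem?
  intro i
  by_cases hi : i < (s e).1.length
  · rw [strPrefix_get _ _ _ hi, h.get hi]
  · rw [List.getElem?_eq_none (by simp; omega), List.getElem?_eq_none (by omega)]
theorem isPre (h : Good A D Col s) (e : ℕ) : IsPrefixOf (s e).1 (R s) := by
  rw [isPrefixOf_iff, h.pre]
theorem mono (h : Good A D Col s) (e k : ℕ) : ∀ c ∈ (s e).2.2, c ∈ (s (e+k)).2.2 := by
  induction k with
  | zero => intro c hc; exact hc
  | succ k ih =>
    intro c hc
    obtain ⟨d, _, _, _, _, h5⟩ := h.step (e+k)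
    show c ∈ (s (e+k+1)).2.2
    rw [h5]; unfold nL
    exact List.mem_cons_of_mem _ (List.mem_cons_of_mem _ (ih c hc))
theorem memPP (h : Good A D Col s) (e : ℕ) : R s ∈ PP (s e).2.2 := by
  rw [mem_PP]
  intro c hc n hav
  have h1 := h.inv (e+n)
  have h2 : 0 < M (PP (s (e+n)).2.2 ∩ _root_.cylinder (s (e+n)).1) := lt_of_lt_of_le (hpw_pos _) h1
  have h3 : PP (s (e+n)).2.2 ∩ _root_.cylinder (s (e+n)).1 = ∅ := by
    rw [Set.eq_empty_iff_forall_notMem]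
    rintro X ⟨hX1, hX2⟩
    rw [mem_PP] at hX1
    rw [mem_cyl] at hX2
    apply hX1 c (h.mono e n c hc) n
    have hl := h.len_ge (e+n)
    have : strPrefix X n = strPrefix (R s) n := by
      rw [← strPrefix_take X _ n (by omega : n ≤ (s (e+n)).1.length), ← strPrefix_take (R s) _ n (by omega : n ≤ (s (e+n)).1.length), hX2, h.pre]
    rw [this]; exact hav
  rw [h3] at h2
  simp [M] at h2
theorem memC (h : Good A D Col s) {e : ℕ} {c} (hc : c ∈ (s e).2.2) : R s ∈ PP [c] := by
  have := h.memPP e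
  rw [mem_PP] at this ⊢
  intro d hd; simp at hd; subst hd; exact this _ hc
theorem ml (h : Good A D Col s) : MLRandom (R s) := by
  apply V0_ml
  have := h.memC (e := 0) (c := ((0,0,0),none)) (by rw [h.s0]; simp)
  rw [PP_none] at this
  have e : {ρ | BB (0,0,0) ρ} = {ρ | V0 ρ} := by ext ρ; simp [BB]
  rw [e] at this; exact this
theorem oc (X : ℕ → Bool) (e m p : ℕ) : OracleComputes e X m p ↔ ∃ n, WEnum e (Nat.pair (Encodable.encode (strPrefix X n)) (Nat.pair m p)) := by
  unfold OracleComputes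
  constructor
  · rintro ⟨σ, h1, h2⟩; refine ⟨σ.length, ?_⟩; rw [← (isPrefixOf_iff _ _).1 h1]; exact h2
  · rintro ⟨n, hn⟩; exact ⟨_, isPrefixOf_strPrefix X n, hn⟩
theorem openBB1 (X : ℕ → Bool) (e : ℕ) : X ∈ openOf {ρ | BB (1,e,0) ρ} ↔ jump X e = true := by
  rw [mem_openOf]
  simp only [jump, decide_eq_true_eq, oc]
  simp [BB]
  exact exists_comm
theorem openBB2 (X : ℕ → Bool) (e m p : ℕ) : X ∈ openOf {ρ | BB (2,e,Nat.pair m p) ρ} ↔ OracleComputes e X m p := by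
  rw [mem_openOf, oc]
  simp [BB]
theorem notLE (h : Good A D Col s) : ¬ TuringLE D (R s) := by
  rintro ⟨e, he⟩
  obtain ⟨d, hd, _, _, _, h5⟩ := h.step e
  have hm := h.memC (e := e+1) (c := (deD d).2.2.2) (by rw [h5]; simp [nL])
  obtain ⟨x, hx⟩ := hd.2.2.2.1
  generalize (deD d).2.2.2 = c at hm hx
  obtain ⟨q, o⟩ := c
  rcases hx with ⟨h1, h2⟩ | ⟨h1, h2⟩
  · simp only at h1 h2; subst h1; subst h2
    rw [PP_none] at hm
    exact hm ((openBB2 _ _ _ _).2 ((he _ _).2 rfl))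
  · simp only at h1 h2; subst h1
    obtain ⟨N, rfl⟩ := Option.ne_none_iff_exists'.1 h2
    have := (he _ _).1 ((openBB2 _ _ _ _).1 (PP_some_sub _ _ hm))
    have := natOfBool_inj this
    simp at this
theorem jumpF (h : Good A D Col s) (e : ℕ) : jump (R s) e = false ↔ ∃ c, c ∈ (s (e+1)).2.2 ∧ c = ((1,e,0),none) := by
  constructor
  · intro hj
    obtain ⟨d, hd, _, _, _, h5⟩ := h.step e
    have hmm : (deD d).2.2.1 ∈ (s (e+1)).2.2 := by rw [h5]; simp [nL]
    have hm := h.memC hmm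
    have hq := hd.2.2.1
    refine ⟨_, hmm, ?_⟩
    generalize (deD d).2.2.1 = c at hm hq
    obtain ⟨q, o⟩ := c
    simp only at hq; subst hq
    cases o with
    | none => rfl
    | some N =>
      have := (openBB1 _ _).1 (PP_some_sub _ _ hm)
      rw [hj] at this; cases this
  · rintro ⟨c, hc, rfl⟩
    have := h.memC hc
    rw [PP_none] at this
    by_contra hcon
    exact this ((openBB1 _ _).2 (by simpa using hcon))
theorem R_le {X} (h : Good A D Col s) (hs : Sig X (fun c : ℕ × St => s c.1 = c.2)) : Sig X (fun c : ℕ × Bool => R s c.1 = c.2) := by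
  have : Sig X (fun c : ℕ × Bool => ∃ st : St, s (c.1+1) = st ∧ st.1[c.1]? = some c.2) := by
    apply Sig.ex
    apply Sig.and (hs.comp (f := fun c : (ℕ × Bool) × St => (c.1.1+1, c.2)) (by fun_prop))
    exact Sig.eq (by fun_prop) (by fun_prop)
  refine this.of_iff ?_
  rintro ⟨i, b⟩
  have hl := h.len_ge (i+1)
  simp only [exists_eq_left', h.get (e := i+1) (i := i) (by omega), Option.some.injEq]
/-- parsing without the constraints -/
theorem parse (h : Good A D Col s) : Sig (joinSet A (R s)) (fun c : ℕ × List Bool × ℕ => ((s c.1).1, (s c.1).2.1) = c.2) := by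
  have hA := sig_join_left A (R s)
  have hR := sig_join_right A (R s)
  have := Sig.iter (X := joinSet A (R s)) (α := ℕ) (s := fun _ i => ((s i).1, (s i).2.1)) (s0 := fun _ => ([], 1))
    (F := fun _ _ p p' => IsPrefixOf p'.1 (R s) ∧ SA A (p.2 + 2) p'.1 ∧ p'.2 = 3 * p'.1.length + p.2 + 4)
    (by fun_prop) (by intro a; rw [h.s0])
    (by
      apply Sig.and ((sig_pfx (X := R s) (f := fun c : ℕ × ℕ × (List Bool × ℕ) × (List Bool × ℕ) => c.2.2.2.1) (by fun_prop)).trans hR)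
      apply Sig.and (del_SA hA (by fun_prop) (by fun_prop)).1
      exact Sig.eq (by fun_prop) (by fun_prop))
    (by
      intro a i
      obtain ⟨d, hd, _, ht, h4, h5⟩ := h.step i
      exact ⟨h.isPre _, ht.2.2.2.1, h4⟩)
    (by
      rintro a i ⟨σ, n⟩ ⟨h1, h2, h3⟩
      obtain ⟨d, hd, _, ht, h4, h5⟩ := h.step i
      simp only at h1 h2 h3
      have h6 := ht.2.2.2.1
      rw [(isPrefixOf_iff _ _).1 h1] at h2
      rw [← h.pre (i+1)] at h6
      have hl := SA_unique h2 h6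
      have : σ = (s (i+1)).1 := by rw [(isPrefixOf_iff _ _).1 h1, hl, h.pre]
      subst this
      rw [h3, h4])
  exact this.comp (f := fun c : ℕ × List Bool × ℕ => (0, c.1, c.2)) (by fun_prop)
theorem zj_le (h : Good A D Col s) : Sig (joinSet A (R s)) (fun c : ℕ × Bool => zeroJump c.1 = c.2) := by
  apply sig_graph_of (sig_jump emptyOracle).up
  have : Sig (joinSet A (R s)) (fun e : ℕ => ∃ p : List Bool × ℕ, ((s (e+1)).1, (s (e+1)).2.1) = p ∧ kz (e, p.1.length) = false) := by
    apply Sig.ex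
    apply Sig.and (h.parse.comp (f := fun c : ℕ × List Bool × ℕ => (c.1+1, c.2)) (by fun_prop))
    exact Sig.eq (kz_comp.comp (g := fun c : ℕ × List Bool × ℕ => (c.1, c.2.1.length)) (by fun_prop)) (by fun_prop)
  refine this.of_iff (fun e => ?_)
  simp only [exists_eq_left']
  obtain ⟨d, hd, _, ht, h4, h5⟩ := h.step e
  constructor
  · intro hz
    by_contra hcon
    change zeroJump e = false at hz
    rw [(kz_iff e).2 ⟨_, by simpa using hcon⟩] at hz
    cases hz
  · intro hk
    rcases hd.2.1 with hz | hz
    · exact hz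
    · rw [kz_mono _ _ _ ht.2.1 hz] at hk; cases hk
theorem full (h : Good A D Col s) (hC : Sig (joinSet A (R s)) (fun c : St × ℕ × ℕ => Col c.1 c.2.1 c.2.2))
    (hC2 : ∀ a j d d', Col a j d → Col a j d' → d = d') : Sig (joinSet A (R s)) (fun c : ℕ × St => s c.1 = c.2) := by
  have hA := sig_join_left A (R s)
  have hR := sig_join_right A (R s)
  have := Sig.iter (X := joinSet A (R s)) (α := ℕ) (s := fun _ i => s i) (s0 := fun _ => ([], 1, [((0,0,0),none)]))
    (F := fun _ i (p p' : St) => ((s (i+1)).1, (s (i+1)).2.1) = (p'.1, p'.2.1) ∧ ∃ d, Col p (Encodable.encode p'.1) d ∧ p'.2.2 = nL p d)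
    (by fun_prop) (by intro a; rw [h.s0])
    (by
      apply Sig.and (h.parse.comp (f := fun c : ℕ × ℕ × St × St => (c.2.1+1, c.2.2.2.1, c.2.2.2.2.1)) (by fun_prop))
      apply Sig.ex
      apply Sig.and (hC.comp (f := fun c : (ℕ × ℕ × St × St) × ℕ => (c.1.2.2.1, Encodable.encode c.1.2.2.2.1, c.2)) (by fun_prop))
      exact Sig.eq (by fun_prop) (by fun_prop))
    (by
      intro a i
      obtain ⟨d, hd, hc, ht, h4, h5⟩ := h.step i
      exact ⟨rfl, d, hc, h5⟩)
    (by
      rintro a i ⟨σ, n, L⟩ ⟨h1, d', h2, h3⟩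
      obtain ⟨d, hd, hc, ht, h4, h5⟩ := h.step i
      simp only [Prod.mk.injEq] at h1 h2 h3
      obtain ⟨h1, h1'⟩ := h1
      subst h1 h1' h3
      rw [hC2 _ _ _ _ h2 hc, ← h5])
  exact this.comp (f := fun c : ℕ × St => (0, c.1, c.2)) (by fun_prop)
theorem D_le {X} (h : Good A D Col s) (hs : Sig X (fun c : ℕ × St => s c.1 = c.2)) (hC : Sig X (fun c : St × ℕ × ℕ => Col c.1 c.2.1 c.2.2))
    (hC2 : ∀ a j d d', Col a j d → Col a j d' → d = d') : Sig X (fun c : ℕ × Bool => D c.1 = c.2) := by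
  have : Sig X (fun c : ℕ × Bool => ∃ y : St × St × ℕ, s c.1 = y.1 ∧ s (c.1+1) = y.2.1 ∧ Col y.1 (Encodable.encode y.2.1.1) y.2.2 ∧ (deD y.2.2).2.1 = c.2) := by
    apply Sig.ex
    apply Sig.and (hs.comp (f := fun c : (ℕ × Bool) × St × St × ℕ => (c.1.1, c.2.1)) (by fun_prop))
    apply Sig.and (hs.comp (f := fun c : (ℕ × Bool) × St × St × ℕ => (c.1.1+1, c.2.2.1)) (by fun_prop))
    apply Sig.and (hC.comp (f := fun c : (ℕ × Bool) × St × St × ℕ => (c.2.1, Encodable.encode c.2.2.1.1, c.2.2.2)) (by fun_prop))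
    exact Sig.eq (by fun_prop) (by fun_prop)
  refine this.of_iff ?_
  rintro ⟨e, b⟩
  obtain ⟨d, hd, hc, ht, h4, h5⟩ := h.step e
  simp only
  constructor
  · intro hb; exact ⟨(s e, s (e+1), d), rfl, rfl, hc, by rw [← hd.1]; exact hb⟩
  · rintro ⟨⟨st, st', d'⟩, h1, h2, h3, h6⟩
    simp only at h1 h2 h3 h6
    subst h1 h2
    rw [hC2 _ _ _ _ h3 hc] at h6
    rw [hd.1, h6]
theorem jump_le {X} (h : Good A D Col s) (hR : Sig X (fun c : ℕ × Bool => R s c.1 = c.2)) (hs : Sig X (fun c : ℕ × St => s c.1 = c.2)) :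
    Sig X (fun c : ℕ × Bool => jump (R s) c.1 = c.2) := by
  apply sig_graph_of ((sig_jump (R s)).trans hR)
  have : Sig X (fun e : ℕ => ∃ st : St, s (e+1) = st ∧ ∃ c, c ∈ st.2.2 ∧ c = ((1,e,0),none)) := by
    apply Sig.ex
    apply Sig.and (hs.comp (f := fun c : ℕ × St => (c.1+1, c.2)) (by fun_prop))
    apply Sig.lex (by fun_prop)
    exact Sig.eq (by fun_prop) (by fun_prop)
  refine this.of_iff (fun e => ?_)
  simp only [exists_eq_left']
  exact h.jumpF e
end Good
theorem main_result (A D : ℕ → Bool) (hA : ¬ KTrivial A) (hD : ¬ ComputableSet D) :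
    ∃ R : ℕ → Bool, MLRandom R ∧ TuringEquiv (joinSet A R) (joinSet A (joinSet D zeroJump)) ∧ ¬ TuringLE D R ∧ TuringLE (jump R) (joinSet A R) := by
  obtain ⟨Col, hC1, hC2, s, h, hs⟩ := exists_good hA hD
  have hA' := sig_join_left A (Good.R s)
  have hR := sig_join_right A (Good.R s)
  have hz := h.zj_le
  have hC := hC1.trans (sig_join hA' hz)
  have hf := h.full hC hC2
  refine ⟨Good.R s, h.ml, ⟨turingLE_iff.2 ?_, turingLE_iff.2 ?_⟩, h.notLE, turingLE_iff.2 ?_⟩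
  · exact sig_join (sig_join_left _ _) (h.R_le hs)
  · exact sig_join hA' (sig_join (h.D_le hf hC hC2) hz)
  · exact h.jump_le hR hf

end PartP6c

/-- Theorem 10 of Day–Miller. -/
theorem stmt16 (A : ℕ → Bool) (hA : ¬ KTrivial A)
    (D : ℕ → Bool) (hD : ¬ ComputableSet D) :
    ∃ R : ℕ → Bool, MLRandom R ∧
      TuringEquiv (joinSet A R) (joinSet A (joinSet D zeroJump)) ∧
      ¬ TuringLE D R ∧ TuringLE (jump R) (joinSet A R) := by
  exact main_result A D hA hD
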